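/- Fix i with μ_i > γ^{-1/2} and suppose μ_i ≠ μ_j for all j ≠ i. Let (z_{n,i}, x_{n,i}) be random sequences with T_n(z_{n,i})·x_{n,i} = 0, ‖x_{n,i}‖₂ = 1, max_j (x_{n,i})_j = max_j |(x_{n,i})_j|, and z_{n,i} → μ̄_i almost surely. Then x_{n,i} → e_i almost surely, where e_i is the i-th standard basis vector of ℝ^k. -/

import Mathlib

/-!
After the change of basis, put `A = D + n^{-1/2} E₁₁` and let `R = (Λ - z)⁻¹`. Woodbury's identity
applied to `S₂₂ - z = Λ - z + n⁻¹ E₁₂ᵀ E₁₂` gives (`schur_identity`, `BlockModel.T_eq`)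
`T(z) = (A - Q₃)ᵀ (1 + Q₁)⁻¹ (A - Q₃) + C - z - Q₄`,
where `Q₁ = n⁻¹ E₁₂ R E₁₂ᵀ`, `Q₃ = n⁻¹ E₁₂ R Λ^{1/2} E₂₁`, `Q₄ = n⁻¹ E₂₁ᵀ Λ R E₂₁` and
`C = n⁻¹ (E₂₁ᵀ E₂₁ + E₃₁ᵀ E₃₁)` are `k × k` matrices. Write `m = m(μ̄)`. Almost surely, for
`z = z_n → μ̄`, one has `Q₁ → γ⁻¹ m`, `Q₃ → 0`, `Q₄ → γ⁻¹ (1 + μ̄ m)`, `C → 1` and `A → D`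
(`BlockModel.T_tendsto_ae`). The Marchenko–Pastur equation for `m` and `m = -(μ_i + γ⁻¹)⁻¹` turn
the limit of `T_n(z_n)` into the diagonal matrix with entries `(μ_i + γ⁻¹) (μ_j / μ_i - 1)`, which
vanish only for `j = i`; unit vectors in the kernel of `T_n(z_n)`, with the given choice of sign,
therefore converge to `e_i` (`kernel_tendsto`).

The limits of the forms rest on two facts about the Wishart eigenvalues `λ_α`, both obtained from
exponential tail bounds and Borel–Cantelli.

* No `λ_α` eventually exceeds a given `B > b_γ` (`edge_bound`, `BlockModel.edge_ae`). Following
  Silverstein, a Gaussian matrix is bidiagonalised by rotations that peel off one row or column at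
  a time; each peeled vector is again Gaussian, so only chi-square tails are needed.
* Averages of continuous functions of the `λ_α` converge to Marchenko–Pastur integrals
  (`BlockModel.spectral_ae`). A leave-one-out argument shows that the resolvent trace at `-t < 0`
  satisfies the quadratic Marchenko–Pastur equation up to a small error (`mp_tail`); the Stieltjes
  transform of the density solves the same equation (`mp_equation`), which has a single nonnegative
  root; and resolvent functions span a dense subspace of `C[0, B]` (`tendsto_of_stieltjes`).

Given the `λ_α`, which are independent of the `E`-blocks, the forms are weighted sums of iid centred
sub-exponential variables with bounded weights, and concentrate (`weighted_ae`).
-/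

open MeasureTheory ProbabilityTheory Filter Matrix Topology

noncomputable section

instance matrixMeasurableSpace {m n : Type*} : MeasurableSpace (Matrix m n ℝ) :=
  MeasurableSpace.pi

/-- Convergence in distribution (weak convergence of laws) of a sequence of random elements. -/
def TendstoInDist {Ω E : Type*} [MeasurableSpace Ω] [MeasurableSpace E] [TopologicalSpace E]
    (P : Measure Ω) (X : ℕ → Ω → E) (ν : Measure E) : Prop :=
  ∀ f : BoundedContinuousFunction E ℝ,
    Tendsto (fun n => ∫ ω, f (X n ω) ∂P) atTop (𝓝 (∫ x, f x ∂ν))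

/-- Convergence to zero in probability. -/
def TendstoInProbZero {Ω : Type*} [MeasurableSpace Ω] (P : Measure Ω) (X : ℕ → Ω → ℝ) : Prop :=
  ∀ ε : ℝ, 0 < ε → Tendsto (fun n => P {ω | ε ≤ |X n ω|}) atTop (𝓝 0)

/-- `ν` is a centered multivariate Gaussian measure with covariance function `C`
(characterized through one-dimensional projections). -/
def IsCenteredGaussianCov {ι : Type*} [Fintype ι] (ν : Measure (ι → ℝ)) (C : ι → ι → ℝ) : Prop :=
  ∀ a : ι → ℝ,
    Measure.map (fun x => ∑ i, a i * x i) ν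
      = gaussianReal 0 (Real.toNNReal (∑ i, ∑ j, a i * C i j * a j))

/-- The coordinates of `X` are iid `N(0, v)` random variables. -/
def IIDGaussian {Ω ι : Type*} [MeasurableSpace Ω] [Fintype ι] (P : Measure Ω)
    (X : Ω → ι → ℝ) (v : NNReal) : Prop :=
  Measure.map X P = Measure.pi fun _ : ι => gaussianReal 0 v

/-- Entries of a matrix, as a function on pairs of indices. -/
def matEntries {m n : Type*} (A : Matrix m n ℝ) : m × n → ℝ := fun q => A q.1 q.2

/-- The eigenvalues of a (Hermitian) real matrix, sorted in decreasing order. -/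
def eigsDesc {p : ℕ} (A : Matrix (Fin p) (Fin p) ℝ) : List ℝ :=
  if h : A.IsHermitian then (List.ofFn h.eigenvalues).insertionSort (· ≥ ·) else []

/-- The `i`-th largest eigenvalue of a (Hermitian) real matrix (`i` is 0-based). -/
def ithEigDesc {p : ℕ} (A : Matrix (Fin p) (Fin p) ℝ) (i : ℕ) : ℝ :=
  (eigsDesc A).getD i 0

/-- Lower edge `a_γ = (1 - γ^{-1/2})²` of the Marchenko–Pastur law. -/
def aGamma (γ : ℝ) : ℝ := (1 - 1 / Real.sqrt γ) ^ 2

/-- Upper edge `b_γ = (1 + γ^{-1/2})²` of the Marchenko–Pastur law. -/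
def bGamma (γ : ℝ) : ℝ := (1 + 1 / Real.sqrt γ) ^ 2

/-- Density of the Marchenko–Pastur law with aspect ratio `γ`. -/
def mpDensity (γ t : ℝ) : ℝ :=
  if t ∈ Set.Icc (aGamma γ) (bGamma γ) then
    γ * Real.sqrt ((bGamma γ - t) * (t - aGamma γ)) / (2 * Real.pi * t)
  else 0

/-- The Marchenko–Pastur law with aspect ratio `γ`. -/
def mpMeasure (γ : ℝ) : Measure ℝ :=
  volume.withDensity fun t => ENNReal.ofReal (mpDensity γ t)

/-- Stieltjes transform `m(z) = ∫ (t - z)⁻¹ dFMP_γ(t)` of the Marchenko–Pastur law. -/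
def mpStieltjes (γ z : ℝ) : ℝ := ∫ t, (t - z)⁻¹ ∂(mpMeasure γ)

/-- The spiked low-rank-plus-noise model `X_n = √n U_n D_n V_nᵀ + E_n`
(Assumptions A1–A3, with `s = σ²` the noise variance and without the CLT
assumption on the factor strengths, which is stated separately when needed). -/
structure SpikedModel (k : ℕ) (γ s : ℝ) (p : ℕ → ℕ) (Ω : Type*) [MeasurableSpace Ω]
    (P : Measure Ω) (μ : Fin k → ℝ) where
  U : ∀ n : ℕ, Ω → Matrix (Fin n) (Fin k) ℝ
  V : ∀ n : ℕ, Ω → Matrix (Fin (p n)) (Fin k) ℝ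
  d : ∀ n : ℕ, Ω → Fin k → ℝ
  E : ∀ n : ℕ, Ω → Matrix (Fin n) (Fin (p n)) ℝ
  /- A1 -/
  orthU : ∀ n ω, (U n ω)ᵀ * U n ω = 1
  orthV : ∀ n ω, (V n ω)ᵀ * V n ω = 1
  aspect : Tendsto (fun n : ℕ => Real.sqrt n * ((n : ℝ) / (p n) - γ)) atTop (𝓝 0)
  /- A2 (except for the CLT on the factor strengths) -/
  dpos : ∀ n ω i, 0 < d n ω i
  dstrictanti : ∀ n ω, StrictAnti (d n ω)
  dconv : ∀ᵐ ω ∂P, ∀ i, Tendsto (fun n => d n ω i) atTop (𝓝 (Real.sqrt (μ i)))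
  /- A3 -/
  Egauss : ∀ n, IIDGaussian P (fun ω => matEntries (E n ω)) (Real.toNNReal s)
  Eindep : ∀ n, IndepFun (E n) (fun ω => (U n ω, d n ω, V n ω)) P

/-- The observed data matrix `X_n = √n U_n D_n V_nᵀ + E_n`. -/
def SpikedModel.X {k : ℕ} {γ s : ℝ} {p : ℕ → ℕ} {Ω : Type*} [MeasurableSpace Ω]
    {P : Measure Ω} {μ : Fin k → ℝ} (M : SpikedModel k γ s p Ω P μ) (n : ℕ) (ω : Ω) :
    Matrix (Fin n) (Fin (p n)) ℝ :=
  Real.sqrt n • (M.U n ω * Matrix.diagonal (M.d n ω) * (M.V n ω)ᵀ) + M.E n ω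

/-- `√n Uh (diagonal √μh) Vhᵀ` is the SVD of `X` truncated to the `k` largest terms:
the `μh i` are the `k` largest eigenvalues of `(1/n) Xᵀ X` in decreasing order, the columns
of `Vh` are corresponding orthonormal eigenvectors (right singular vectors), and the columns
of `Uh` are corresponding orthonormal left singular vectors. -/
def IsTruncatedSVD {n q k : ℕ} (X : Matrix (Fin n) (Fin q) ℝ)
    (Uh : Matrix (Fin n) (Fin k) ℝ) (μh : Fin k → ℝ) (Vh : Matrix (Fin q) (Fin k) ℝ) : Prop :=
  Uhᵀ * Uh = 1 ∧ Vhᵀ * Vh = 1 ∧ Antitone μh ∧ (∀ i, 0 ≤ μh i) ∧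
  (∀ i : Fin k, μh i = ithEigDesc ((1 / (n : ℝ)) • (Xᵀ * X)) i) ∧
  (∀ i : Fin k, (Xᵀ * X) *ᵥ (fun j => Vh j i) = ((n : ℝ) * μh i) • fun j => Vh j i) ∧
  (∀ i : Fin k, X *ᵥ (fun j => Vh j i) = (Real.sqrt n * Real.sqrt (μh i)) • fun j => Uh j i)

/-- Almost sure limit `μ̄` of the top sample eigenvalues (`s = σ²`). -/
def muBar (γ s μi : ℝ) : ℝ :=
  if s / Real.sqrt γ < μi then (μi + s) * (1 + s / (γ * μi))
  else s * (1 + 1 / Real.sqrt γ) ^ 2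

/-- Limiting covariance matrix `Σ̄` of the fluctuations of the top sample eigenvalues. -/
def sigmaBar {k : ℕ} (γ s : ℝ) (μ : Fin k → ℝ) (Cmat : Matrix (Fin k) (Fin k) ℝ) :
    Fin k → Fin k → ℝ := fun i j =>
  if s / Real.sqrt γ < μ i ∧ s / Real.sqrt γ < μ j then
    Cmat i j * (1 - s ^ 2 / (γ * (μ i) ^ 2)) * (1 - s ^ 2 / (γ * (μ j) ^ 2))
      + (if i = j then 2 * s * (2 * μ i + (1 + γ⁻¹) * s) * (1 - s ^ 2 / (γ * (μ i) ^ 2)) else 0)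
  else 0

/-- The independent noise blocks `E_{n,12}`, `E_{n,21}` and the scaled Wishart eigenvalues
`Λ_n` appearing after the change of basis. -/
structure NoiseBlocks (k : ℕ) (γ : ℝ) (p : ℕ → ℕ) (Ω : Type*) [MeasurableSpace Ω]
    (P : Measure Ω) where
  E12 : ∀ n : ℕ, Ω → Matrix (Fin k) (Fin (p n - k)) ℝ
  E21 : ∀ n : ℕ, Ω → Matrix (Fin (p n - k)) (Fin k) ℝ
  W : ∀ n : ℕ, Ω → Matrix (Fin (n - k)) (Fin (p n - k)) ℝ
  lam : ∀ n : ℕ, Ω → Fin (p n - k) → ℝ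
  aspect : Tendsto (fun n : ℕ => (n : ℝ) / (p n)) atTop (𝓝 γ)
  pTop : Tendsto p atTop atTop
  E12gauss : ∀ n, IIDGaussian P (fun ω => matEntries (E12 n ω)) 1
  E21gauss : ∀ n, IIDGaussian P (fun ω => matEntries (E21 n ω)) 1
  Wgauss : ∀ n, IIDGaussian P (fun ω => matEntries (W n ω)) 1
  /-- `n λ_{n,α}` are the decreasingly ordered eigenvalues of the white Wishart
  matrix `Wᵀ W`. -/
  lamEig : ∀ n ω, ∀ α : Fin (p n - k), (n : ℝ) * lam n ω α = ithEigDesc ((W n ω)ᵀ * W n ω) α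
  indep1 : ∀ n, IndepFun (E12 n) (fun ω => (E21 n ω, W n ω)) P
  indep2 : ∀ n, IndepFun (E21 n) (W n) P

namespace NoiseBlocks

variable {k : ℕ} {γ : ℝ} {p : ℕ → ℕ} {Ω : Type*} [MeasurableSpace Ω] {P : Measure Ω}

/-- `(1/n) E_{n,12} (Λ_n − z I)⁻¹ E_{n,12}ᵀ`. -/
def q1 (B : NoiseBlocks k γ p Ω P) (n : ℕ) (ω : Ω) (z : ℝ) : Matrix (Fin k) (Fin k) ℝ :=
  (1 / (n : ℝ)) • (B.E12 n ω * (Matrix.diagonal (B.lam n ω) - z • 1)⁻¹ * (B.E12 n ω)ᵀ)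

/-- `(1/n) E_{n,21}ᵀ (Λ_n − z I)⁻¹ E_{n,21}`. -/
def q2 (B : NoiseBlocks k γ p Ω P) (n : ℕ) (ω : Ω) (z : ℝ) : Matrix (Fin k) (Fin k) ℝ :=
  (1 / (n : ℝ)) • ((B.E21 n ω)ᵀ * (Matrix.diagonal (B.lam n ω) - z • 1)⁻¹ * B.E21 n ω)

/-- `(1/n) E_{n,12} (Λ_n − z I)⁻¹ Λ_n^{1/2} E_{n,21}`. -/
def q3 (B : NoiseBlocks k γ p Ω P) (n : ℕ) (ω : Ω) (z : ℝ) : Matrix (Fin k) (Fin k) ℝ :=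
  (1 / (n : ℝ)) • (B.E12 n ω * (Matrix.diagonal (B.lam n ω) - z • 1)⁻¹ *
    Matrix.diagonal (fun α => Real.sqrt (B.lam n ω α)) * B.E21 n ω)

/-- `F_n(z)`. -/
def Fn (B : NoiseBlocks k γ p Ω P) (n : ℕ) (ω : Ω) (z : ℝ) : Matrix (Fin k) (Fin k) ℝ :=
  Real.sqrt n • (B.q1 n ω z - (γ⁻¹ * mpStieltjes γ z) • 1)

/-- `G_n(z)`. -/
def Gn (B : NoiseBlocks k γ p Ω P) (n : ℕ) (ω : Ω) (z : ℝ) : Matrix (Fin k) (Fin k) ℝ :=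
  Real.sqrt n • B.q3 n ω z

/-- `H_n(z)`. -/
def Hn (B : NoiseBlocks k γ p Ω P) (n : ℕ) (ω : Ω) (z : ℝ) : Matrix (Fin k) (Fin k) ℝ :=
  Real.sqrt n • (B.q2 n ω z - (γ⁻¹ * mpStieltjes γ z) • 1)

end NoiseBlocks

/-- The difference quotient `(m(z₁) − m(z₂))/(z₁ − z₂)`, interpreted as `m'(z₁)` when
`z₁ = z₂`: covariance kernel of `F` and `H`. -/
def qFH (γ z₁ z₂ : ℝ) : ℝ :=
  if z₁ = z₂ then deriv (mpStieltjes γ) z₁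
  else (mpStieltjes γ z₁ - mpStieltjes γ z₂) / (z₁ - z₂)

/-- The difference quotient `(z₁ m(z₁) − z₂ m(z₂))/(z₁ − z₂)`, interpreted as
`m(z₁) + z₁ m'(z₁)` when `z₁ = z₂`: covariance kernel of `G`. -/
def qG (γ z₁ z₂ : ℝ) : ℝ :=
  if z₁ = z₂ then mpStieltjes γ z₁ + z₁ * deriv (mpStieltjes γ) z₁
  else (z₁ * mpStieltjes γ z₁ - z₂ * mpStieltjes γ z₂) / (z₁ - z₂)

/-- Covariance function of the limiting Gaussian family
`(F(z_r), G(z_r), H(z_r))_{r}` (index component `Fin 3`: `0 ↦ F`, `1 ↦ G`, `2 ↦ H`);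
it encodes that `F`, `G`, `H` are mutually independent, that `F` and `H` are symmetric,
and that all covariances vanish except the ones prescribed. -/
def covFGH (γ : ℝ) {l k : ℕ} (zs : Fin l → ℝ) :
    Fin l × Fin 3 × Fin k × Fin k → Fin l × Fin 3 × Fin k × Fin k → ℝ := fun q q' =>
  if q.2.1 = q'.2.1 then
    if q.2.1 = 1 then
      γ⁻¹ * qG γ (zs q.1) (zs q'.1) *
        (if q.2.2.1 = q'.2.2.1 ∧ q.2.2.2 = q'.2.2.2 then 1 else 0)
    else
      γ⁻¹ * qFH γ (zs q.1) (zs q'.1) *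
        ((if q.2.2.1 = q'.2.2.1 ∧ q.2.2.2 = q'.2.2.2 then 1 else 0)
          + (if q.2.2.1 = q'.2.2.2 ∧ q.2.2.2 = q'.2.2.1 then 1 else 0))
  else 0

/-- The model after the orthogonal change of basis: the data matrix `X̃_n` has block form
`[[√n D_n + E₁₁, E₁₂], [E₂₁, √n Λ_n^{1/2}], [E₃₁, 0]]`, with all blocks mutually independent,
the `E`-blocks having iid `N(0,1)` entries and `n λ_{n,α}` the decreasingly ordered
eigenvalues of a white Wishart matrix of dimension `p − k` with `n − k` degrees of freedom.
(Monotonicity assumptions on `d` and `μ` are stated separately when needed.) -/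
structure BlockModel (k : ℕ) (γ : ℝ) (p : ℕ → ℕ) (Ω : Type*) [MeasurableSpace Ω]
    (P : Measure Ω) (μ : Fin k → ℝ) where
  d : ∀ n : ℕ, Ω → Fin k → ℝ
  E11 : ∀ n : ℕ, Ω → Matrix (Fin k) (Fin k) ℝ
  E12 : ∀ n : ℕ, Ω → Matrix (Fin k) (Fin (p n - k)) ℝ
  E21 : ∀ n : ℕ, Ω → Matrix (Fin (p n - k)) (Fin k) ℝ
  E31 : ∀ n : ℕ, Ω → Matrix (Fin (n - p n)) (Fin k) ℝ
  W : ∀ n : ℕ, Ω → Matrix (Fin (n - k)) (Fin (p n - k)) ℝ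
  lam : ∀ n : ℕ, Ω → Fin (p n - k) → ℝ
  aspect : Tendsto (fun n : ℕ => Real.sqrt n * ((n : ℝ) / (p n) - γ)) atTop (𝓝 0)
  pTop : Tendsto p atTop atTop
  dpos : ∀ n ω i, 0 < d n ω i
  dconv : ∀ᵐ ω ∂P, ∀ i, Tendsto (fun n => d n ω i) atTop (𝓝 (Real.sqrt (μ i)))
  E11gauss : ∀ n, IIDGaussian P (fun ω => matEntries (E11 n ω)) 1
  E12gauss : ∀ n, IIDGaussian P (fun ω => matEntries (E12 n ω)) 1
  E21gauss : ∀ n, IIDGaussian P (fun ω => matEntries (E21 n ω)) 1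
  E31gauss : ∀ n, IIDGaussian P (fun ω => matEntries (E31 n ω)) 1
  Wgauss : ∀ n, IIDGaussian P (fun ω => matEntries (W n ω)) 1
  lamEig : ∀ n ω, ∀ α : Fin (p n - k), (n : ℝ) * lam n ω α = ithEigDesc ((W n ω)ᵀ * W n ω) α
  indep1 : ∀ n, IndepFun (d n) (fun ω => (E11 n ω, E12 n ω, E21 n ω, E31 n ω, W n ω)) P
  indep2 : ∀ n, IndepFun (E11 n) (fun ω => (E12 n ω, E21 n ω, E31 n ω, W n ω)) P
  indep3 : ∀ n, IndepFun (E12 n) (fun ω => (E21 n ω, E31 n ω, W n ω)) P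
  indep4 : ∀ n, IndepFun (E21 n) (fun ω => (E31 n ω, W n ω)) P
  indep5 : ∀ n, IndepFun (E31 n) (W n) P

namespace BlockModel

variable {k : ℕ} {γ : ℝ} {p : ℕ → ℕ} {Ω : Type*} [MeasurableSpace Ω] {P : Measure Ω}
  {μ : Fin k → ℝ}

/-- Upper-left block `S_{n,11}` of `S_n = (1/n) X̃_nᵀ X̃_n`. -/
def S11 (M : BlockModel k γ p Ω P μ) (n : ℕ) (ω : Ω) : Matrix (Fin k) (Fin k) ℝ :=
  Matrix.diagonal (fun i => (M.d n ω i) ^ 2)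
    + (1 / Real.sqrt n) •
      (Matrix.diagonal (M.d n ω) * M.E11 n ω + (M.E11 n ω)ᵀ * Matrix.diagonal (M.d n ω))
    + (1 / (n : ℝ)) •
      ((M.E11 n ω)ᵀ * M.E11 n ω + (M.E21 n ω)ᵀ * M.E21 n ω + (M.E31 n ω)ᵀ * M.E31 n ω)

/-- Block `S_{n,12}` of `S_n = (1/n) X̃_nᵀ X̃_n`. -/
def S12 (M : BlockModel k γ p Ω P μ) (n : ℕ) (ω : Ω) : Matrix (Fin k) (Fin (p n - k)) ℝ :=
  (1 / Real.sqrt n) • (Matrix.diagonal (M.d n ω) * M.E12 n ω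
      + (M.E21 n ω)ᵀ * Matrix.diagonal (fun α => Real.sqrt (M.lam n ω α)))
    + (1 / (n : ℝ)) • ((M.E11 n ω)ᵀ * M.E12 n ω)

/-- Block `S_{n,21}` of `S_n = (1/n) X̃_nᵀ X̃_n`. -/
def S21 (M : BlockModel k γ p Ω P μ) (n : ℕ) (ω : Ω) : Matrix (Fin (p n - k)) (Fin k) ℝ :=
  (1 / Real.sqrt n) • ((M.E12 n ω)ᵀ * Matrix.diagonal (M.d n ω)
      + Matrix.diagonal (fun α => Real.sqrt (M.lam n ω α)) * M.E21 n ω)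
    + (1 / (n : ℝ)) • ((M.E12 n ω)ᵀ * M.E11 n ω)

/-- Lower-right block `S_{n,22}` of `S_n = (1/n) X̃_nᵀ X̃_n`. -/
def S22 (M : BlockModel k γ p Ω P μ) (n : ℕ) (ω : Ω) :
    Matrix (Fin (p n - k)) (Fin (p n - k)) ℝ :=
  Matrix.diagonal (M.lam n ω) + (1 / (n : ℝ)) • ((M.E12 n ω)ᵀ * M.E12 n ω)

/-- The secular-equation matrix `T_n(z) = S₁₁ − z I − S₁₂ (S₂₂ − z I)⁻¹ S₂₁`. -/
def T (M : BlockModel k γ p Ω P μ) (n : ℕ) (ω : Ω) (z : ℝ) : Matrix (Fin k) (Fin k) ℝ :=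
  M.S11 n ω - z • 1 - M.S12 n ω * (M.S22 n ω - z • 1)⁻¹ * M.S21 n ω

/-- `F_n(z)` in the block model. -/
def Fmat (M : BlockModel k γ p Ω P μ) (n : ℕ) (ω : Ω) (z : ℝ) : Matrix (Fin k) (Fin k) ℝ :=
  Real.sqrt n • ((1 / (n : ℝ)) •
      (M.E12 n ω * (Matrix.diagonal (M.lam n ω) - z • 1)⁻¹ * (M.E12 n ω)ᵀ)
    - (γ⁻¹ * mpStieltjes γ z) • 1)

/-- `G_n(z)` in the block model. -/
def Gmat (M : BlockModel k γ p Ω P μ) (n : ℕ) (ω : Ω) (z : ℝ) : Matrix (Fin k) (Fin k) ℝ :=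
  Real.sqrt n • ((1 / (n : ℝ)) •
    (M.E12 n ω * (Matrix.diagonal (M.lam n ω) - z • 1)⁻¹ *
      Matrix.diagonal (fun α => Real.sqrt (M.lam n ω α)) * M.E21 n ω))

/-- `H_n(z)` in the block model. -/
def Hmat (M : BlockModel k γ p Ω P μ) (n : ℕ) (ω : Ω) (z : ℝ) : Matrix (Fin k) (Fin k) ℝ :=
  Real.sqrt n • ((1 / (n : ℝ)) •
      ((M.E21 n ω)ᵀ * (Matrix.diagonal (M.lam n ω) - z • 1)⁻¹ * M.E21 n ω)
    - (γ⁻¹ * mpStieltjes γ z) • 1)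

/-- `R_n(z) = D_n + n^{-1/2} E₁₁ − n^{-1/2} E₁₂ (S₂₂ − z I)⁻¹ S₂₁`. -/
def Rmat (M : BlockModel k γ p Ω P μ) (n : ℕ) (ω : Ω) (z : ℝ) : Matrix (Fin k) (Fin k) ℝ :=
  Matrix.diagonal (M.d n ω) + (1 / Real.sqrt n) • M.E11 n ω
    - (1 / Real.sqrt n) • (M.E12 n ω * (M.S22 n ω - z • 1)⁻¹ * M.S21 n ω)

/-- Euclidean norm of `x̃ = (x; −(S₂₂ − z I)⁻¹ S₂₁ x)`. -/
def xtNorm (M : BlockModel k γ p Ω P μ) (n : ℕ) (ω : Ω) (z : ℝ) (x : Fin k → ℝ) : ℝ :=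
  Real.sqrt (∑ j, x j ^ 2 +
    ∑ α, ((((M.S22 n ω - z • 1)⁻¹ * M.S21 n ω) *ᵥ x) α) ^ 2)

/-- First `k` components of the left singular vector: `y = R_n(z) x / ‖x̃‖₂`. -/
def yvec (M : BlockModel k γ p Ω P μ) (n : ℕ) (ω : Ω) (z : ℝ) (x : Fin k → ℝ) :
    Fin k → ℝ :=
  (M.xtNorm n ω z x)⁻¹ • (M.Rmat n ω z *ᵥ x)

end BlockModel

/-- The deterministic limit `T₀(z) = (1 + γ⁻¹ m(z))⁻¹ D² + m(z)⁻¹ I` of `T_n(z)`. -/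
def T0lim {k : ℕ} (γ : ℝ) (μ : Fin k → ℝ) (z : ℝ) : Matrix (Fin k) (Fin k) ℝ :=
  (1 + γ⁻¹ * mpStieltjes γ z)⁻¹ • Matrix.diagonal μ + (mpStieltjes γ z)⁻¹ • 1

/-! ### Standard Gaussian vectors and matrices -/

/-- The standard Gaussian measure on `ι → ℝ`. -/
abbrev gv (ι : Type*) [Fintype ι] : Measure (ι → ℝ) := Measure.pi fun _ => gaussianReal 0 1

/-- The law of an `ι × κ` matrix with iid standard Gaussian entries, organised as a family of
independent rows. -/
abbrev gm (ι κ : Type*) [Fintype ι] [Fintype κ] : Measure (ι → κ → ℝ) :=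
  Measure.pi fun _ => gv κ

lemma gv_curry (ι κ : Type*) [Fintype ι] [Fintype κ] :
    MeasurePreserving (fun (x : ι × κ → ℝ) i j => x (i, j)) (gv (ι × κ)) (gm ι κ) := by
  refine ⟨by fun_prop, ?_⟩
  have h := Measure.infinitePi_map_curry (ι := ι) (κ := κ) (fun _ _ => gaussianReal 0 1)
  simp only [Measure.infinitePi_eq_pi] at h
  exact h

lemma gv_swap (ι κ : Type*) [Fintype ι] [Fintype κ] :
    MeasurePreserving (fun (x : ι × κ → ℝ) (q : κ × ι) => x (q.2, q.1))
      (gv (ι × κ)) (gv (κ × ι)) := by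
  have h := measurePreserving_piCongrLeft (fun _ : κ × ι => gaussianReal 0 1) (Equiv.prodComm ι κ)
  convert h using 1
  ext x ⟨a, b⟩
  exact (Equiv.piCongrLeft_apply_apply (fun _ : κ × ι => ℝ) (Equiv.prodComm ι κ) x (b, a)).symm

lemma gm_transpose (ι κ : Type*) [Fintype ι] [Fintype κ] :
    MeasurePreserving (fun (W : ι → κ → ℝ) j i => W i j) (gm ι κ) (gm κ ι) := by
  refine ⟨by fun_prop, ?_⟩
  rw [← (gv_curry ι κ).map_eq, Measure.map_map (by fun_prop) (by fun_prop),
    ← (gv_curry κ ι).map_eq, ← (gv_swap ι κ).map_eq, Measure.map_map (by fun_prop) (by fun_prop)]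
  rfl

/-- Rotation invariance of the standard Gaussian vector. -/
lemma gv_rotate {ι : Type*} [Fintype ι] [DecidableEq ι]
    (f : EuclideanSpace ℝ ι ≃ₗᵢ[ℝ] EuclideanSpace ℝ ι) :
    MeasurePreserving (fun x : ι → ℝ => (f (WithLp.toLp 2 x)).ofLp) (gv ι) (gv ι) := by
  refine ⟨by fun_prop, ?_⟩
  have h1 := map_pi_eq_stdGaussian (ι := ι)
  have h2 := stdGaussian_map f
  have h3 : (gv ι).map (fun x : ι → ℝ => f (WithLp.toLp 2 x))
      = (gv ι).map (WithLp.toLp 2) := by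
    rw [h1, ← h2, ← h1, Measure.map_map (by fun_prop) (by fun_prop)]
    rfl
  have h4 := congrArg (Measure.map (WithLp.ofLp)) h3
  rw [Measure.map_map (by fun_prop) (by fun_prop), Measure.map_map (by fun_prop) (by fun_prop)] at h4
  rw [show (fun x : ι → ℝ => (f (WithLp.toLp 2 x)).ofLp) = WithLp.ofLp ∘ fun x => f (WithLp.toLp 2 x)
    from rfl, h4]
  exact Measure.map_id

/-- A union bound in conditional form: a measurable event of a product space whose sections all
have probability at most `δ` has probability at most `δ`. -/
lemma prod_le_of_sections {X Y : Type*} [MeasurableSpace X] [MeasurableSpace Y]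
    (μ : Measure X) (ν : Measure Y) [SFinite μ] [IsProbabilityMeasure ν]
    {S : Set (X × Y)} (hS : MeasurableSet S) {δ : ENNReal}
    (h : ∀ y, μ {x | (x, y) ∈ S} ≤ δ) : (μ.prod ν) S ≤ δ := by
  rw [Measure.prod_apply_symm hS]
  calc ∫⁻ y, μ ((fun x => (x, y)) ⁻¹' S) ∂ν ≤ ∫⁻ _, δ ∂ν := lintegral_mono fun y => h y
    _ = δ := by simp

/-! ### Exponential moments and tail bounds -/

lemma one_le_mul_exp {y : ℝ} (h1 : -(1/2) ≤ y) (h2 : y ≤ 1/2) :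
    1 ≤ (1 - y) * Real.exp (y + y ^ 2) := by
  rcases le_total 0 y with h | h
  · have := Real.quadratic_le_exp_of_nonneg (x := y + y ^ 2) (by positivity)
    have h3 : 1 ≤ (1 - y) * (1 + (y + y ^ 2) + (y + y ^ 2) ^ 2 / 2) := by
      have h4 : 0 ≤ y ^ 2 * (1 - y - y ^ 2 - y ^ 3) := by
        apply mul_nonneg (by positivity)
        nlinarith [mul_nonneg h h]
      nlinarith
    exact h3.trans (mul_le_mul_of_nonneg_left this (by linarith))
  · have := Real.add_one_le_exp (y + y ^ 2)
    have h3 : 1 ≤ (1 - y) * (y + y ^ 2 + 1) := by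
      have : 0 ≤ (-y) ^ 3 := pow_nonneg (by linarith) 3
      nlinarith
    exact h3.trans (mul_le_mul_of_nonneg_left this (by linarith))

lemma lintegral_exp_sq {θ : ℝ} (h1 : -(1/4) ≤ θ) (h2 : θ ≤ 1/4) :
    ∫⁻ x, ENNReal.ofReal (Real.exp (θ * x ^ 2)) ∂(gaussianReal 0 1)
      ≤ ENNReal.ofReal (Real.exp (θ + 2 * θ ^ 2)) := by
  have hb : (0:ℝ) < 1/2 - θ := by linarith
  have hpt : ∀ x : ℝ, gaussianPDFReal 0 1 x * Real.exp (θ * x ^ 2)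
      = (Real.sqrt (2 * Real.pi))⁻¹ * Real.exp (-(1/2 - θ) * x ^ 2) := by
    intro x
    rw [gaussianPDFReal, mul_assoc, ← Real.exp_add]
    simp only [NNReal.coe_one, mul_one, sub_zero]
    congr 2; ring
  rw [gaussianReal_of_var_ne_zero _ one_ne_zero,
    lintegral_withDensity_eq_lintegral_mul _ (measurable_gaussianPDF 0 1) (by fun_prop)]
  have h3 : ∀ x : ℝ, (gaussianPDF 0 1 * fun x => ENNReal.ofReal (Real.exp (θ * x ^ 2))) x
      = ENNReal.ofReal ((Real.sqrt (2 * Real.pi))⁻¹ * Real.exp (-(1/2 - θ) * x ^ 2)) := by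
    intro x
    rw [← hpt, Pi.mul_apply, gaussianPDF, ENNReal.ofReal_mul (gaussianPDFReal_nonneg _ _ _)]
  rw [lintegral_congr h3, ← ofReal_integral_eq_lintegral_ofReal
    ((integrable_exp_neg_mul_sq hb).const_mul _) (ae_of_all _ fun x => by positivity),
    integral_const_mul, integral_gaussian]
  apply ENNReal.ofReal_le_ofReal
  have h4 := one_le_mul_exp (y := 2 * θ) (by linarith) (by linarith)
  have h5 : (Real.sqrt (2 * Real.pi))⁻¹ * Real.sqrt (Real.pi / (1 / 2 - θ))
      = Real.sqrt ((1 - 2 * θ)⁻¹) := by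
    rw [← Real.sqrt_inv, ← Real.sqrt_mul (by positivity)]
    congr 1
    have := Real.pi_pos.ne'
    have : 1 - 2 * θ ≠ 0 := by linarith
    have : 1/2 - θ ≠ 0 := hb.ne'
    rw [show 1 - 2 * θ = 2 * (1/2 - θ) by ring]
    field_simp
  rw [h5]
  apply Real.sqrt_le_iff.mpr ⟨by positivity, ?_⟩
  rw [← Real.exp_nat_mul, inv_le_iff_one_le_mul₀ (by linarith)]
  refine h4.trans (le_of_eq ?_)
  rw [mul_comm]; congr 2; push_cast; ring

/-- A measurable function on a probability space with sub-exponential moment generating function,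
uniformly normalised. -/
structure SubExp {X : Type*} [MeasurableSpace X] (ρ : Measure X) (φ : X → ℝ) : Prop where
  meas : Measurable φ
  mgf_le : ∀ θ : ℝ, |θ| ≤ 1/4 →
    ∫⁻ x, ENNReal.ofReal (Real.exp (θ * φ x)) ∂ρ ≤ ENNReal.ofReal (Real.exp (2 * θ ^ 2))

lemma subExp_sq : SubExp (gaussianReal 0 1) (fun x => x ^ 2 - 1) := by
  refine ⟨by fun_prop, fun θ hθ => ?_⟩
  obtain ⟨h1, h2⟩ := abs_le.mp hθ
  have h3 : ∀ x : ℝ, ENNReal.ofReal (Real.exp (θ * (x ^ 2 - 1)))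
      = ENNReal.ofReal (Real.exp (-θ)) * ENNReal.ofReal (Real.exp (θ * x ^ 2)) := by
    intro x
    rw [← ENNReal.ofReal_mul (by positivity), ← Real.exp_add]; congr 2; ring
  rw [lintegral_congr h3, lintegral_const_mul _ (by fun_prop)]
  calc _ ≤ ENNReal.ofReal (Real.exp (-θ)) * ENNReal.ofReal (Real.exp (θ + 2 * θ ^ 2)) := by
        gcongr; exact lintegral_exp_sq h1 h2
    _ = _ := by
        rw [← ENNReal.ofReal_mul (by positivity), ← Real.exp_add]; congr 2; ring

lemma subExp_mul : SubExp ((gaussianReal 0 1).prod (gaussianReal 0 1)) (fun x => x.1 * x.2) := by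
  refine ⟨by fun_prop, fun θ hθ => ?_⟩
  have hθ2 : θ ^ 2 ≤ (1/4) ^ 2 := sq_le_sq' (by linarith [abs_le.mp hθ]) (by linarith [abs_le.mp hθ])
  rw [lintegral_prod _ (by fun_prop)]
  have h3 : ∀ x : ℝ, ∫⁻ y, ENNReal.ofReal (Real.exp (θ * (x * y))) ∂(gaussianReal 0 1)
      = ENNReal.ofReal (Real.exp (θ ^ 2 / 2 * x ^ 2)) := by
    intro x
    have h := congrFun (mgf_id_gaussianReal (μ := 0) (v := 1)) (θ * x)
    rw [← ofReal_integral_eq_lintegral_ofReal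
      (by simpa [mul_assoc] using integrable_exp_mul_gaussianReal (μ := 0) (v := 1) (θ * x))
      (ae_of_all _ fun x => by positivity)]
    simp only [mgf, id] at h
    simp only [← mul_assoc]
    rw [h]; congr 2; simp; ring
  simp only [h3]
  refine (lintegral_exp_sq (by nlinarith [sq_nonneg θ]) (by nlinarith)).trans ?_
  apply ENNReal.ofReal_le_ofReal
  apply Real.exp_le_exp.mpr
  nlinarith [sq_nonneg θ]

lemma SubExp.chernoff_one {X ι : Type*} [MeasurableSpace X] [Fintype ι] {ρ : Measure X}
    [IsProbabilityMeasure ρ] {φ : X → ℝ} (h : SubExp ρ φ) (l : ι → ℝ) {K θ : ℝ}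
    (hl : ∀ i, |l i| ≤ K) (hθ : 0 ≤ θ) (hθK : θ * K ≤ 1/4) (t : ℝ) :
    (Measure.pi fun _ : ι => ρ) {x | t ≤ ∑ i, l i * φ (x i)}
      ≤ ENNReal.ofReal (Real.exp (-(θ * t) + 2 * θ ^ 2 * K ^ 2 * Fintype.card ι)) := by
  have hφ := h.meas
  have hm : ∀ i, Measurable fun x : ι → X => ENNReal.ofReal (Real.exp (θ * l i * φ (x i))) := by
    intro i; fun_prop
  have hintg : ∫⁻ x, ENNReal.ofReal (Real.exp (θ * ∑ i, l i * φ (x i))) ∂(Measure.pi fun _ : ι => ρ)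
      ≤ ENNReal.ofReal (Real.exp (2 * θ ^ 2 * K ^ 2 * Fintype.card ι)) := by
    have h1 : ∀ x : ι → X, ENNReal.ofReal (Real.exp (θ * ∑ i, l i * φ (x i)))
        = ∏ i, ENNReal.ofReal (Real.exp (θ * l i * φ (x i))) := by
      intro x
      rw [← ENNReal.ofReal_prod_of_nonneg (fun _ _ => by positivity), ← Real.exp_sum,
        Finset.mul_sum]
      simp only [mul_assoc]
    rw [lintegral_congr h1]
    have h2 := lintegral_prod_eq_prod_lintegral_of_indepFun (μ := Measure.pi fun _ : ι => ρ)
      (Finset.univ : Finset ι) (fun i (x : ι → X) => ENNReal.ofReal (Real.exp (θ * l i * φ (x i))))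
      (iIndepFun_pi (X := fun i (x : X) => ENNReal.ofReal (Real.exp (θ * l i * φ x)))
        (fun i => by fun_prop)) (fun i => hm i)
    rw [h2]
    have h4 : ∀ i, ∫⁻ x : ι → X, ENNReal.ofReal (Real.exp (θ * l i * φ (x i)))
        ∂(Measure.pi fun _ : ι => ρ) ≤ ENNReal.ofReal (Real.exp (2 * θ ^ 2 * K ^ 2)) := by
      intro i
      have h5 := (measurePreserving_eval (fun _ : ι => ρ) i).lintegral_comp
        (f := fun x => ENNReal.ofReal (Real.exp (θ * l i * φ x))) (by fun_prop)
      simp only [Function.eval] at h5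
      rw [h5]
      have h6 : |θ * l i| ≤ θ * K := by
        rw [abs_mul, abs_of_nonneg hθ]; exact mul_le_mul_of_nonneg_left (hl i) hθ
      refine (h.mgf_le _ (h6.trans hθK)).trans (ENNReal.ofReal_le_ofReal (Real.exp_le_exp.mpr ?_))
      have h7 : (θ * l i) ^ 2 ≤ (θ * K) ^ 2 := sq_le_sq' (by linarith [neg_abs_le (θ * l i)])
        (by linarith [le_abs_self (θ * l i)])
      nlinarith
    calc _ ≤ ∏ _i : ι, ENNReal.ofReal (Real.exp (2 * θ ^ 2 * K ^ 2)) :=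
          Finset.prod_le_prod' fun i _ => h4 i
      _ = _ := by
          rw [← ENNReal.ofReal_prod_of_nonneg (fun _ _ => by positivity), ← Real.exp_sum]
          simp [mul_comm]
  have hmk := mul_meas_ge_le_lintegral₀ (μ := Measure.pi fun _ : ι => ρ)
    (f := fun x => ENNReal.ofReal (Real.exp (θ * ∑ i, l i * φ (x i))))
    (Measurable.aemeasurable (by fun_prop)) (ENNReal.ofReal (Real.exp (θ * t)))
  have hsub : {x : ι → X | t ≤ ∑ i, l i * φ (x i)} ⊆ {x | ENNReal.ofReal (Real.exp (θ * t))
      ≤ ENNReal.ofReal (Real.exp (θ * ∑ i, l i * φ (x i)))} := by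
    intro x hx
    exact ENNReal.ofReal_le_ofReal (Real.exp_le_exp.mpr (mul_le_mul_of_nonneg_left hx hθ))
  have h0 : ENNReal.ofReal (Real.exp (θ * t)) ≠ 0 := by simp [Real.exp_pos]
  calc _ ≤ _ := measure_mono hsub
    _ ≤ ENNReal.ofReal (Real.exp (2 * θ ^ 2 * K ^ 2 * Fintype.card ι))
        / ENNReal.ofReal (Real.exp (θ * t)) := by
        rw [ENNReal.le_div_iff_mul_le (Or.inl h0) (Or.inl ENNReal.ofReal_ne_top), mul_comm]
        exact hmk.trans hintg
    _ = _ := by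
        rw [← ENNReal.ofReal_div_of_pos (by positivity), ← Real.exp_sub]; congr 2; ring

/-- Two-sided exponential tail bound for weighted sums of at most `C n` iid centred
sub-exponential variables, at scale `ε n`. The rate depends on `ε`, on the bound `K` for the
weights and on `C` only. -/
lemma SubExp.tail {X : Type*} [MeasurableSpace X] {ρ : Measure X}
    [IsProbabilityMeasure ρ] {φ : X → ℝ} (h : SubExp ρ φ) {K C ε : ℝ} (hK : 0 < K) (hC : 0 < C)
    (hε : 0 < ε) : ∃ c > 0, ∀ (n q : ℕ) (l : Fin q → ℝ), (q : ℝ) ≤ C * n → (∀ i, |l i| ≤ K) →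
      (Measure.pi fun _ : Fin q => ρ) {x | ε * n ≤ |∑ i, l i * φ (x i)|}
        ≤ ENNReal.ofReal (2 * Real.exp (-(c * n))) := by
  set θ := min (1 / (4 * K)) (ε / (4 * K ^ 2 * C)) with hθdef
  have hθ : 0 < θ := by positivity
  have h1 : θ * K ≤ 1/4 := by
    have : θ ≤ 1 / (4 * K) := min_le_left _ _
    rw [le_div_iff₀ (by positivity)] at this; linarith
  have h2 : θ * (4 * K ^ 2 * C) ≤ ε := by
    have : θ ≤ ε / (4 * K ^ 2 * C) := min_le_right _ _
    rwa [le_div_iff₀ (by positivity)] at this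
  refine ⟨θ * ε / 2, by positivity, fun n q l hq hl => ?_⟩
  have hb : Real.exp (-(θ * (ε * n)) + 2 * θ ^ 2 * K ^ 2 * Fintype.card (Fin q))
      ≤ Real.exp (-(θ * ε / 2 * n)) := by
    apply Real.exp_le_exp.mpr
    rw [Fintype.card_fin]
    have h3 : 2 * θ ^ 2 * K ^ 2 * q ≤ 2 * θ ^ 2 * K ^ 2 * (C * n) := by gcongr
    have h4 : θ * n * (θ * (4 * K ^ 2 * C)) ≤ θ * n * ε := by gcongr
    nlinarith
  have ha := h.chernoff_one l hl hθ.le h1 (ε * n)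
  have hc := h.chernoff_one (fun i => - l i) (by simpa using hl) hθ.le h1 (ε * n)
  have hsub : {x : Fin q → X | ε * n ≤ |∑ i, l i * φ (x i)|}
      ⊆ {x | ε * n ≤ ∑ i, l i * φ (x i)} ∪ {x | ε * n ≤ ∑ i, - l i * φ (x i)} := by
    intro x hx
    rcases le_abs.mp (show ε * n ≤ |∑ i, l i * φ (x i)| from hx) with h | h
    · exact Or.inl h
    · right; simpa [Finset.sum_neg_distrib] using h
  calc _ ≤ _ := measure_mono hsub
    _ ≤ _ := measure_union_le _ _
    _ ≤ _ := add_le_add ha hc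
    _ ≤ ENNReal.ofReal (Real.exp (-(θ * ε / 2 * n))) + ENNReal.ofReal (Real.exp (-(θ * ε / 2 * n))) :=
        add_le_add (ENNReal.ofReal_le_ofReal hb) (ENNReal.ofReal_le_ofReal hb)
    _ = _ := by rw [← ENNReal.ofReal_add (by positivity) (by positivity)]; congr 1; ring

/-- Borel–Cantelli with exponentially small probabilities; the polynomial factor leaves room for
a union bound. -/
lemma tendsto_zero_of_exp_tail {Ω : Type*} [MeasurableSpace Ω] {P : Measure Ω}
    {X : ℕ → Ω → ℝ}
    (h : ∀ ε > 0, ∃ c > 0, ∃ A : ℝ, ∀ᶠ n : ℕ in atTop,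
      P {ω | ε ≤ |X n ω|} ≤ ENNReal.ofReal (A * n * Real.exp (-(c * n)))) :
    ∀ᵐ ω ∂P, Tendsto (fun n => X n ω) atTop (𝓝 0) := by
  have key : ∀ m : ℕ, ∀ᵐ ω ∂P, ∀ᶠ n in atTop, |X n ω| < 1 / ((m : ℝ) + 1) := by
    intro m
    obtain ⟨c, hc, A, hA⟩ := h (1 / ((m : ℝ) + 1)) (by positivity)
    obtain ⟨N, hN⟩ := eventually_atTop.mp hA
    have hs : Summable fun n : ℕ => A * n * Real.exp (-(c * n)) := by
      have := (Real.summable_pow_mul_exp_neg_nat_mul 1 hc).mul_left A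
      simpa [mul_assoc, neg_mul] using this
    have hsum : ∑' n, P {ω | 1 / ((m : ℝ) + 1) ≤ |X (n + N) ω|} ≠ ⊤ := by
      have h1 : ∀ n, P {ω | 1 / ((m : ℝ) + 1) ≤ |X (n + N) ω|}
          ≤ ENNReal.ofReal (A * (n + N : ℕ) * Real.exp (-(c * (n + N : ℕ)))) :=
        fun n => hN _ (by omega)
      refine ne_top_of_le_ne_top ?_ (ENNReal.tsum_le_tsum h1)
      exact ((summable_nat_add_iff N).mpr hs).tsum_ofReal_ne_top
    have h3 := ae_eventually_notMem hsum
    filter_upwards [h3] with ω hω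
    have h4 : ∀ᶠ n in atTop, |X (n + N) ω| < 1 / ((m : ℝ) + 1) := by
      filter_upwards [hω] with n hn
      simpa using hn
    obtain ⟨N', hN'⟩ := eventually_atTop.mp h4
    filter_upwards [eventually_ge_atTop (N' + N)] with n hn
    have := hN' (n - N) (by omega)
    rwa [Nat.sub_add_cancel (by omega)] at this
  filter_upwards [ae_all_iff.mpr key] with ω hω
  rw [Metric.tendsto_nhds]
  intro ε hε
  obtain ⟨m, hm⟩ := exists_nat_one_div_lt hε
  filter_upwards [hω m] with n hn
  rw [Real.dist_eq, sub_zero]; exact hn.trans hm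

/-! ### The largest singular value of a Gaussian matrix -/

lemma prod_le_of_sections' {X Y : Type*} [MeasurableSpace X] [MeasurableSpace Y]
    (μ : Measure X) (ν : Measure Y) [IsProbabilityMeasure μ] [SFinite ν]
    {S : Set (X × Y)} (hS : MeasurableSet S) {δ : ENNReal}
    (h : ∀ x, ν {y | (x, y) ∈ S} ≤ δ) : (μ.prod ν) S ≤ δ := by
  rw [Measure.prod_apply hS]
  calc ∫⁻ x, ν (Prod.mk x ⁻¹' S) ∂μ ≤ ∫⁻ _, δ ∂μ := lintegral_mono fun y => h y
    _ = δ := by simp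

/-- The event that the squared operator norm of the matrix `[u | W]`, obtained by attaching the
column `u` to `W`, exceeds `s`. -/
def BigNorm {p n : ℕ} (s : ℝ) (u : Fin p → ℝ) (W : Fin p → Fin n → ℝ) : Prop :=
  ∃ y : Fin p → ℝ, s * ∑ a, y a ^ 2 < (∑ a, u a * y a) ^ 2 + ∑ j, (∑ a, y a * W a j) ^ 2

lemma isOpen_bigNorm {p n : ℕ} (s r : ℝ) :
    IsOpen {q : (Fin p → ℝ) × (Fin p → Fin n → ℝ) | BigNorm s (r • q.1) q.2} := by
  simp only [BigNorm, Set.ofPred_exists]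
  refine isOpen_iUnion fun y => isOpen_lt (by fun_prop) ?_
  simp only [Pi.smul_apply, smul_eq_mul]
  fun_prop

lemma isOpen_bigNorm_right {p n : ℕ} (s : ℝ) (u : Fin p → ℝ) :
    IsOpen {W : Fin p → Fin n → ℝ | BigNorm s u W} := by
  simp only [BigNorm, Set.ofPred_exists]
  exact isOpen_iUnion fun y => isOpen_lt (by fun_prop) (by fun_prop)

/-- A matrix and its transpose have the same norm. -/
lemma BigNorm.dual {p n : ℕ} {s : ℝ} (hs : 0 ≤ s) {u : Fin p → ℝ} {W : Fin p → Fin n → ℝ}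
    (h : BigNorm s u W) : ∃ (a : ℝ) (x : Fin n → ℝ),
      s * (a ^ 2 + ∑ j, x j ^ 2) < ∑ b, (a * u b + ∑ j, W b j * x j) ^ 2 := by
  obtain ⟨y, hy⟩ := h
  refine ⟨∑ b, u b * y b, fun j => ∑ a, y a * W a j, ?_⟩
  set a := ∑ b, u b * y b with ha
  set x : Fin n → ℝ := fun j => ∑ a, y a * W a j with hx
  have hv : a ^ 2 + ∑ j, x j ^ 2 = ∑ b, y b * (a * u b + ∑ j, W b j * x j) := by
    have h1 : ∑ j, x j ^ 2 = ∑ b, y b * ∑ j, W b j * x j := by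
      have : ∀ j, x j ^ 2 = ∑ b, y b * W b j * x j := by
        intro j; rw [← Finset.sum_mul, sq]
      simp only [this, Finset.mul_sum]
      rw [Finset.sum_comm]
      simp only [mul_assoc]
    have h2 : a ^ 2 = ∑ b, y b * (a * u b) := by
      rw [sq]; nth_rw 2 [ha]; rw [Finset.mul_sum]
      exact Finset.sum_congr rfl fun b _ => by ring
    rw [h1, h2, ← Finset.sum_add_distrib]
    exact Finset.sum_congr rfl fun b _ => by ring
  have hcs := Finset.sum_mul_sq_le_sq_mul_sq Finset.univ y (fun b => a * u b + ∑ j, W b j * x j)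
  rw [← hv] at hcs
  set V := a ^ 2 + ∑ j, x j ^ 2
  set Y := ∑ b, y b ^ 2
  set Q := ∑ b, (a * u b + ∑ j, W b j * x j) ^ 2
  have hY : 0 ≤ Y := Finset.sum_nonneg fun _ _ => sq_nonneg _
  have hQ : 0 ≤ Q := Finset.sum_nonneg fun _ _ => sq_nonneg _
  have hVY : s * Y < V := hy
  have hV : 0 < V := lt_of_le_of_lt (mul_nonneg hs hY) hVY
  by_contra hcon
  push Not at hcon
  have h3 : V * V ≤ Y * (s * V) := by nlinarith
  nlinarith

/-- One step of the bidiagonalisation of `[u | W]` when `u` is a multiple of the first basis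
vector: removing the first row `c` of `W` leaves the transposed problem for the remaining rows,
with a multiple of `c` as the attached column. -/
lemma BigNorm.step {p n : ℕ} {α β r : ℝ} (hα : 0 < α) (hβ : 0 < β) (hr : r ^ 2 ≤ β * (α + β))
    {c : Fin n → ℝ} {W : Fin p → Fin n → ℝ}
    (h : BigNorm ((α + β) ^ 2) (Fin.cons r 0 : Fin (p + 1) → ℝ)
      (Fin.cons c W : Fin (p + 1) → Fin n → ℝ)) :
    BigNorm ((α + β) ^ 2) (Real.sqrt ((α + β) / α) • c) (fun j b => W b j) := by
  obtain ⟨a, x, hx⟩ := h.dual (by positivity)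
  refine ⟨x, ?_⟩
  rw [Fin.sum_univ_succ] at hx
  simp only [Fin.cons_zero, Fin.cons_succ, Pi.zero_apply, mul_zero, zero_add] at hx
  have h1 : (∑ j, (Real.sqrt ((α + β) / α) • c) j * x j) ^ 2
      = (α + β) / α * (∑ j, c j * x j) ^ 2 := by
    simp only [Pi.smul_apply, smul_eq_mul, mul_assoc]
    rw [← Finset.mul_sum, mul_pow, Real.sq_sqrt (by positivity)]
  rw [h1]
  set C := ∑ j, c j * x j
  have h2 : (a * r + C) ^ 2 ≤ (α + β) ^ 2 * a ^ 2 + (α + β) / α * C ^ 2 := by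
    have h3 : (a * r + C) ^ 2 ≤ (α + β) / β * (a * r) ^ 2 + (α + β) / α * C ^ 2 := by
      have : (α + β) / β * (a * r) ^ 2 + (α + β) / α * C ^ 2 - (a * r + C) ^ 2
          = (α * (a * r) - β * C) ^ 2 / (α * β) := by
        field_simp; ring
      have : 0 ≤ (α * (a * r) - β * C) ^ 2 / (α * β) := by positivity
      linarith
    have h4 : (α + β) / β * (a * r) ^ 2 ≤ (α + β) ^ 2 * a ^ 2 := by
      rw [mul_pow, div_mul_eq_mul_div, div_le_iff₀ hβ]
      have : (α + β) * (a ^ 2 * r ^ 2) ≤ (α + β) * (a ^ 2 * (β * (α + β))) := by gcongr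
      nlinarith
    linarith
  have h5 : ∑ j, (∑ a, x a * W j a) ^ 2 = ∑ b, (∑ j, W b j * x j) ^ 2 := by
    simp only [mul_comm]
  rw [h5]
  nlinarith

lemma exists_rotation {p : ℕ} (u : Fin (p + 1) → ℝ) :
    ∃ f : EuclideanSpace ℝ (Fin (p + 1)) ≃ₗᵢ[ℝ] EuclideanSpace ℝ (Fin (p + 1)),
      (f (WithLp.toLp 2 u)).ofLp = Fin.cons (Real.sqrt (∑ a, u a ^ 2)) 0 := by
  set v : EuclideanSpace ℝ (Fin (p + 1)) := WithLp.toLp 2 (Fin.cons (Real.sqrt (∑ a, u a ^ 2)) 0)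
  have h : ‖WithLp.toLp 2 u‖ = ‖v‖ := by
    rw [EuclideanSpace.norm_eq, EuclideanSpace.norm_eq, Fin.sum_univ_succ (n := p)
      (f := fun i => ‖v.ofLp i‖ ^ 2)]
    simp [v, Real.sq_sqrt (Finset.sum_nonneg fun a _ => sq_nonneg (u a))]
  refine ⟨Submodule.reflection (ℝ ∙ (WithLp.toLp 2 u - v))ᗮ, ?_⟩
  rw [Submodule.reflection_sub h]

lemma gm_rotate {p n : ℕ}
    (f : EuclideanSpace ℝ (Fin p) ≃ₗᵢ[ℝ] EuclideanSpace ℝ (Fin p)) :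
    MeasurePreserving (fun (W : Fin p → Fin n → ℝ) a j => (f (WithLp.toLp 2 fun b => W b j)).ofLp a)
      (gm (Fin p) (Fin n)) (gm (Fin p) (Fin n)) :=
  (gm_transpose (Fin n) (Fin p)).comp
    ((measurePreserving_pi (fun _ : Fin n => gv (Fin p)) (fun _ : Fin n => gv (Fin p))
      (fun _ => gv_rotate f)).comp (gm_transpose (Fin p) (Fin n)))

lemma BigNorm.rotate {p n : ℕ} {s : ℝ} {u : Fin p → ℝ} {W : Fin p → Fin n → ℝ}
    (f : EuclideanSpace ℝ (Fin p) ≃ₗᵢ[ℝ] EuclideanSpace ℝ (Fin p)) (h : BigNorm s u W) :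
    BigNorm s (f (WithLp.toLp 2 u)).ofLp
      (fun a j => (f (WithLp.toLp 2 fun b => W b j)).ofLp a) := by
  have hin : ∀ v w : Fin p → ℝ, ∑ a, (f (WithLp.toLp 2 v)).ofLp a * (f (WithLp.toLp 2 w)).ofLp a
      = ∑ a, v a * w a := by
    intro v w
    have := f.inner_map_map (WithLp.toLp 2 w) (WithLp.toLp 2 v)
    simp only [PiLp.inner_apply, RCLike.inner_apply, conj_trivial] at this
    exact this
  obtain ⟨y, hy⟩ := h
  refine ⟨(f (WithLp.toLp 2 y)).ofLp, ?_⟩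
  simp only [sq] at hy ⊢
  simp only [hin]
  simpa only [mul_comm] using hy

/-- Silverstein's bound: the probability that `[u | W]` has norm larger than `α + β` is at most
the sum of the probabilities that the successive chi variables of a bidiagonalisation are too
large. -/
lemma bigNorm_le {δ : ENNReal} : ∀ (m p n : ℕ) (α β : ℝ) (u : Fin p → ℝ), p + n = m → 0 < α →
    0 < β → (∀ d ≤ n, gv (Fin d) {c | α ^ 2 < ∑ i, c i ^ 2} ≤ δ) →
    (∀ d ≤ p, gv (Fin d) {c | β ^ 2 < ∑ i, c i ^ 2} ≤ δ) →
    ∑ a, u a ^ 2 ≤ β * (α + β) →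
    gm (Fin p) (Fin n) {W | BigNorm ((α + β) ^ 2) u W} ≤ m * δ := by
  intro m
  induction m with
  | zero =>
    intro p n α β u hm hα hβ h1 h2 hu
    obtain rfl : p = 0 := by omega
    simp [BigNorm]
  | succ m ih =>
    intro p n α β u hm hα hβ h1 h2 hu
    rcases p with _ | p
    · have : {W : Fin 0 → Fin n → ℝ | BigNorm ((α + β) ^ 2) u W} = ∅ := by
        ext W; simp [BigNorm]
      rw [this]; simp
    obtain ⟨f, hf⟩ := exists_rotation u
    set r := Real.sqrt (∑ a, u a ^ 2) with hrdef
    have hr : r ^ 2 ≤ β * (α + β) := by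
      rw [hrdef, Real.sq_sqrt (Finset.sum_nonneg fun a _ => sq_nonneg (u a))]; exact hu
    set s := (α + β) ^ 2 with hs
    set T : Set (Fin (p + 1) → Fin n → ℝ) := {W | BigNorm s (Fin.cons r 0) W}
    have hT : MeasurableSet T := (isOpen_bigNorm_right s _).measurableSet
    have hstep1 : gm (Fin (p + 1)) (Fin n) {W | BigNorm s u W} ≤ gm (Fin (p + 1)) (Fin n) T := by
      rw [← (gm_rotate (n := n) f).measure_preimage hT.nullMeasurableSet]
      refine measure_mono fun W hW => ?_
      have := BigNorm.rotate f hW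
      rw [hf] at this
      exact this
    have hpres := measurePreserving_piFinSuccAbove (fun _ : Fin (p + 1) => gv (Fin n)) 0
    set S1 : Set ((Fin n → ℝ) × (Fin p → Fin n → ℝ)) := {q | α ^ 2 < ∑ i, q.1 i ^ 2}
    set S2 : Set ((Fin n → ℝ) × (Fin p → Fin n → ℝ)) := {q | ∑ i, q.1 i ^ 2 ≤ α ^ 2 ∧
      BigNorm s (Real.sqrt ((α + β) / α) • q.1) (fun j b => q.2 b j)}
    have hS1 : MeasurableSet S1 := (isOpen_lt (by fun_prop) (by fun_prop)).measurableSet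
    have hS2 : MeasurableSet S2 := by
      have hcl : IsClosed {q : (Fin n → ℝ) × (Fin p → Fin n → ℝ) | ∑ i, q.1 i ^ 2 ≤ α ^ 2} :=
        isClosed_le (by fun_prop) (by fun_prop)
      refine hcl.measurableSet.inter ?_
      exact ((isOpen_bigNorm s (Real.sqrt ((α + β) / α))).preimage
        (f := fun q : (Fin n → ℝ) × (Fin p → Fin n → ℝ) => (q.1, fun j b => q.2 b j))
        (by fun_prop)).measurableSet
    have hstep2 : T ⊆ MeasurableEquiv.piFinSuccAbove (fun _ => Fin n → ℝ) 0 ⁻¹' (S1 ∪ S2) := by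
      intro W hW
      by_cases hc : ∑ i, (W 0) i ^ 2 ≤ α ^ 2
      · right
        refine ⟨by simpa using hc, ?_⟩
        have hW' : W = Fin.cons (W 0) (fun b => W b.succ) := by
          ext a; refine Fin.cases ?_ (fun b => ?_) a <;> simp
        have hW2 : BigNorm s (Fin.cons r 0) W := hW
        rw [hW'] at hW2
        have := hW2.step hα hβ hr
        simpa [MeasurableEquiv.piFinSuccAbove, Fin.removeNth, Fin.tail] using this
      · left
        push Not at hc
        simpa [S1] using hc
    have hP1 : ((gv (Fin n)).prod (gm (Fin p) (Fin n))) S1 ≤ δ := by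
      refine prod_le_of_sections _ _ hS1 fun y => ?_
      exact h1 n le_rfl
    have hP2 : ((gv (Fin n)).prod (gm (Fin p) (Fin n))) S2 ≤ m * δ := by
      refine prod_le_of_sections' _ _ hS2 fun c => ?_
      by_cases hc : ∑ i, c i ^ 2 ≤ α ^ 2
      · have hih := ih n p β α (Real.sqrt ((α + β) / α) • c) (by omega) hβ hα
          (fun d hd => h2 d (by omega)) h1 (by
            simp only [Pi.smul_apply, smul_eq_mul, mul_pow]
            rw [← Finset.mul_sum, Real.sq_sqrt (by positivity)]
            calc (α + β) / α * ∑ i, c i ^ 2 ≤ (α + β) / α * α ^ 2 := by gcongr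
              _ = α * (β + α) := by field_simp; ring)
        rw [add_comm β α, ← hs,
          ← (gm_transpose (Fin p) (Fin n)).measure_preimage
            (isOpen_bigNorm_right s _).measurableSet.nullMeasurableSet] at hih
        exact (measure_mono fun W hW => hW.2).trans hih
      · have : {y : Fin p → Fin n → ℝ | (c, y) ∈ S2} = ∅ := by
          ext y; simp [S2, hc]
        rw [this]; simp
    calc _ ≤ _ := hstep1
      _ ≤ _ := measure_mono hstep2
      _ = _ := hpres.measure_preimage (hS1.union hS2).nullMeasurableSet
      _ ≤ _ := measure_union_le _ _
      _ ≤ δ + m * δ := add_le_add hP1 hP2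
      _ = _ := by push_cast; ring

/-- With probability exponentially close to one, the squared norm of an `N × q` Gaussian matrix
with `N ≤ n` and `q / n → γ⁻¹` is at most `B n`, for every `B` above the Marchenko–Pastur edge. -/
lemma edge_bound {γ : ℝ} (hγ : 1 ≤ γ) {B : ℝ} (hB : bGamma γ < B) (N q : ℕ → ℕ)
    (hN : ∀ n, N n ≤ n) (hq : Tendsto (fun n => (q n : ℝ) / n) atTop (𝓝 γ⁻¹)) :
    ∃ c > 0, ∃ A : ℝ, ∀ᶠ n : ℕ in atTop, gm (Fin (N n)) (Fin (q n))
      {W | ∃ y : Fin (q n) → ℝ, B * n * ∑ j, y j ^ 2 < ∑ i, (∑ j, W i j * y j) ^ 2}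
        ≤ ENNReal.ofReal (A * n * Real.exp (-(c * n))) := by
  have hγ0 : 0 < γ := by linarith
  obtain ⟨ε, hε, hεB⟩ : ∃ ε > 0, (Real.sqrt (1 + ε) + Real.sqrt (γ⁻¹ + 2 * ε)) ^ 2 < B := by
    have hc : Continuous fun ε : ℝ => (Real.sqrt (1 + ε) + Real.sqrt (γ⁻¹ + 2 * ε)) ^ 2 := by
      fun_prop
    have h0 : (Real.sqrt (1 + 0) + Real.sqrt (γ⁻¹ + 2 * 0)) ^ 2 < B := by
      rw [bGamma] at hB; simpa [Real.sqrt_inv] using hB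
    have h1 := (hc.tendsto 0).eventually (gt_mem_nhds h0)
    have h2 := (h1.filter_mono nhdsWithin_le_nhds).and (self_mem_nhdsWithin (s := Set.Ioi (0:ℝ)))
    obtain ⟨ε, h3, h4⟩ := h2.exists
    exact ⟨ε, h4, h3⟩
  obtain ⟨c, hc, htail⟩ := subExp_sq.tail (K := 1) (C := 1 + ε + γ⁻¹) (ε := ε) one_pos
    (by positivity) hε
  refine ⟨c, hc, 2 * (2 + ε + γ⁻¹), ?_⟩
  have hqe : ∀ᶠ n : ℕ in atTop, (q n : ℝ) / n < γ⁻¹ + ε :=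
    hq.eventually (gt_mem_nhds (by linarith))
  filter_upwards [hqe, eventually_gt_atTop 0] with n hqn hn
  have hn' : (0:ℝ) < n := by exact_mod_cast hn
  rw [div_lt_iff₀ hn'] at hqn
  set δ := ENNReal.ofReal (2 * Real.exp (-(c * n))) with hδ
  set α := Real.sqrt (1 + ε) * Real.sqrt n
  set β := Real.sqrt (γ⁻¹ + 2 * ε) * Real.sqrt n
  have hα2 : α ^ 2 = (1 + ε) * n := by
    simp only [α, mul_pow]; rw [Real.sq_sqrt (by positivity), Real.sq_sqrt (by positivity)]
  have hβ2 : β ^ 2 = (γ⁻¹ + 2 * ε) * n := by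
    simp only [β, mul_pow]; rw [Real.sq_sqrt (by positivity), Real.sq_sqrt (by positivity)]
  have hNn : (N n : ℝ) ≤ n := by exact_mod_cast hN n
  have hchi : ∀ (d : ℕ) (x : ℝ), (d : ℝ) ≤ (1 + ε + γ⁻¹) * n → d + ε * n ≤ x →
      gv (Fin d) {v | x < ∑ i, v i ^ 2} ≤ δ := by
    intro d x hd hx
    refine (measure_mono fun v hv => ?_).trans (htail n d (fun _ => 1) hd (by simp))
    have hv' : x < ∑ i, v i ^ 2 := hv
    show ε * n ≤ |∑ i, 1 * (v i ^ 2 - 1)|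
    refine le_trans ?_ (le_abs_self _)
    simp only [one_mul, Finset.sum_sub_distrib, Finset.sum_const, Finset.card_univ,
      Fintype.card_fin, nsmul_eq_mul, mul_one]
    linarith
  have hg : 0 < γ⁻¹ := by positivity
  have hmain := bigNorm_le (δ := δ) (q n + N n) (q n) (N n) α β 0 rfl (by positivity)
    (by positivity)
    (fun d hd => hchi d _ (by
      have : (d : ℝ) ≤ N n := by exact_mod_cast hd
      nlinarith) (by
      have : (d : ℝ) ≤ N n := by exact_mod_cast hd
      rw [hα2]; nlinarith))
    (fun d hd => hchi d _ (by
      have : (d : ℝ) ≤ q n := by exact_mod_cast hd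
      nlinarith) (by
      have : (d : ℝ) ≤ q n := by exact_mod_cast hd
      rw [hβ2]; nlinarith))
    (by simp; positivity)
  rw [← (gm_transpose (Fin (N n)) (Fin (q n))).measure_preimage
    (isOpen_bigNorm_right _ _).measurableSet.nullMeasurableSet] at hmain
  have hαβ : (α + β) ^ 2 ≤ B * n := by
    have : (α + β) ^ 2 = (Real.sqrt (1 + ε) + Real.sqrt (γ⁻¹ + 2 * ε)) ^ 2 * n := by
      simp only [α, β]
      rw [← add_mul, mul_pow, Real.sq_sqrt hn'.le]
    rw [this]
    exact mul_le_mul_of_nonneg_right hεB.le hn'.le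
  refine (measure_mono fun W hW => ?_).trans (hmain.trans ?_)
  · obtain ⟨y, hy⟩ := hW
    refine ⟨y, ?_⟩
    have hyn : 0 ≤ ∑ j, y j ^ 2 := Finset.sum_nonneg fun _ _ => sq_nonneg _
    have : (α + β) ^ 2 * ∑ j, y j ^ 2 ≤ B * n * ∑ j, y j ^ 2 := by gcongr
    simp only [Pi.zero_apply, zero_mul, Finset.sum_const_zero]
    simp only [mul_comm (y _)]
    nlinarith
  · rw [hδ, ← ENNReal.ofReal_natCast, ← ENNReal.ofReal_mul (by positivity)]
    apply ENNReal.ofReal_le_ofReal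
    push_cast
    have : (q n + N n : ℝ) ≤ (2 + ε + γ⁻¹) * n := by nlinarith
    calc (q n + N n : ℝ) * (2 * Real.exp (-(c * n)))
        ≤ ((2 + ε + γ⁻¹) * n) * (2 * Real.exp (-(c * n))) := by gcongr
      _ = _ := by ring

/-! ### The resolvent of a Gaussian sample covariance matrix -/

/-- Effect of a rank-one update on the quadratic form and on the trace of the inverse of a matrix
bounded below by `t` (Sherman–Morrison). -/
lemma rank_one_update {q : ℕ} {B : Matrix (Fin q) (Fin q) ℝ} (hB : B.PosDef) {t : ℝ} (ht : 0 < t)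
    (hBt : ∀ y, t * (y ⬝ᵥ y) ≤ y ⬝ᵥ B *ᵥ y) (v : Fin q → ℝ) :
    0 ≤ v ⬝ᵥ B⁻¹ *ᵥ v ∧
    v ⬝ᵥ (B + vecMulVec v v)⁻¹ *ᵥ v = (v ⬝ᵥ B⁻¹ *ᵥ v) / (1 + v ⬝ᵥ B⁻¹ *ᵥ v) ∧
    |(B + vecMulVec v v)⁻¹.trace - B⁻¹.trace| ≤ 1 / t := by
  have hdet : IsUnit B.det := (Matrix.isUnit_iff_isUnit_det _).mp hB.isUnit
  set a := v ⬝ᵥ B⁻¹ *ᵥ v with ha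
  set y := B⁻¹ *ᵥ v with hy
  have hsym : v ᵥ* B⁻¹ = y := by
    have h : (B⁻¹)ᵀ = B⁻¹ := by
      have := hB.inv.isHermitian
      rwa [Matrix.IsHermitian, Matrix.conjTranspose_eq_transpose_of_trivial] at this
    rw [hy, ← Matrix.mulVec_transpose, h]
  have hBy : B *ᵥ y = v := by
    rw [hy, Matrix.mulVec_mulVec, Matrix.mul_nonsing_inv _ hdet, Matrix.one_mulVec]
  have hyB : y ⬝ᵥ B *ᵥ y = a := by rw [hBy, dotProduct_comm]
  have hyy : 0 ≤ y ⬝ᵥ y := by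
    simp only [dotProduct]; exact Finset.sum_nonneg fun i _ => mul_self_nonneg _
  have hta : t * (y ⬝ᵥ y) ≤ a := hyB ▸ hBt y
  have ha0 : 0 ≤ a := le_trans (by positivity) hta
  have h1a : 1 + a ≠ 0 := by positivity
  have hinv : (B + vecMulVec v v)⁻¹ = B⁻¹ - (1 + a)⁻¹ • vecMulVec y y := by
    refine Matrix.inv_eq_right_inv ?_
    rw [Matrix.add_mul, Matrix.mul_sub, Matrix.mul_sub, Matrix.mul_nonsing_inv _ hdet,
      Matrix.mul_smul, Matrix.mul_smul, Matrix.mul_vecMulVec, hBy, Matrix.vecMulVec_mul, hsym,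
      Matrix.mul_vecMulVec, Matrix.vecMulVec_mulVec]
    have h2 : v ⬝ᵥ y = a := rfl
    rw [h2]
    ext i j
    simp only [Matrix.add_apply, Matrix.sub_apply, Matrix.smul_apply, Matrix.vecMulVec_apply,
      Pi.smul_apply, smul_eq_mul, MulOpposite.smul_eq_mul_unop, MulOpposite.unop_op]
    field_simp
    ring
  refine ⟨ha0, ?_, ?_⟩
  · rw [hinv, Matrix.sub_mulVec, Matrix.smul_mulVec, Matrix.vecMulVec_mulVec, dotProduct_sub,
      dotProduct_smul, dotProduct_smul]
    have h2 : v ⬝ᵥ y = a := rfl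
    have h3 : y ⬝ᵥ v = a := by rw [dotProduct_comm]
    rw [h3, h2]
    simp only [smul_eq_mul, MulOpposite.smul_eq_mul_unop, MulOpposite.unop_op]
    change a - _ = _
    field_simp
    ring
  · rw [hinv, Matrix.trace_sub, Matrix.trace_smul, Matrix.trace_vecMulVec, sub_sub_cancel_left,
      abs_neg, smul_eq_mul, abs_of_nonneg (by positivity), inv_mul_le_iff₀ (by positivity),
      mul_one_div, le_div_iff₀ ht]
    nlinarith

lemma eigenvalue_eq_form {q : ℕ} {R : Matrix (Fin q) (Fin q) ℝ} (hR : R.IsHermitian) (i : Fin q) :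
    ∃ y : Fin q → ℝ, y ⬝ᵥ y = 1 ∧ R *ᵥ y = hR.eigenvalues i • y ∧
      y ⬝ᵥ R *ᵥ y = hR.eigenvalues i := by
  refine ⟨(hR.eigenvectorBasis i).ofLp, ?_, hR.mulVec_eigenvectorBasis i, ?_⟩
  all_goals
    have h1 : (hR.eigenvectorBasis i).ofLp ⬝ᵥ (hR.eigenvectorBasis i).ofLp = 1 := by
      have := hR.eigenvectorBasis.norm_eq_one i
      rw [EuclideanSpace.norm_eq, Real.sqrt_eq_one] at this
      simpa [dotProduct, sq] using this
  · exact h1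
  · rw [hR.mulVec_eigenvectorBasis i, dotProduct_smul, h1]; simp

lemma form_eq_sum_eigenvalues {q : ℕ} {R : Matrix (Fin q) (Fin q) ℝ} (hR : R.IsHermitian)
    (w : Fin q → ℝ) : w ⬝ᵥ R *ᵥ w
      = ∑ i, hR.eigenvalues i * (hR.eigenvectorBasis.repr (WithLp.toLp 2 w)).ofLp i ^ 2 := by
  have hT : ∀ i, (hR.eigenvectorBasis.repr (WithLp.toLp 2 (R *ᵥ w))).ofLp i
      = hR.eigenvalues i * (hR.eigenvectorBasis.repr (WithLp.toLp 2 w)).ofLp i := by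
    intro i
    rw [OrthonormalBasis.repr_apply_apply, OrthonormalBasis.repr_apply_apply]
    simp only [EuclideanSpace.inner_eq_star_dotProduct, star_trivial]
    have hs : Rᵀ = R := by
      have := hR
      rwa [Matrix.IsHermitian, Matrix.conjTranspose_eq_transpose_of_trivial] at this
    rw [dotProduct_comm, dotProduct_mulVec, ← Matrix.mulVec_transpose, hs,
      hR.mulVec_eigenvectorBasis, smul_dotProduct, smul_eq_mul, dotProduct_comm]
  have h := hR.eigenvectorBasis.repr.inner_map_map (WithLp.toLp 2 (R *ᵥ w)) (WithLp.toLp 2 w)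
  simp only [EuclideanSpace.inner_eq_star_dotProduct, star_trivial] at h
  rw [← h]
  simp only [dotProduct, hT]
  exact Finset.sum_congr rfl fun i _ => by ring

/-- Concentration of a Gaussian quadratic form around its trace. -/
lemma quad_tail {K C ε : ℝ} (hK : 0 < K) (hC : 0 < C) (hε : 0 < ε) :
    ∃ c > 0, ∀ (n q : ℕ) (R : Matrix (Fin q) (Fin q) ℝ), (q : ℝ) ≤ C * n → R.IsHermitian →
      (∀ y, |y ⬝ᵥ R *ᵥ y| ≤ K * (y ⬝ᵥ y)) →
      gv (Fin q) {w | ε * n ≤ |w ⬝ᵥ R *ᵥ w - R.trace|} ≤ ENNReal.ofReal (2 * Real.exp (-(c * n))) := by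
  obtain ⟨c, hc, h⟩ := subExp_sq.tail hK hC hε
  refine ⟨c, hc, fun n q R hq hR hRK => ?_⟩
  have hl : ∀ i, |hR.eigenvalues i| ≤ K := by
    intro i
    obtain ⟨y, hy1, -, hy2⟩ := eigenvalue_eq_form hR i
    have := hRK y
    rwa [hy2, hy1, mul_one] at this
  refine le_trans (le_of_eq ?_) (h n q hR.eigenvalues hq hl)
  have hm : MeasurableSet {x : Fin q → ℝ | ε * n ≤ |∑ i, hR.eigenvalues i * (x i ^ 2 - 1)|} :=
    measurableSet_le (by fun_prop) (by fun_prop)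
  rw [← (gv_rotate hR.eigenvectorBasis.repr).measure_preimage hm.nullMeasurableSet]
  congr 1
  ext w
  simp only [Set.mem_preimage, Set.mem_ofPred_eq]
  rw [form_eq_sum_eigenvalues hR, hR.trace_eq_sum_eigenvalues]
  simp [mul_sub, Finset.sum_sub_distrib]

/-- The regularised sample covariance matrix `n⁻¹ VᵀV + t`. -/
def regCov {ι : Type*} [Fintype ι] {q : ℕ} (n : ℕ) (t : ℝ) (V : ι → Fin q → ℝ) :
    Matrix (Fin q) (Fin q) ℝ :=
  (1 / (n : ℝ)) • ((Matrix.of V)ᵀ * Matrix.of V) + t • 1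

lemma regCov_form {ι : Type*} [Fintype ι] {q : ℕ} (n : ℕ) (t : ℝ) (V : ι → Fin q → ℝ)
    (y : Fin q → ℝ) : y ⬝ᵥ regCov n t V *ᵥ y
      = (1 / (n : ℝ)) * ((Matrix.of V *ᵥ y) ⬝ᵥ (Matrix.of V *ᵥ y)) + t * (y ⬝ᵥ y) := by
  rw [regCov, Matrix.add_mulVec, dotProduct_add, Matrix.smul_mulVec, Matrix.smul_mulVec,
    Matrix.one_mulVec, dotProduct_smul, dotProduct_smul, ← Matrix.mulVec_mulVec,
    Matrix.dotProduct_mulVec, Matrix.vecMul_transpose]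
  simp

lemma dotProduct_self_nonneg' {ι : Type*} [Fintype ι] (y : ι → ℝ) : 0 ≤ y ⬝ᵥ y := by
  simp only [dotProduct]; exact Finset.sum_nonneg fun i _ => mul_self_nonneg _

lemma regCov_ge {ι : Type*} [Fintype ι] {q : ℕ} (n : ℕ) (t : ℝ) (V : ι → Fin q → ℝ)
    (y : Fin q → ℝ) : t * (y ⬝ᵥ y) ≤ y ⬝ᵥ regCov n t V *ᵥ y := by
  rw [regCov_form]
  have := dotProduct_self_nonneg' (Matrix.of V *ᵥ y)
  have : 0 ≤ (1 / (n : ℝ)) * ((Matrix.of V *ᵥ y) ⬝ᵥ (Matrix.of V *ᵥ y)) := by positivity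
  linarith

lemma regCov_posDef {ι : Type*} [Fintype ι] {q : ℕ} (n : ℕ) {t : ℝ} (ht : 0 < t)
    (V : ι → Fin q → ℝ) : (regCov n t V).PosDef := by
  refine Matrix.PosDef.of_dotProduct_mulVec_pos ?_ fun y hy => ?_
  · rw [Matrix.IsHermitian, Matrix.conjTranspose_eq_transpose_of_trivial]
    simp [regCov, Matrix.transpose_mul]
  · rw [star_trivial]
    refine lt_of_lt_of_le ?_ (regCov_ge n t V y)
    refine mul_pos ht (lt_of_le_of_ne (dotProduct_self_nonneg' y) fun h => hy ?_)
    exact dotProduct_self_eq_zero.mp h.symm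

lemma continuous_regCov_inv {ι : Type*} [Fintype ι] {q : ℕ} (n : ℕ) {t : ℝ} (ht : 0 < t) :
    Continuous fun V : ι → Fin q → ℝ => (regCov n t V)⁻¹ := by
  have h1 : Continuous fun V : ι → Fin q → ℝ => regCov n t V := by
    unfold regCov
    have h0 : Continuous fun V : ι → Fin q → ℝ => (Matrix.of V) := continuous_id
    exact ((h0.matrix_transpose.matrix_mul h0).const_smul (1 / (n : ℝ))).add continuous_const
  simp only [Matrix.inv_def, Ring.inverse_eq_inv']
  exact (h1.matrix_det.inv₀ fun V => (regCov_posDef n ht V).det_pos.ne').smul h1.matrix_adjugate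

lemma regCov_succAbove {N q : ℕ} (n : ℕ) (t : ℝ) (V : Fin (N + 1) → Fin q → ℝ) (j : Fin (N + 1)) :
    regCov n t V = regCov n t (fun a => V (j.succAbove a))
      + vecMulVec ((1 / Real.sqrt n) • V j) ((1 / Real.sqrt n) • V j) := by
  ext a b
  have h : (1 / Real.sqrt n) * (1 / Real.sqrt n) = 1 / (n : ℝ) := by
    rw [div_mul_div_comm, Real.mul_self_sqrt (by positivity), one_mul]
  simp only [regCov, Matrix.add_apply, Matrix.smul_apply, Matrix.mul_apply, Matrix.transpose_apply,
    Matrix.of_apply, Matrix.vecMulVec_apply, Pi.smul_apply, smul_eq_mul]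
  rw [Fin.sum_univ_succAbove _ j, mul_add, ← h]
  ring

lemma regCov_inv_form {ι : Type*} [Fintype ι] {q : ℕ} (n : ℕ) {t : ℝ} (ht : 0 < t)
    (V : ι → Fin q → ℝ) (y : Fin q → ℝ) :
    |y ⬝ᵥ (regCov n t V)⁻¹ *ᵥ y| ≤ (1 / t) * (y ⬝ᵥ y) := by
  have hP := regCov_posDef n ht V
  have hdet : IsUnit (regCov n t V).det := (Matrix.isUnit_iff_isUnit_det _).mp hP.isUnit
  set x := (regCov n t V)⁻¹ *ᵥ y with hx
  have hy : y = regCov n t V *ᵥ x := by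
    rw [hx, Matrix.mulVec_mulVec, Matrix.mul_nonsing_inv _ hdet, Matrix.one_mulVec]
  have h1 : t * (x ⬝ᵥ x) ≤ y ⬝ᵥ x := by
    have := regCov_ge n t V x
    rwa [← hy, dotProduct_comm x y] at this
  have hxx := dotProduct_self_nonneg' x
  rw [abs_of_nonneg (le_trans (by positivity) h1), one_div, ← div_eq_inv_mul, le_div_iff₀ ht]
  have h2 := dotProduct_self_nonneg' (y - t • x)
  simp only [sub_dotProduct, dotProduct_sub, smul_dotProduct, dotProduct_smul, smul_eq_mul,
    dotProduct_comm x y] at h2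
  nlinarith

/-- The error in the Marchenko–Pastur equation `q/n - t s = (N/n) s/(1+s)` for the normalised
trace `s` of the resolvent. -/
def mpErr {N q : ℕ} (n : ℕ) (t : ℝ) (V : Fin N → Fin q → ℝ) : ℝ :=
  (q : ℝ) / n - t * ((regCov n t V)⁻¹.trace / n)
    - ((N : ℝ) / n) * (((regCov n t V)⁻¹.trace / n) / (1 + (regCov n t V)⁻¹.trace / n))

/-- Leave-one-out comparison: if every row `V j` has a quadratic form `n⁻¹ V jᵀ R_j V j` within
`ε` of `n⁻¹ tr R_j`, with `R_j` the resolvent without that row, then the normalised trace `s` of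
the full resolvent almost satisfies the Marchenko–Pastur equation. -/
lemma mp_deterministic {N q n : ℕ} (hn : 0 < n) (hN : N + 1 ≤ n) {t ε : ℝ} (ht : 0 < t)
    (hε : 0 < ε) (V : Fin (N + 1) → Fin q → ℝ)
    (h : ∀ j, |V j ⬝ᵥ (regCov n t fun a => V (j.succAbove a))⁻¹ *ᵥ V j
      - (regCov n t fun a => V (j.succAbove a))⁻¹.trace| < ε * n) :
    |mpErr n t V| ≤ ε + 1 / (t * n) := by
  rw [mpErr]
  set s := (regCov n t V)⁻¹.trace / n with hsdef
  have hn' : (0:ℝ) < n := by exact_mod_cast hn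
  have hP := regCov_posDef n ht V
  have hdet : IsUnit (regCov n t V).det := (Matrix.isUnit_iff_isUnit_det _).mp hP.isUnit
  have hs0 : 0 ≤ s := by
    refine div_nonneg ?_ hn'.le
    exact hP.inv.posSemidef.trace_nonneg
  set v : Fin (N + 1) → Fin q → ℝ := fun j => (1 / Real.sqrt n) • V j with hv
  set Rj : Fin (N + 1) → Matrix (Fin q) (Fin q) ℝ :=
    fun j => (regCov n t fun a => V (j.succAbove a))⁻¹ with hRj
  set a : Fin (N + 1) → ℝ := fun j => v j ⬝ᵥ Rj j *ᵥ v j with ha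
  have hsq : (1 / Real.sqrt n) * (1 / Real.sqrt n) = 1 / (n : ℝ) := by
    rw [div_mul_div_comm, Real.mul_self_sqrt (by positivity), one_mul]
  have hscale : ∀ (M : Matrix (Fin q) (Fin q) ℝ) j, v j ⬝ᵥ M *ᵥ v j
      = (V j ⬝ᵥ M *ᵥ V j) / n := by
    intro M j
    simp only [hv, Matrix.mulVec_smul, dotProduct_smul, smul_dotProduct, smul_eq_mul]
    rw [← mul_assoc, hsq]; ring
  have hupd := fun j => rank_one_update (regCov_posDef n ht fun a => V (j.succAbove a)) ht
    (regCov_ge n t _) (v j)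
  have hfull : ∀ j, regCov n t V = (regCov n t fun a => V (j.succAbove a)) + vecMulVec (v j) (v j) :=
    fun j => regCov_succAbove n t V j
  have htr : (q : ℝ) - t * (regCov n t V)⁻¹.trace = ∑ j, a j / (1 + a j) := by
    have h1 : ∀ j, a j / (1 + a j) = v j ⬝ᵥ (regCov n t V)⁻¹ *ᵥ v j := by
      intro j; rw [hfull j]; exact (hupd j).2.1.symm
    have h2 : (regCov n t V * (regCov n t V)⁻¹).trace = q := by
      rw [Matrix.mul_nonsing_inv _ hdet]; simp
    have h3 : regCov n t V = (∑ j, vecMulVec (v j) (v j)) + t • 1 := by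
      rw [regCov]; congr 1
      ext a b
      simp only [Matrix.smul_apply, Matrix.mul_apply, Matrix.transpose_apply,
        Matrix.of_apply, Matrix.vecMulVec_apply, Matrix.sum_apply, smul_eq_mul, hv, Pi.smul_apply]
      rw [Finset.mul_sum, ← hsq]
      exact Finset.sum_congr rfl fun j _ => by ring
    nth_rw 1 [h3] at h2
    rw [Matrix.add_mul, Matrix.trace_add, Matrix.smul_mul, Matrix.one_mul, Matrix.trace_smul,
      Finset.sum_mul, Matrix.trace_sum] at h2
    simp only [h1]
    rw [← h2]
    simp only [Matrix.vecMulVec_mul, Matrix.trace_vecMulVec, smul_eq_mul, add_sub_cancel_right]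
    exact Finset.sum_congr rfl fun j _ => by rw [Matrix.dotProduct_mulVec, dotProduct_comm]
  have hclose : ∀ j, |a j / (1 + a j) - s / (1 + s)| ≤ ε + 1 / (t * n) := by
    intro j
    have ha0 : 0 ≤ a j := (hupd j).1
    have h1 : |a j - s| ≤ ε + 1 / (t * n) := by
      have h2 : |a j - (Rj j).trace / n| ≤ ε := by
        have : a j = (V j ⬝ᵥ Rj j *ᵥ V j) / n := hscale _ j
        rw [this, ← sub_div, abs_div, abs_of_pos hn', div_le_iff₀ hn']
        exact (h j).le
      have h3 : |(Rj j).trace / n - s| ≤ 1 / (t * n) := by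
        rw [← sub_div, abs_div, abs_of_pos hn', div_le_iff₀ hn', abs_sub_comm]
        have := (hupd j).2.2
        rw [← hfull j] at this
        refine this.trans (le_of_eq ?_)
        field_simp
      calc |a j - s| = |(a j - (Rj j).trace / n) + ((Rj j).trace / n - s)| := by ring_nf
        _ ≤ _ := abs_add_le _ _
        _ ≤ _ := add_le_add h2 h3
    refine le_trans ?_ h1
    have h4 : a j / (1 + a j) - s / (1 + s) = (a j - s) / ((1 + a j) * (1 + s)) := by
      field_simp; ring
    rw [h4, abs_div]
    refine div_le_self (abs_nonneg _) ?_
    rw [abs_of_pos (by positivity)]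
    nlinarith [mul_nonneg ha0 hs0]
  have hfin : (q : ℝ) / n - t * s - (((N + 1 : ℕ) : ℝ) / n) * (s / (1 + s))
      = (∑ j, (a j / (1 + a j) - s / (1 + s))) / n := by
    rw [Finset.sum_sub_distrib, ← htr]
    simp only [Finset.sum_const, Finset.card_univ, Fintype.card_fin, nsmul_eq_mul, s]
    ring
  rw [hfin, abs_div, abs_of_pos hn', div_le_iff₀ hn']
  calc |∑ j, (a j / (1 + a j) - s / (1 + s))| ≤ ∑ j, |a j / (1 + a j) - s / (1 + s)| :=
        Finset.abs_sum_le_sum_abs _ _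
    _ ≤ ∑ _j : Fin (N + 1), (ε + 1 / (t * n)) := Finset.sum_le_sum fun j _ => hclose j
    _ = ((N + 1 : ℕ) : ℝ) * (ε + 1 / (t * n)) := by
        rw [Finset.sum_const, Finset.card_univ, Fintype.card_fin, nsmul_eq_mul]
    _ ≤ n * (ε + 1 / (t * n)) := by
        have : ((N + 1 : ℕ) : ℝ) ≤ n := by exact_mod_cast hN
        gcongr
    _ = _ := by ring

/-- The Marchenko–Pastur equation holds for the resolvent up to a small error, with probability
exponentially close to one. -/
lemma mp_tail {t ε C : ℝ} (ht : 0 < t) (hε : 0 < ε) (hC : 0 < C) :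
    ∃ c > 0, ∃ n₀ : ℕ, ∀ n N q : ℕ, n₀ ≤ n → 0 < N → N ≤ n → (q : ℝ) ≤ C * n →
      gm (Fin N) (Fin q) {V | ε ≤ |mpErr n t V|}
      ≤ ENNReal.ofReal (2 * n * Real.exp (-(c * n))) := by
  obtain ⟨c, hc, hquad⟩ := quad_tail (K := 1 / t) (C := C) (ε := ε / 4) (by positivity) hC
    (by positivity)
  obtain ⟨n₀, hn₀⟩ := exists_nat_gt (4 / (t * ε))
  refine ⟨c, hc, n₀, ?_⟩
  rintro n (_ | N) q hn0 hN0 hN hq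
  · exact absurd hN0 (lt_irrefl 0)
  have hn : 0 < n := by omega
  have hn' : (0:ℝ) < n := by exact_mod_cast hn
  have hnbig : 4 / (t * ε) < n := hn₀.trans_le (by exact_mod_cast hn0)
  have hsmall : ε / 4 + 1 / (t * n) < ε := by
    have : 1 / (t * n) < ε / 4 := by
      rw [div_lt_iff₀ (by positivity)] at hnbig ⊢
      nlinarith
    linarith
  set F : Fin (N + 1) → (Fin (N + 1) → Fin q → ℝ) → ℝ := fun j V =>
    |V j ⬝ᵥ (regCov n t fun a => V (j.succAbove a))⁻¹ *ᵥ V j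
      - (regCov n t fun a => V (j.succAbove a))⁻¹.trace| with hF
  have hone : ∀ j, gm (Fin (N + 1)) (Fin q) {V | ε / 4 * n ≤ F j V}
      ≤ ENNReal.ofReal (2 * Real.exp (-(c * n))) := by
    intro j
    set S : Set ((Fin q → ℝ) × (Fin N → Fin q → ℝ)) :=
      {x | ε / 4 * n ≤ |x.1 ⬝ᵥ (regCov n t x.2)⁻¹ *ᵥ x.1 - (regCov n t x.2)⁻¹.trace|} with hS
    have hSm : MeasurableSet S := by
      have hc1 : Continuous fun x : (Fin q → ℝ) × (Fin N → Fin q → ℝ) => (regCov n t x.2)⁻¹ :=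
        (continuous_regCov_inv n ht).comp continuous_snd
      have hc2 : Continuous fun x : (Fin q → ℝ) × (Fin N → Fin q → ℝ) =>
          |x.1 ⬝ᵥ (regCov n t x.2)⁻¹ *ᵥ x.1 - (regCov n t x.2)⁻¹.trace| :=
        ((continuous_fst.dotProduct (hc1.matrix_mulVec continuous_fst)).sub
          hc1.matrix_trace).abs
      exact (isClosed_le continuous_const hc2).measurableSet
    have hpres := measurePreserving_piFinSuccAbove (fun _ : Fin (N + 1) => gv (Fin q)) j
    have hpre : {V | ε / 4 * n ≤ F j V}
        = MeasurableEquiv.piFinSuccAbove (fun _ => Fin q → ℝ) j ⁻¹' S := rfl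
    rw [hpre, hpres.measure_preimage hSm.nullMeasurableSet]
    refine prod_le_of_sections _ _ hSm fun V => ?_
    have := hquad n q (regCov n t V)⁻¹ hq (regCov_posDef n ht V).inv.isHermitian
      (regCov_inv_form n ht V)
    exact this
  calc _ ≤ gm (Fin (N + 1)) (Fin q) (⋃ j, {V | ε / 4 * n ≤ F j V}) := by
        refine measure_mono fun V hV => ?_
        by_contra hcon
        simp only [Set.mem_iUnion, Set.mem_ofPred_eq, not_exists, not_le] at hcon
        have := mp_deterministic hn hN ht (by positivity : 0 < ε / 4) V hcon
        have hV' : ε ≤ |mpErr n t V| := hV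
        exact absurd (hV'.trans this) (not_le.mpr hsmall)
    _ ≤ ∑ j, gm (Fin (N + 1)) (Fin q) {V | ε / 4 * n ≤ F j V} := measure_iUnion_fintype_le _ _
    _ ≤ ∑ _j : Fin (N + 1), ENNReal.ofReal (2 * Real.exp (-(c * n))) :=
        Finset.sum_le_sum fun j _ => hone j
    _ ≤ _ := by
        rw [Finset.sum_const, Finset.card_univ, Fintype.card_fin, nsmul_eq_mul,
          ← ENNReal.ofReal_natCast, ← ENNReal.ofReal_mul (by positivity)]
        apply ENNReal.ofReal_le_ofReal
        have : ((N + 1 : ℕ) : ℝ) ≤ n := by exact_mod_cast hN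
        calc ((N + 1 : ℕ) : ℝ) * (2 * Real.exp (-(c * n))) ≤ n * (2 * Real.exp (-(c * n))) := by
              gcongr
          _ = _ := by ring

/-! ### The ordered eigenvalues -/

lemma isHermitian_gram {ι : Type*} [Fintype ι] {q : ℕ} (V : Matrix ι (Fin q) ℝ) :
    (Vᵀ * V).IsHermitian := by
  rw [Matrix.IsHermitian, Matrix.conjTranspose_eq_transpose_of_trivial]
  simp [Matrix.transpose_mul]

lemma length_eigsDesc {q : ℕ} {A : Matrix (Fin q) (Fin q) ℝ} (hA : A.IsHermitian) :
    (eigsDesc A).length = q := by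
  simp only [eigsDesc, hA, dite_true]
  simp

lemma perm_eigsDesc {q : ℕ} {A : Matrix (Fin q) (Fin q) ℝ} (hA : A.IsHermitian) :
    (eigsDesc A).Perm (List.ofFn hA.eigenvalues) := by
  simp only [eigsDesc, hA, dite_true]
  exact List.perm_insertionSort _ _

lemma ithEigDesc_eq_getElem {q : ℕ} {A : Matrix (Fin q) (Fin q) ℝ} (hA : A.IsHermitian)
    (α : Fin q) : ithEigDesc A α = (eigsDesc A)[α.1]'(by rw [length_eigsDesc hA]; exact α.2) := by
  rw [ithEigDesc, List.getD_eq_getElem]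

lemma ithEigDesc_mem {q : ℕ} {A : Matrix (Fin q) (Fin q) ℝ} (hA : A.IsHermitian) (α : Fin q) :
    ∃ i, ithEigDesc A α = hA.eigenvalues i := by
  rw [ithEigDesc_eq_getElem hA]
  have h : (eigsDesc A)[α.1]'(by rw [length_eigsDesc hA]; exact α.2) ∈ List.ofFn hA.eigenvalues :=
    (perm_eigsDesc hA).subset (List.getElem_mem _)
  obtain ⟨i, hi⟩ := (List.mem_ofFn' _ _).mp h
  exact ⟨i, hi.symm⟩

lemma ithEigDesc_antitone {q : ℕ} {A : Matrix (Fin q) (Fin q) ℝ} (hA : A.IsHermitian) :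
    Antitone fun α : Fin q => ithEigDesc A α := by
  intro a b hab
  have hs : (eigsDesc A).Pairwise (· ≥ ·) := by
    simp only [eigsDesc, hA, dite_true]
    exact List.pairwise_insertionSort _ _
  rcases hab.lt_or_eq with h | h
  · simp only [ithEigDesc_eq_getElem hA]
    exact List.pairwise_iff_getElem.mp hs _ _ _ _ h
  · rw [h]

lemma sum_ithEigDesc {q : ℕ} {A : Matrix (Fin q) (Fin q) ℝ} (hA : A.IsHermitian) (f : ℝ → ℝ) :
    ∑ α : Fin q, f (ithEigDesc A α) = ∑ i, f (hA.eigenvalues i) := by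
  have h1 : ((eigsDesc A).map f).sum = ∑ i, f (hA.eigenvalues i) := by
    rw [((perm_eigsDesc hA).map f).sum_eq, List.map_ofFn, List.sum_ofFn]; rfl
  have h2 : List.ofFn (fun α : Fin q => ithEigDesc A α) = eigsDesc A := by
    refine List.ext_getElem (by simp [length_eigsDesc hA]) fun i h h' => ?_
    rw [List.getElem_ofFn, ithEigDesc_eq_getElem hA]
  rw [← h1, ← h2, List.map_ofFn, List.sum_ofFn]; rfl

lemma trace_conj_diagonal {q : ℕ} (U : unitary (Matrix (Fin q) (Fin q) ℝ)) (d : Fin q → ℝ) :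
    (Unitary.conjStarAlgAut ℝ _ U (diagonal d)).trace = ∑ i, d i := by
  rw [Unitary.conjStarAlgAut_apply, Matrix.trace_mul_cycle, Unitary.coe_star_mul_self, Matrix.one_mul,
    Matrix.trace_diagonal]

lemma trace_pow_eq_sum {q : ℕ} {A : Matrix (Fin q) (Fin q) ℝ} (hA : A.IsHermitian) (m : ℕ) :
    (A ^ m).trace = ∑ i, hA.eigenvalues i ^ m := by
  have h := hA.spectral_theorem
  conv_lhs => rw [h]
  rw [← map_pow, Matrix.diagonal_pow, trace_conj_diagonal]
  simp

/-- The trace of a resolvent in terms of the eigenvalues. -/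
lemma trace_regCov_inv {ι : Type*} [Fintype ι] {q : ℕ} (n : ℕ) {t : ℝ} (ht : 0 < t)
    (V : ι → Fin q → ℝ) :
    (regCov n t V)⁻¹.trace
      = ∑ α : Fin q, (ithEigDesc ((Matrix.of V)ᵀ * Matrix.of V) α / n + t)⁻¹ := by
  set A := (Matrix.of V)ᵀ * Matrix.of V with hAdef
  have hA : A.IsHermitian := isHermitian_gram _
  rw [sum_ithEigDesc hA fun x => (x / n + t)⁻¹]
  have hpos : ∀ i, 0 ≤ hA.eigenvalues i := by
    intro i
    obtain ⟨y, -, -, hy⟩ := eigenvalue_eq_form hA i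
    rw [← hy, hAdef, ← Matrix.mulVec_mulVec, Matrix.dotProduct_mulVec, Matrix.vecMul_transpose]
    exact dotProduct_self_nonneg' _
  set φ := Unitary.conjStarAlgAut ℝ (Matrix (Fin q) (Fin q) ℝ) hA.eigenvectorUnitary with hφ
  have h : A = φ (diagonal hA.eigenvalues) := hA.spectral_theorem
  have h1 : regCov n t V = φ (diagonal fun i => hA.eigenvalues i / n + t) := by
    have h2 : (diagonal fun i => hA.eigenvalues i / n + t)
        = (1 / (n : ℝ)) • diagonal hA.eigenvalues + t • (1 : Matrix (Fin q) (Fin q) ℝ) := by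
      ext a b
      by_cases hab : a = b
      · subst hab; simp; ring
      · simp [hab]
    rw [h2, map_add, map_smul, map_smul, map_one, ← h, regCov]
  have h3 : (regCov n t V)⁻¹ = φ (diagonal fun i => (hA.eigenvalues i / n + t)⁻¹) := by
    refine Matrix.inv_eq_right_inv ?_
    rw [h1, ← map_mul, Matrix.diagonal_mul_diagonal]
    have : (fun i => (hA.eigenvalues i / n + t) * (hA.eigenvalues i / n + t)⁻¹) = fun _ => 1 := by
      ext i
      have := hpos i
      exact mul_inv_cancel₀ (by positivity)
    rw [this, Matrix.diagonal_one, map_one]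
  rw [h3, hφ, trace_conj_diagonal]

lemma ithEigDesc_gram_nonneg {ι : Type*} [Fintype ι] {q : ℕ} (V : Matrix ι (Fin q) ℝ)
    (α : Fin q) : 0 ≤ ithEigDesc (Vᵀ * V) α := by
  obtain ⟨i, hi⟩ := ithEigDesc_mem (isHermitian_gram V) α
  obtain ⟨y, -, -, hy⟩ := eigenvalue_eq_form (isHermitian_gram V) i
  rw [hi, ← hy, ← Matrix.mulVec_mulVec, Matrix.dotProduct_mulVec, Matrix.vecMul_transpose]
  exact dotProduct_self_nonneg' _

lemma ithEigDesc_gram_le {ι : Type*} [Fintype ι] {q : ℕ} (V : Matrix ι (Fin q) ℝ) {b : ℝ}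
    (h : ¬ ∃ y : Fin q → ℝ, b * ∑ j, y j ^ 2 < ∑ i, (∑ j, V i j * y j) ^ 2)
    (α : Fin q) : ithEigDesc (Vᵀ * V) α ≤ b := by
  obtain ⟨i, hi⟩ := ithEigDesc_mem (isHermitian_gram V) α
  obtain ⟨y, hy1, -, hy⟩ := eigenvalue_eq_form (isHermitian_gram V) i
  rw [hi, ← hy, ← Matrix.mulVec_mulVec, Matrix.dotProduct_mulVec, Matrix.vecMul_transpose]
  push Not at h
  have h2 := h y
  have h3 : ∑ j, y j ^ 2 = 1 := by rw [← hy1]; simp [dotProduct, sq]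
  rw [h3, mul_one] at h2
  simpa [dotProduct, Matrix.mulVec, sq] using h2

/-- The ordered eigenvalues of a Gram matrix are measurable functions of its entries: the `α`-th
one is the limit of `(∑_{β ≥ α} λ_β ^ m) ^ (1/m)`, and the power sums are traces of powers. -/
lemma measurable_ithEigDesc {ι : Type*} [Fintype ι] {q : ℕ} (α : Fin q) :
    Measurable fun V : ι → Fin q → ℝ => ithEigDesc ((Matrix.of V)ᵀ * Matrix.of V) α := by
  set lam : Fin q → (ι → Fin q → ℝ) → ℝ :=
    fun a V => ithEigDesc ((Matrix.of V)ᵀ * Matrix.of V) a with hlam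
  have hp : ∀ m : ℕ, Measurable fun V : ι → Fin q → ℝ => ∑ a, lam a V ^ m := by
    intro m
    have h0 : Continuous fun V : ι → Fin q → ℝ => (Matrix.of V) := continuous_id
    have hc : Continuous fun V : ι → Fin q → ℝ =>
        (((Matrix.of V)ᵀ * Matrix.of V) ^ m).trace :=
      ((h0.matrix_transpose.matrix_mul h0).pow m).matrix_trace
    convert hc.measurable using 2 with V
    rw [trace_pow_eq_sum (isHermitian_gram _),
      ← sum_ithEigDesc (isHermitian_gram (Matrix.of V)) fun x => x ^ m]
  obtain ⟨a, ha⟩ := α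
  induction a using Nat.strong_induction_on with
  | _ a ih =>
    set α : Fin q := ⟨a, ha⟩
    have hlow : ∀ m : ℕ, Measurable fun V => ∑ b ∈ Finset.univ.filter (· < α), lam b V ^ m := by
      intro m
      refine Finset.measurable_fun_sum _ fun b hb => ?_
      have hb' : b < α := (Finset.mem_filter.mp hb).2
      exact (ih b.1 hb' b.2).pow_const m
    refine measurable_of_tendsto_metrizable (f := fun (m : ℕ) V =>
      (∑ b, lam b V ^ (m + 1) - ∑ b ∈ Finset.univ.filter (· < α), lam b V ^ (m + 1))
        ^ (((m + 1 : ℕ) : ℝ)⁻¹)) (fun m => ((hp _).sub (hlow _)).pow_const _) ?_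
    rw [tendsto_pi_nhds]
    intro V
    have hnn : ∀ b, 0 ≤ lam b V := fun b => ithEigDesc_gram_nonneg (Matrix.of V) b
    have hanti : Antitone fun b => lam b V := ithEigDesc_antitone (isHermitian_gram (Matrix.of V))
    have hsplit : ∀ m : ℕ, ∑ b, lam b V ^ m - ∑ b ∈ Finset.univ.filter (· < α), lam b V ^ m
        = ∑ b ∈ Finset.univ.filter (fun b => ¬ b < α), lam b V ^ m := by
      intro m
      rw [← Finset.sum_filter_add_sum_filter_not Finset.univ (· < α)]; ring
    have hlo : ∀ m : ℕ, lam α V ^ (m + 1)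
        ≤ ∑ b ∈ Finset.univ.filter (fun b => ¬ b < α), lam b V ^ (m + 1) := by
      intro m
      exact Finset.single_le_sum (f := fun b => lam b V ^ (m + 1))
        (fun b _ => pow_nonneg (hnn b) _) (by simp)
    have hup : ∀ m : ℕ, ∑ b ∈ Finset.univ.filter (fun b => ¬ b < α), lam b V ^ (m + 1)
        ≤ q * lam α V ^ (m + 1) := by
      intro m
      calc _ ≤ ∑ b ∈ Finset.univ.filter (fun b => ¬ b < α), lam α V ^ (m + 1) := by
            refine Finset.sum_le_sum fun b hb => ?_
            exact pow_le_pow_left₀ (hnn b) (hanti (not_lt.mp (Finset.mem_filter.mp hb).2)) _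
        _ ≤ _ := by
            rw [Finset.sum_const, nsmul_eq_mul]
            refine mul_le_mul_of_nonneg_right ?_ (pow_nonneg (hnn α) _)
            have := Finset.card_filter_le (Finset.univ : Finset (Fin q)) (fun b => ¬ b < α)
            simp only [Finset.card_univ, Fintype.card_fin] at this
            exact_mod_cast this
    have hq : (0:ℝ) < q := by exact_mod_cast (Nat.zero_le a).trans_lt ha
    refine tendsto_of_tendsto_of_tendsto_of_le_of_le (g := fun _ => lam α V)
      (h := fun m : ℕ => (q : ℝ) ^ (((m + 1 : ℕ) : ℝ)⁻¹) * lam α V) tendsto_const_nhds ?_ ?_ ?_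
    · have h1 : Tendsto (fun m : ℕ => (((m + 1 : ℕ) : ℝ)⁻¹)) atTop (𝓝 0) := by
        have := tendsto_one_div_add_atTop_nhds_zero_nat (𝕜 := ℝ)
        simpa using this
      have h2 : Tendsto (fun m : ℕ => (q : ℝ) ^ (((m + 1 : ℕ) : ℝ)⁻¹)) atTop (𝓝 1) := by
        have := (Real.continuousAt_const_rpow hq.ne' (b := 0)).tendsto.comp h1
        simpa [Function.comp_def] using this
      simpa using h2.mul_const (lam α V)
    · intro m
      dsimp only
      rw [hsplit]
      calc lam α V = (lam α V ^ (m + 1)) ^ (((m + 1 : ℕ) : ℝ)⁻¹) :=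
            (Real.pow_rpow_inv_natCast (hnn α) (Nat.succ_ne_zero m)).symm
        _ ≤ _ := Real.rpow_le_rpow (pow_nonneg (hnn α) _) (hlo m) (by positivity)
    · intro m
      dsimp only
      rw [hsplit]
      calc _ ≤ (q * lam α V ^ (m + 1)) ^ (((m + 1 : ℕ) : ℝ)⁻¹) :=
            Real.rpow_le_rpow (Finset.sum_nonneg fun b _ => pow_nonneg (hnn b) _) (hup m)
              (by positivity)
        _ = _ := by
            rw [Real.mul_rpow hq.le (pow_nonneg (hnn α) _),
              Real.pow_rpow_inv_natCast (hnn α) (Nat.succ_ne_zero m)]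

/-! ### The quadratic equation of the Marchenko–Pastur Stieltjes transform -/

/-- The semicircle integral `∫ √(1 - x²) / (x + A)`, computed from the explicit antiderivative
`A arcsin x + √(1 - x²) - √(A² - 1) arcsin ((A x + 1) / (x + A))`. -/
lemma semicircle_integral {A : ℝ} (hA : 1 ≤ A) :
    IntervalIntegrable (fun x => √(1 - x ^ 2) / (x + A)) volume (-1) 1 ∧
    ∫ x in (-1:ℝ)..1, √(1 - x ^ 2) / (x + A) = Real.pi * (A - √(A ^ 2 - 1)) := by
  obtain ⟨G, hGc, hGd, hG⟩ : ∃ G : ℝ → ℝ, ContinuousOn G (Set.Icc (-1) 1) ∧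
      (∀ x ∈ Set.Ioo (-1:ℝ) 1, HasDerivAt G ((A ^ 2 - 1) / ((x + A) * √(1 - x ^ 2))) x) ∧
      G 1 - G (-1) = √(A ^ 2 - 1) * Real.pi := by
    rcases hA.eq_or_lt with rfl | hA
    · refine ⟨fun _ => 0, continuousOn_const, fun x _ => ?_, by simp⟩
      simpa using hasDerivAt_const x (0:ℝ)
    · refine ⟨fun x => √(A ^ 2 - 1) * Real.arcsin ((A * x + 1) / (x + A)), ?_, ?_, ?_⟩
      · refine continuousOn_const.mul (Real.continuous_arcsin.comp_continuousOn ?_)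
        refine ContinuousOn.div (by fun_prop) (by fun_prop) fun x hx => ?_
        have := hx.1; intro h; linarith
      · intro x hx
        have hxA : 0 < x + A := by linarith [hx.1]
        have h1 : 0 < 1 - x ^ 2 := by nlinarith [hx.1, hx.2]
        have hs : 0 < A ^ 2 - 1 := by nlinarith
        have key : 1 - ((A * x + 1) / (x + A)) ^ 2 = (A ^ 2 - 1) * (1 - x ^ 2) / (x + A) ^ 2 := by
          field_simp; ring
        have hpos : 0 < 1 - ((A * x + 1) / (x + A)) ^ 2 := by rw [key]; positivity
        have hd : HasDerivAt (fun x => (A * x + 1) / (x + A))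
            ((A * 1 * (x + A) - (A * x + 1) * 1) / (x + A) ^ 2) x :=
          HasDerivAt.div (((hasDerivAt_id x).const_mul A).add_const 1)
            ((hasDerivAt_id x).add_const A) hxA.ne'
        have ha := (Real.hasDerivAt_arcsin (x := (A * x + 1) / (x + A))
          (by intro h; rw [h] at hpos; norm_num at hpos)
          (by intro h; rw [h] at hpos; norm_num at hpos)).comp x hd
        have := ha.const_mul √(A ^ 2 - 1)
        refine HasDerivAt.congr_deriv this ?_
        rw [key, Real.sqrt_div (by positivity), Real.sqrt_mul hs.le, Real.sqrt_sq hxA.le]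
        have e1 : 0 < √(A ^ 2 - 1) := Real.sqrt_pos.mpr hs
        have e2 : 0 < √(1 - x ^ 2) := Real.sqrt_pos.mpr h1
        field_simp
        ring
      · have e1 : (A * 1 + 1) / (1 + A) = 1 := by
          rw [div_eq_one_iff_eq (by linarith)]; ring
        have e2 : (A * (-1) + 1) / (-1 + A) = -1 := by
          rw [div_eq_iff (by linarith)]; ring
        dsimp only
        rw [e1, e2, Real.arcsin_one, Real.arcsin_neg_one]; ring
  set F : ℝ → ℝ := fun x => A * Real.arcsin x + √(1 - x ^ 2) - G x
  have hFc : ContinuousOn F (Set.Icc (-1) 1) := by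
    refine ContinuousOn.sub (Continuous.continuousOn ?_) hGc
    exact (continuous_const.mul Real.continuous_arcsin).add (by fun_prop)
  have hFd : ∀ x ∈ Set.Ioo (-1:ℝ) 1, HasDerivAt F (√(1 - x ^ 2) / (x + A)) x := by
    intro x hx
    have hxA : 0 < x + A := by linarith [hx.1]
    have h1 : 0 < 1 - x ^ 2 := by nlinarith [hx.1, hx.2]
    have ha := (Real.hasDerivAt_arcsin hx.1.ne' hx.2.ne).const_mul A
    have hb : HasDerivAt (fun x : ℝ => √(1 - x ^ 2)) (-(2 * x) / (2 * √(1 - x ^ 2))) x := by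
      have := ((hasDerivAt_pow 2 x).const_sub 1).sqrt h1.ne'
      simpa using this
    have := (ha.add hb).sub (hGd x hx)
    refine HasDerivAt.congr_deriv this ?_
    have e2 : 0 < √(1 - x ^ 2) := Real.sqrt_pos.mpr h1
    have e3 : √(1 - x ^ 2) ^ 2 = 1 - x ^ 2 := Real.sq_sqrt h1.le
    field_simp
    rw [e3]; ring
  have hintg : IntervalIntegrable (fun x => √(1 - x ^ 2) / (x + A)) volume (-1) 1 := by
    refine intervalIntegral.intervalIntegrable_deriv_of_nonneg (g := F) ?_ ?_ ?_
    · rwa [Set.uIcc_of_le (by norm_num)]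
    · intro x hx
      exact hFd x (by simpa using hx)
    · intro x hx
      have hx : x ∈ Set.Ioo (-1:ℝ) 1 := by simpa using hx
      exact div_nonneg (Real.sqrt_nonneg _) (by linarith [hx.1])
  refine ⟨hintg, ?_⟩
  rw [intervalIntegral.integral_eq_sub_of_hasDerivAt_of_le (by norm_num) hFc hFd hintg]
  simp only [F, Real.arcsin_one, Real.arcsin_neg_one]
  have : G 1 = G (-1) + √(A ^ 2 - 1) * Real.pi := by linarith
  rw [this]
  norm_num
  ring

/-- Outside `(-1, 1)` the normalised semicircle integral is a root of `κ² - 2 A κ + 1`. -/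
lemma semicircle_quadratic {A : ℝ} (hA : 1 ≤ |A|) :
    IntervalIntegrable (fun x => √(1 - x ^ 2) / (x + A)) volume (-1) 1 ∧
    ∃ κ, ∫ x in (-1:ℝ)..1, √(1 - x ^ 2) / (x + A) = Real.pi * κ ∧ κ ^ 2 - 2 * A * κ + 1 = 0 := by
  have hsq : √(A ^ 2 - 1) ^ 2 = A ^ 2 - 1 := Real.sq_sqrt (by
    have : 1 ≤ |A| ^ 2 := one_le_pow₀ hA
    rw [sq_abs] at this; linarith)
  rcases le_abs.mp hA with h | h
  · obtain ⟨h1, h2⟩ := semicircle_integral h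
    exact ⟨h1, _, h2, by linear_combination hsq⟩
  · obtain ⟨h1, h2⟩ := semicircle_integral h
    have e : (fun x : ℝ => √(1 - x ^ 2) / (x + A))
        = fun x => -(fun x => √(1 - x ^ 2) / (x + -A)) (-x) := by
      funext x
      simp only [neg_sq]
      rw [← neg_add, div_neg, neg_neg]
    refine ⟨?_, A + √(A ^ 2 - 1), ?_, by linear_combination hsq⟩
    · rw [e]
      have := (h1.comp_mul_left (c := -1)).neg
      have h3 := this.symm
      simp at h3
      simpa [Pi.neg_def] using h3
    · rw [e, intervalIntegral.integral_neg,
        intervalIntegral.integral_comp_neg (fun x => √(1 - x ^ 2) / (x + -A)), neg_neg, h2]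
      rw [neg_sq]; ring

lemma measurable_mpDensity (γ : ℝ) : Measurable (mpDensity γ) := by
  unfold mpDensity
  refine Measurable.ite measurableSet_Icc ?_ measurable_const
  fun_prop

lemma aGamma_nonneg (γ : ℝ) : 0 ≤ aGamma γ := sq_nonneg _

lemma mpDensity_nonneg {γ : ℝ} (hγ : 1 ≤ γ) (t : ℝ) : 0 ≤ mpDensity γ t := by
  unfold mpDensity
  split_ifs with h
  · have : 0 ≤ t := (aGamma_nonneg γ).trans h.1
    have := Real.pi_pos
    positivity
  · exact le_rfl

lemma integrable_mpDensity {γ : ℝ} (hγ : 1 ≤ γ) : Integrable (mpDensity γ) := by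
  have hb : 0 ≤ bGamma γ := sq_nonneg _
  have h1 : IntegrableOn (fun t : ℝ => γ * √(bGamma γ) * t ^ (-(1/2) : ℝ))
      (Set.Ioc 0 (bGamma γ)) := by
    have := (intervalIntegral.intervalIntegrable_rpow' (a := 0) (b := bGamma γ)
      (r := -(1/2)) (by norm_num)).const_mul (γ * √(bGamma γ))
    rwa [intervalIntegrable_iff_integrableOn_Ioc_of_le hb] at this
  have h2 : Integrable ((Set.Ioc 0 (bGamma γ)).indicator
      fun t : ℝ => γ * √(bGamma γ) * t ^ (-(1/2) : ℝ)) :=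
    h1.integrable_indicator measurableSet_Ioc
  refine h2.mono' (measurable_mpDensity γ).aestronglyMeasurable (Eventually.of_forall fun t => ?_)
  rw [Real.norm_of_nonneg (mpDensity_nonneg hγ t)]
  unfold mpDensity
  split_ifs with h
  · have h0 : 0 ≤ t := (aGamma_nonneg γ).trans h.1
    rcases h0.eq_or_lt with h00 | h00
    · rw [← h00]; simp
    · rw [Set.indicator_of_mem (show t ∈ Set.Ioc 0 (bGamma γ) from ⟨h00, h.2⟩)]
      have e1 : √((bGamma γ - t) * (t - aGamma γ)) ≤ √(bGamma γ) * √t := by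
        rw [← Real.sqrt_mul hb]
        apply Real.sqrt_le_sqrt
        have := aGamma_nonneg γ
        exact mul_le_mul (by linarith) (by linarith) (by linarith [h.1]) hb
      have e2 : t ^ (-(1/2) : ℝ) = 1 / √t := by
        rw [Real.rpow_neg h0, ← Real.sqrt_eq_rpow, one_div]
      rw [e2, div_le_iff₀ (by have := Real.pi_pos; positivity)]
      have e3 : γ * √(bGamma γ) * (1 / √t) * (2 * Real.pi * t)
          = (2 * Real.pi) * (γ * (√(bGamma γ) * √t)) := by
        have hs : 0 < √t := Real.sqrt_pos.mpr h00
        have : √t ^ 2 = t := Real.sq_sqrt h0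
        field_simp
        rw [this]
      rw [e3]
      have e4 : 0 ≤ γ * (√(bGamma γ) * √t) := by positivity
      have e5 : γ * √((bGamma γ - t) * (t - aGamma γ)) ≤ γ * (√(bGamma γ) * √t) := by gcongr
      have := Real.pi_gt_three
      nlinarith
  · exact Set.indicator_nonneg (fun t ht => by
      have : 0 ≤ t := ht.1.le
      positivity) t

lemma isFiniteMeasure_mpMeasure {γ : ℝ} (hγ : 1 ≤ γ) : IsFiniteMeasure (mpMeasure γ) :=
  isFiniteMeasure_withDensity_ofReal (integrable_mpDensity hγ).2

lemma mpMeasure_compl {γ B : ℝ} (hB : bGamma γ ≤ B) : mpMeasure γ (Set.Icc 0 B)ᶜ = 0 := by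
  rw [mpMeasure, withDensity_apply _ measurableSet_Icc.compl]
  rw [setLIntegral_eq_zero_iff measurableSet_Icc.compl
    (measurable_mpDensity γ).ennreal_ofReal]
  refine Eventually.of_forall fun t ht => ?_
  have : t ∉ Set.Icc (aGamma γ) (bGamma γ) := fun h =>
    ht ⟨(aGamma_nonneg γ).trans h.1, h.2.trans hB⟩
  simp [mpDensity, this]

/-- The Marchenko–Pastur Stieltjes transform after the affine change of variable carrying the
support to `[-1, 1]`. -/
lemma mpStieltjes_eq {γ : ℝ} (hγ : 1 ≤ γ) (z : ℝ) :
    mpStieltjes γ z = γ / (2 * Real.pi) * ∫ x in (-1:ℝ)..1,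
      √(1 - x ^ 2) / ((x + (1 + γ⁻¹) / (2 / √γ)) * (x + (1 + γ⁻¹ - z) / (2 / √γ))) := by
  have hγ0 : 0 < γ := by linarith
  have hs : 0 < √γ := Real.sqrt_pos.mpr hγ0
  have hss : √γ ^ 2 = γ := Real.sq_sqrt hγ0.le
  set r : ℝ := 2 / √γ with hr
  have hr0 : 0 < r := by positivity
  have ha : aGamma γ = (1 + γ⁻¹) + r * (-1) := by
    rw [aGamma, hr]
    have : γ⁻¹ = (1 / √γ) ^ 2 := by rw [div_pow, hss]; simp
    rw [this]; ring
  have hb : bGamma γ = (1 + γ⁻¹) + r * 1 := by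
    rw [bGamma, hr]
    have : γ⁻¹ = (1 / √γ) ^ 2 := by rw [div_pow, hss]; simp
    rw [this]; ring
  have h1 : mpStieltjes γ z = ∫ t in aGamma γ..bGamma γ,
      γ * √((bGamma γ - t) * (t - aGamma γ)) / (2 * Real.pi * t) * (t - z)⁻¹ := by
    rw [mpStieltjes, mpMeasure, integral_withDensity_eq_integral_toReal_smul
      (measurable_mpDensity γ).ennreal_ofReal (by simp),
      intervalIntegral.integral_of_le (by rw [ha, hb]; linarith), ← integral_Icc_eq_integral_Ioc,
      ← integral_indicator measurableSet_Icc]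
    congr 1
    funext t
    rw [ENNReal.toReal_ofReal (mpDensity_nonneg hγ t)]
    by_cases h : t ∈ Set.Icc (aGamma γ) (bGamma γ)
    · rw [Set.indicator_of_mem h, mpDensity, if_pos h, smul_eq_mul]
    · rw [Set.indicator_of_notMem h, mpDensity, if_neg h, zero_smul]
  rw [h1]
  have h2 := intervalIntegral.integral_comp_add_mul (a := (-1:ℝ)) (b := 1)
    (fun t => γ * √((bGamma γ - t) * (t - aGamma γ)) / (2 * Real.pi * t) * (t - z)⁻¹)
    hr0.ne' (1 + γ⁻¹)
  rw [← ha, ← hb] at h2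
  have h3 : (∫ t in aGamma γ..bGamma γ,
      γ * √((bGamma γ - t) * (t - aGamma γ)) / (2 * Real.pi * t) * (t - z)⁻¹)
      = r * ∫ x in (-1:ℝ)..1, (fun t => γ * √((bGamma γ - t) * (t - aGamma γ)) /
          (2 * Real.pi * t) * (t - z)⁻¹) (1 + γ⁻¹ + r * x) := by
    rw [h2, smul_eq_mul, mul_inv_cancel_left₀ hr0.ne']
  rw [h3, ← intervalIntegral.integral_const_mul, ← intervalIntegral.integral_const_mul]
  congr 1
  funext x
  have e1 : (bGamma γ - (1 + γ⁻¹ + r * x)) * (1 + γ⁻¹ + r * x - aGamma γ)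
      = r ^ 2 * (1 - x ^ 2) := by rw [ha, hb]; ring
  have e2 : x + (1 + γ⁻¹) / r = (1 + γ⁻¹ + r * x) / r := by field_simp; ring
  have e3 : x + (1 + γ⁻¹ - z) / r = (1 + γ⁻¹ + r * x - z) / r := by field_simp; ring
  dsimp only
  rw [e1, e2, e3, Real.sqrt_mul (sq_nonneg r), Real.sqrt_sq hr0.le]
  set c := 1 + γ⁻¹ + r * x
  clear_value r c
  simp only [div_eq_mul_inv, mul_inv, inv_inv]
  ring

/-- The quadratic equation satisfied by the Marchenko–Pastur Stieltjes transform off the support. -/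
lemma mp_equation {γ : ℝ} (hγ : 1 ≤ γ) {z : ℝ} (hz : z < 0 ∨ bGamma γ < z) :
    γ⁻¹ * z * mpStieltjes γ z ^ 2 + (z + γ⁻¹ - 1) * mpStieltjes γ z + 1 = 0 := by
  have hγ0 : 0 < γ := by linarith
  have hs : 0 < √γ := Real.sqrt_pos.mpr hγ0
  have hss : √γ ^ 2 = γ := Real.sq_sqrt hγ0.le
  set s := √γ with hsdef
  have hs1 : 1 ≤ s := by rw [hsdef]; exact Real.one_le_sqrt.mpr hγ
  have hb : bGamma γ = (1 + γ⁻¹) + 2 / s := by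
    rw [bGamma, ← hsdef, ← hss]; field_simp; ring
  have hb0 : 0 < bGamma γ := by rw [hb]; positivity
  have hz0 : z ≠ 0 := by rcases hz with h | h <;> [exact h.ne; exact (hb0.trans h).ne']
  set A0 := (1 + γ⁻¹) / (2 / s) with hA0
  set Az := (1 + γ⁻¹ - z) / (2 / s) with hAz
  have hA0' : A0 = (s + s⁻¹) / 2 := by rw [hA0, ← hss]; field_simp
  have hA0z : Az - A0 = - z * s / 2 := by rw [hA0, hAz]; field_simp; ring
  have hA01 : 1 ≤ A0 := by
    rw [hA0']
    have : s * s⁻¹ = 1 := mul_inv_cancel₀ hs.ne'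
    have h2 : 0 < s⁻¹ := by positivity
    nlinarith [sq_nonneg (s - 1)]
  obtain ⟨i0, hI0⟩ := semicircle_integral hA01
  have hAz1 : 1 ≤ |Az| := by
    rcases hz with h | h
    · refine le_abs.mpr (Or.inl ?_)
      have : 0 < - z * s / 2 := by have := mul_pos (neg_pos.mpr h) hs; linarith
      linarith
    · refine le_abs.mpr (Or.inr ?_)
      rw [hAz, ← neg_div, le_div_iff₀ (by positivity)]
      rw [hb] at h; linarith
  obtain ⟨iz, κ, hIz, hκ⟩ := semicircle_quadratic hAz1
  have hr : √(A0 ^ 2 - 1) = (s - s⁻¹) / 2 := by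
    have : A0 ^ 2 - 1 = ((s - s⁻¹) / 2) ^ 2 := by rw [hA0']; field_simp; ring
    rw [this, Real.sqrt_sq]
    have : s⁻¹ ≤ 1 := inv_le_one_of_one_le₀ hs1
    linarith
  have hm := mpStieltjes_eq hγ z
  rw [← hsdef, ← hA0, ← hAz] at hm
  have hsub : ∫ x in (-1:ℝ)..1, √(1 - x ^ 2) / ((x + A0) * (x + Az))
      = (Az - A0)⁻¹ * (Real.pi * s⁻¹ - Real.pi * κ) := by
    have : Real.pi * s⁻¹ = Real.pi * (A0 - √(A0 ^ 2 - 1)) := by rw [hr, hA0']; ring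
    rw [this, ← hI0, ← hIz, ← intervalIntegral.integral_sub i0 iz,
      ← intervalIntegral.integral_const_mul]
    refine intervalIntegral.integral_congr fun x hx => ?_
    rw [Set.uIcc_of_le (by norm_num)] at hx
    have hd : Az - A0 ≠ 0 := by
      rw [hA0z]
      have := hs.ne'
      simp [hz0, this]
    have hzero : x ^ 2 = 1 → √(1 - x ^ 2) = 0 := by intro h; simp [h]
    by_cases h1 : x ^ 2 = 1
    · simp [hzero h1]
    · have hlt : -1 < x ∧ x < 1 := by
        constructor
        · refine lt_of_le_of_ne hx.1 fun h => h1 (by rw [← h]; norm_num)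
        · refine lt_of_le_of_ne hx.2 fun h => h1 (by rw [h]; norm_num)
      have n0 : x + A0 ≠ 0 := by intro h; linarith [hlt.1]
      have nz : x + Az ≠ 0 := by
        intro h
        rcases le_abs.mp hAz1 with h' | h' <;> linarith [hlt.1, hlt.2]
      field_simp
      ring
  rw [hsub, hA0z] at hm
  have hpi := Real.pi_pos
  have hκm : κ = s⁻¹ * (1 + z * mpStieltjes γ z) := by
    rw [hm, ← hss]; field_simp; ring
  set m := mpStieltjes γ z
  rw [hκm, hAz, ← hss] at hκ
  have : z * (γ⁻¹ * z * m ^ 2 + (z + γ⁻¹ - 1) * m + 1) = 0 := by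
    rw [← hss]
    field_simp at hκ ⊢
    linear_combination hκ
  exact (mul_eq_zero.mp this).resolve_left hz0

lemma mpStieltjes_neg_nonneg {γ : ℝ} {t : ℝ} (ht : 0 < t) :
    0 ≤ mpStieltjes γ (-t) := by
  refine integral_nonneg_of_ae ?_
  have h : ∀ᵐ x ∂(mpMeasure γ), x ∈ Set.Icc 0 (bGamma γ) := by
    rw [ae_iff]; exact mpMeasure_compl le_rfl
  filter_upwards [h] with x hx
  have := hx.1
  simp only [Pi.zero_apply]
  exact inv_nonneg.mpr (by linarith)

/-! ### From Stieltjes transforms to continuous test functions -/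

/-- The resolvent functions `x ↦ 1 / (x + t)` with `t` a positive rational. -/
def resolvents : Set (ℝ → ℝ) := {g | ∃ t : ℚ, 0 < t ∧ g = fun x => (x + (t : ℝ))⁻¹}

/-- `f` is a uniform limit on `[0, B]` of linear combinations of resolvent functions. -/
def ResolventApprox (B : ℝ) (f : ℝ → ℝ) : Prop :=
  ∀ ε > 0, ∃ v ∈ Submodule.span ℝ resolvents, ∀ x ∈ Set.Icc 0 B, |f x - v x| ≤ ε

lemma ResolventApprox.of_mem {B : ℝ} {f : ℝ → ℝ} (hf : f ∈ Submodule.span ℝ resolvents) :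
    ResolventApprox B f := fun ε hε => ⟨f, hf, fun x _ => by simpa using hε.le⟩

lemma ResolventApprox.add {B : ℝ} {f g : ℝ → ℝ} (hf : ResolventApprox B f)
    (hg : ResolventApprox B g) : ResolventApprox B (fun x => f x + g x) := by
  intro ε hε
  obtain ⟨u, hu, h1⟩ := hf (ε / 2) (by linarith)
  obtain ⟨v, hv, h2⟩ := hg (ε / 2) (by linarith)
  refine ⟨u + v, Submodule.add_mem _ hu hv, fun x hx => ?_⟩
  have := abs_add_le (f x - u x) (g x - v x)
  have e : f x + g x - (u + v) x = (f x - u x) + (g x - v x) := by simp; ring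
  rw [e]; linarith [h1 x hx, h2 x hx]

lemma ResolventApprox.smul {B : ℝ} {f : ℝ → ℝ} (hf : ResolventApprox B f) (a : ℝ) :
    ResolventApprox B (fun x => a * f x) := by
  intro ε hε
  obtain ⟨u, hu, h1⟩ := hf (ε / (|a| + 1)) (by positivity)
  refine ⟨a • u, Submodule.smul_mem _ a hu, fun x hx => ?_⟩
  have e : a * f x - (a • u) x = a * (f x - u x) := by simp; ring
  rw [e, abs_mul]
  calc |a| * |f x - u x| ≤ (|a| + 1) * (ε / (|a| + 1)) := by
        refine mul_le_mul (by linarith) (h1 x hx) (abs_nonneg _) (by positivity)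
    _ = ε := by field_simp

lemma ResolventApprox.limit {B : ℝ} {f : ℝ → ℝ}
    (h : ∀ ε > 0, ∃ g, ResolventApprox B g ∧ ∀ x ∈ Set.Icc 0 B, |f x - g x| ≤ ε) :
    ResolventApprox B f := by
  intro ε hε
  obtain ⟨g, hg, h1⟩ := h (ε / 2) (by linarith)
  obtain ⟨v, hv, h2⟩ := hg (ε / 2) (by linarith)
  refine ⟨v, hv, fun x hx => ?_⟩
  have := abs_sub_le (f x) (g x) (v x)
  linarith [h1 x hx, h2 x hx]

/-- For `t ≠ 1` a partial fraction decomposition; `t = 1` is a uniform limit of such. -/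
lemma ResolventApprox.mul_resolvent {B : ℝ} {t : ℚ} (ht : 0 < t) :
    ResolventApprox B (fun x => (x + 1)⁻¹ * (x + (t : ℝ))⁻¹) := by
  have hne : ∀ s : ℚ, 0 < s → s ≠ 1 →
      ResolventApprox B (fun x => (x + 1)⁻¹ * (x + (s : ℝ))⁻¹) := by
    intro s hs hs1
    have hs1' : (s : ℝ) - 1 ≠ 0 := by
      rw [sub_ne_zero]; exact_mod_cast hs1
    have h1 : (fun x : ℝ => (x + ((1 : ℚ) : ℝ))⁻¹) ∈ Submodule.span ℝ resolvents :=
      Submodule.subset_span ⟨1, one_pos, rfl⟩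
    have h2 : (fun x : ℝ => (x + (s : ℝ))⁻¹) ∈ Submodule.span ℝ resolvents :=
      Submodule.subset_span ⟨s, hs, rfl⟩
    intro ε hε
    refine ⟨((s : ℝ) - 1)⁻¹ • ((fun x : ℝ => (x + ((1 : ℚ) : ℝ))⁻¹) - fun x : ℝ => (x + (s : ℝ))⁻¹),
      Submodule.smul_mem _ _ (Submodule.sub_mem _ h1 h2), fun x hx => ?_⟩
    have hs' : (0:ℝ) < s := by exact_mod_cast hs
    have hx1 : 0 < x + 1 := by linarith [hx.1]
    have hx2 : 0 < x + s := by linarith [hx.1]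
    have : (x + 1)⁻¹ * (x + (s : ℝ))⁻¹ - (((s : ℝ) - 1)⁻¹ •
        ((fun x : ℝ => (x + ((1 : ℚ) : ℝ))⁻¹) - fun x : ℝ => (x + (s : ℝ))⁻¹)) x = 0 := by
      simp only [Pi.smul_apply, Pi.sub_apply, smul_eq_mul, Rat.cast_one]
      field_simp
      ring
    rw [this, abs_zero]; exact hε.le
  rcases ne_or_eq t 1 with h | rfl
  · exact hne t ht h
  · refine ResolventApprox.limit fun ε hε => ?_
    obtain ⟨s, hs1, hs2⟩ := exists_rat_btwn (show (1:ℝ) < 1 + ε by linarith)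
    have hs1' : (1 : ℚ) < s := by exact_mod_cast hs1
    refine ⟨_, hne s (by linarith) hs1'.ne', fun x hx => ?_⟩
    have hx1 : 1 ≤ x + 1 := by linarith [hx.1]
    have hx2 : 1 ≤ x + s := by linarith [hx.1]
    have e : (x + 1)⁻¹ * (x + ((1 : ℚ) : ℝ))⁻¹ - (x + 1)⁻¹ * (x + (s : ℝ))⁻¹
        = (s - 1) * ((x + 1)⁻¹ * (x + 1)⁻¹ * (x + (s : ℝ))⁻¹) := by
      rw [Rat.cast_one]
      field_simp
      ring
    have i1 : (x + 1)⁻¹ ≤ 1 := inv_le_one_of_one_le₀ hx1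
    have i2 : (x + (s : ℝ))⁻¹ ≤ 1 := inv_le_one_of_one_le₀ hx2
    have i3 : 0 ≤ (x + 1)⁻¹ := by positivity
    have i4 : 0 ≤ (x + (s : ℝ))⁻¹ := by positivity
    have i5 : (x + 1)⁻¹ * (x + 1)⁻¹ * (x + (s : ℝ))⁻¹ ≤ 1 :=
      mul_le_one₀ (mul_le_one₀ i1 i3 i1) i4 i2
    rw [e, abs_of_nonneg (mul_nonneg (by linarith) (by positivity))]
    calc _ ≤ ((s : ℝ) - 1) * 1 := mul_le_mul_of_nonneg_left i5 (by linarith)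
      _ ≤ ε := by linarith

lemma ResolventApprox.mul {B : ℝ} {f : ℝ → ℝ} (hf : ResolventApprox B f) :
    ResolventApprox B (fun x => (x + 1)⁻¹ * f x) := by
  have hspan : ∀ v ∈ Submodule.span ℝ resolvents,
      ResolventApprox B (fun x => (x + 1)⁻¹ * v x) := by
    intro v hv
    induction hv using Submodule.span_induction with
    | mem v h =>
      obtain ⟨t, ht, rfl⟩ := h
      exact ResolventApprox.mul_resolvent ht
    | zero =>
      have := ResolventApprox.of_mem (B := B) (Submodule.zero_mem (Submodule.span ℝ resolvents))
      simpa [Pi.zero_def] using this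
    | add u v _ _ hu hv =>
      have := hu.add hv
      simpa [mul_add] using this
    | smul a v _ hv =>
      have := hv.smul a
      simpa [mul_left_comm] using this
  refine ResolventApprox.limit fun ε hε => ?_
  obtain ⟨v, hv, h⟩ := hf ε hε
  refine ⟨_, hspan v hv, fun x hx => ?_⟩
  have hx1 : 1 ≤ x + 1 := by linarith [hx.1]
  have i1 : (x + 1)⁻¹ ≤ 1 := inv_le_one_of_one_le₀ hx1
  rw [← mul_sub, abs_mul, abs_of_nonneg (by positivity)]
  calc _ ≤ 1 * ε := mul_le_mul i1 (h x hx) (abs_nonneg _) zero_le_one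
    _ = ε := one_mul _

/-- Weierstrass approximation in the variable `(x + 1)⁻¹`. -/
lemma ResolventApprox.of_continuousOn {B : ℝ} (hB : 0 ≤ B) {f : ℝ → ℝ}
    (hf : ContinuousOn f (Set.Icc 0 B)) : ResolventApprox B f := by
  have hpow : ∀ k : ℕ, ResolventApprox B (fun x => (x + 1)⁻¹ * ((x + 1)⁻¹) ^ k) := by
    intro k
    induction k with
    | zero =>
      have : ResolventApprox B (fun x : ℝ => (x + ((1 : ℚ) : ℝ))⁻¹) :=
        ResolventApprox.of_mem (Submodule.subset_span ⟨1, one_pos, rfl⟩)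
      simpa using this
    | succ k ih =>
      simpa [pow_succ', mul_assoc] using ih.mul
  have hpoly : ∀ P : Polynomial ℝ,
      ResolventApprox B (fun x => (x + 1)⁻¹ * P.eval ((x + 1)⁻¹)) := by
    intro P
    induction P using Polynomial.induction_on' with
    | add P Q hP hQ =>
      have := hP.add hQ
      simpa [mul_add] using this
    | monomial k a =>
      have := (hpow k).smul a
      simpa [mul_left_comm] using this
  have hB1 : 0 < (B + 1)⁻¹ := by positivity
  have hh : ContinuousOn (fun u => f (u⁻¹ - 1) / u) (Set.Icc (B + 1)⁻¹ 1) := by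
    have hne : ∀ u ∈ Set.Icc (B + 1)⁻¹ 1, u ≠ 0 := fun u hu => (hB1.trans_le hu.1).ne'
    refine ContinuousOn.div (hf.comp ?_ ?_) continuousOn_id hne
    · exact (continuousOn_id.inv₀ hne).sub continuousOn_const
    · intro u hu
      have hu0 : 0 < u := hB1.trans_le hu.1
      have h1 : 1 ≤ u⁻¹ := (one_le_inv₀ hu0).mpr hu.2
      have h2 : u⁻¹ ≤ B + 1 := inv_le_of_inv_le₀ (by linarith) hu.1
      exact ⟨by linarith, by linarith⟩
  refine ResolventApprox.limit fun ε hε => ?_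
  obtain ⟨P, hP⟩ := exists_polynomial_near_of_continuousOn _ _ _ hh ε hε
  refine ⟨_, hpoly P, fun x hx => ?_⟩
  have hx1 : 1 ≤ x + 1 := by linarith [hx.1]
  have i1 : (x + 1)⁻¹ ≤ 1 := inv_le_one_of_one_le₀ hx1
  have i2 : (B + 1)⁻¹ ≤ (x + 1)⁻¹ := inv_anti₀ (by linarith) (by linarith [hx.2])
  have := hP _ ⟨i2, i1⟩
  rw [inv_inv, add_sub_cancel_right] at this
  have e : f x = (x + 1)⁻¹ * (f x / (x + 1)⁻¹) := by
    field_simp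
  rw [abs_sub_comm] at this
  calc |f x - (x + 1)⁻¹ * P.eval ((x + 1)⁻¹)|
      = (x + 1)⁻¹ * |f x / (x + 1)⁻¹ - P.eval ((x + 1)⁻¹)| := by
        conv_lhs => rw [e]
        rw [← mul_sub, abs_mul, abs_of_nonneg (by positivity)]
    _ ≤ 1 * ε := mul_le_mul i1 this.le (abs_nonneg _) zero_le_one
    _ = ε := one_mul _

lemma integrable_of_continuousOn_Icc {B : ℝ} {ν : Measure ℝ} [IsFiniteMeasure ν]
    (hν : ν (Set.Icc 0 B)ᶜ = 0) {f : ℝ → ℝ} (hf : ContinuousOn f (Set.Icc 0 B)) :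
    Integrable f ν := by
  have : ν.restrict (Set.Icc 0 B) = ν := Measure.restrict_eq_self_of_ae_mem (by
    rw [ae_iff]; exact hν)
  rw [← this]
  exact hf.integrableOn_compact isCompact_Icc

/-- If the Stieltjes transforms of point clouds in `[0, B]` converge at the negative rationals,
then the averages of every continuous function converge. -/
lemma tendsto_of_stieltjes {B C κ : ℝ} (hB : 0 ≤ B) (q : ℕ → ℕ) (lam : ∀ n, Fin (q n) → ℝ)
    (hq : ∀ᶠ n in atTop, (q n : ℝ) ≤ C * n)
    (hlam : ∀ᶠ n in atTop, ∀ α, lam n α ∈ Set.Icc 0 B)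
    (ν : Measure ℝ) [IsFiniteMeasure ν] (hν : ν (Set.Icc 0 B)ᶜ = 0)
    (h : ∀ t : ℚ, 0 < t → Tendsto (fun n : ℕ => (∑ α, (lam n α + (t : ℝ))⁻¹) / (n : ℝ)) atTop
      (𝓝 (κ * ∫ x, (x + (t : ℝ))⁻¹ ∂ν)))
    {f : ℝ → ℝ} (hf : ContinuousOn f (Set.Icc 0 B)) :
    Tendsto (fun n : ℕ => (∑ α, f (lam n α)) / (n : ℝ)) atTop (𝓝 (κ * ∫ x, f x ∂ν)) := by
  have hspan : ∀ v ∈ Submodule.span ℝ resolvents, ContinuousOn v (Set.Icc 0 B) ∧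
      Tendsto (fun n : ℕ => (∑ α, v (lam n α)) / (n : ℝ)) atTop (𝓝 (κ * ∫ x, v x ∂ν)) := by
    intro v hv
    induction hv using Submodule.span_induction with
    | mem v hv =>
      obtain ⟨t, ht, rfl⟩ := hv
      refine ⟨ContinuousOn.inv₀ (by fun_prop) fun x hx => ?_, h t ht⟩
      have : (0:ℝ) < t := by exact_mod_cast ht
      linarith [hx.1]
    | zero => exact ⟨continuousOn_const, by simp⟩
    | add u v _ _ hu hv =>
      refine ⟨hu.1.add hv.1, ?_⟩
      have := hu.2.add hv.2
      simp only [Pi.add_apply, Finset.sum_add_distrib, add_div]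
      rwa [integral_add (integrable_of_continuousOn_Icc hν hu.1)
        (integrable_of_continuousOn_Icc hν hv.1), mul_add]
    | smul a v _ hv =>
      refine ⟨hv.1.const_smul a, ?_⟩
      have := hv.2.const_mul a
      simp only [Pi.smul_apply, smul_eq_mul, ← Finset.mul_sum, mul_div_assoc]
      rw [integral_const_mul, mul_left_comm]
      exact this
  rw [Metric.tendsto_nhds]
  intro δ hδ
  set D : ℝ := |C| + |κ| * ν.real Set.univ + 1
  have hD : 0 < D := by positivity
  obtain ⟨v, hv, hvf⟩ := ResolventApprox.of_continuousOn hB hf (δ / (2 * D)) (by positivity)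
  obtain ⟨hvc, hvt⟩ := hspan v hv
  set ε := δ / (2 * D)
  have hε : 0 < ε := by positivity
  have hlim : |κ * ∫ x, f x ∂ν - κ * ∫ x, v x ∂ν| ≤ |κ| * (ε * ν.real Set.univ) := by
    rw [← mul_sub, ← integral_sub (integrable_of_continuousOn_Icc hν hf)
      (integrable_of_continuousOn_Icc hν hvc), abs_mul]
    refine mul_le_mul_of_nonneg_left ?_ (abs_nonneg _)
    refine norm_integral_le_of_norm_le_const (f := fun x => f x - v x) ?_
    have : ∀ᵐ x ∂ν, x ∈ Set.Icc 0 B := by rw [ae_iff]; exact hν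
    filter_upwards [this] with x hx using hvf x hx
  filter_upwards [hq, hlam, Metric.tendsto_nhds.mp hvt (δ / 2) (by linarith), eventually_gt_atTop 0]
    with n h1 h2 h3 h4
  have hn : (0:ℝ) < n := by exact_mod_cast h4
  rw [Real.dist_eq] at h3 ⊢
  have e1 : |(∑ α, f (lam n α)) / (n : ℝ) - (∑ α, v (lam n α)) / (n : ℝ)| ≤ ε * |C| := by
    rw [← sub_div, ← Finset.sum_sub_distrib, abs_div, abs_of_pos hn, div_le_iff₀ hn]
    calc _ ≤ ∑ α, |f (lam n α) - v (lam n α)| := Finset.abs_sum_le_sum_abs _ _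
      _ ≤ ∑ α : Fin (q n), ε := Finset.sum_le_sum fun α _ => hvf _ (h2 α)
      _ = q n * ε := by simp
      _ ≤ (|C| * n) * ε := by
          refine mul_le_mul_of_nonneg_right (h1.trans ?_) hε.le
          exact mul_le_mul_of_nonneg_right (le_abs_self C) hn.le
      _ = _ := by ring
  have e2 : ε * |C| + |κ| * (ε * ν.real Set.univ) < δ / 2 := by
    have : ε * D = δ / 2 := by simp only [ε]; field_simp
    simp only [D] at this
    nlinarith
  have t1 := abs_sub_le ((∑ α, f (lam n α)) / (n : ℝ)) ((∑ α, v (lam n α)) / (n : ℝ))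
    (κ * ∫ x, f x ∂ν)
  have t2 := abs_sub_le ((∑ α, v (lam n α)) / (n : ℝ)) (κ * ∫ x, v x ∂ν) (κ * ∫ x, f x ∂ν)
  rw [abs_sub_comm (κ * ∫ x, v x ∂ν)] at t2
  linarith

/-! ### The Marchenko–Pastur law for the block model -/

lemma IIDGaussian.aemeasurable {Ω ι : Type*} [MeasurableSpace Ω] [Fintype ι] {P : Measure Ω}
    {X : Ω → ι → ℝ} {v : NNReal} (h : IIDGaussian P X v) : AEMeasurable X P := by
  have : NeZero (Measure.map X P) := by
    rw [h]; infer_instance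
  exact aemeasurable_of_map_neZero this

lemma IIDGaussian.aemeasurable_matrix {Ω ι κ : Type*} [MeasurableSpace Ω] [Fintype ι] [Fintype κ]
    {P : Measure Ω} {X : Ω → Matrix ι κ ℝ} (h : IIDGaussian P (fun ω => matEntries (X ω)) 1) :
    AEMeasurable X P :=
  (gv_curry ι κ).measurable.comp_aemeasurable h.aemeasurable

lemma IIDGaussian.map_matrix {Ω ι κ : Type*} [MeasurableSpace Ω] [Fintype ι] [Fintype κ]
    {P : Measure Ω} {X : Ω → Matrix ι κ ℝ} (h : IIDGaussian P (fun ω => matEntries (X ω)) 1) :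
    Measure.map X P = gm ι κ := by
  rw [← (gv_curry ι κ).map_eq]
  have h' : Measure.map (fun ω => matEntries (X ω)) P = gv (ι × κ) := h
  rw [← h', AEMeasurable.map_map_of_aemeasurable (gv_curry ι κ).measurable.aemeasurable
    h.aemeasurable]
  rfl

lemma IIDGaussian.measure_le {Ω ι κ : Type*} [MeasurableSpace Ω] [Fintype ι] [Fintype κ]
    {P : Measure Ω} {X : Ω → Matrix ι κ ℝ} (h : IIDGaussian P (fun ω => matEntries (X ω)) 1)
    (S : Set (ι → κ → ℝ)) : P {ω | X ω ∈ S} ≤ gm ι κ S := by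
  rw [← h.map_matrix]
  exact Measure.le_map_apply h.aemeasurable_matrix S

/-- The strictly monotone map `s ↦ t s + s / (1 + s)` expands distances by at least `t`. -/
lemma tendsto_of_mp_map {t s₀ : ℝ} (ht : 0 < t) (hs₀ : 0 ≤ s₀) {s : ℕ → ℝ} (hs : ∀ n, 0 ≤ s n)
    (h : Tendsto (fun n => t * s n + s n / (1 + s n)) atTop (𝓝 (t * s₀ + s₀ / (1 + s₀)))) :
    Tendsto s atTop (𝓝 s₀) := by
  rw [tendsto_iff_dist_tendsto_zero] at h ⊢
  have h' := h.const_mul t⁻¹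
  rw [mul_zero] at h'
  refine squeeze_zero (fun _ => dist_nonneg) (fun n => ?_) h'
  have h1 : 0 < 1 + s n := by linarith [hs n]
  have h2 : 0 < 1 + s₀ := by linarith
  have e : t * s n + s n / (1 + s n) - (t * s₀ + s₀ / (1 + s₀))
      = (s n - s₀) * (t + 1 / ((1 + s n) * (1 + s₀))) := by
    field_simp; ring
  rw [Real.dist_eq, Real.dist_eq, e, abs_mul, abs_of_pos (a := t + _) (by positivity)]
  rw [le_inv_mul_iff₀ ht, mul_comm t]
  refine mul_le_mul_of_nonneg_left ?_ (abs_nonneg _)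
  have : 0 < 1 / ((1 + s n) * (1 + s₀)) := by positivity
  linarith

lemma mp_root {γ t : ℝ} (hγ : 1 ≤ γ) (ht : 0 < t) :
    t * (γ⁻¹ * mpStieltjes γ (-t)) + (γ⁻¹ * mpStieltjes γ (-t)) / (1 + γ⁻¹ * mpStieltjes γ (-t))
      = γ⁻¹ := by
  have h := mp_equation hγ (z := -t) (Or.inl (by linarith))
  have hm := mpStieltjes_neg_nonneg (γ := γ) ht
  set m := mpStieltjes γ (-t)
  have hγ0 : 0 < γ := by linarith
  have h1 : 0 < 1 + γ⁻¹ * m := by positivity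
  field_simp at h ⊢
  linear_combination -h

namespace BlockModel

variable {k : ℕ} {γ : ℝ} {p : ℕ → ℕ} {Ω : Type*} [MeasurableSpace Ω] {P : Measure Ω}
  {μ : Fin k → ℝ}

lemma tendsto_p_div (M : BlockModel k γ p Ω P μ) (hγ : 1 ≤ γ) :
    Tendsto (fun n : ℕ => (p n : ℝ) / n) atTop (𝓝 γ⁻¹) := by
  have h0 : Tendsto (fun n : ℕ => (√(n : ℝ))⁻¹) atTop (𝓝 0) :=
    tendsto_inv_atTop_zero.comp (Real.tendsto_sqrt_atTop.comp tendsto_natCast_atTop_atTop)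
  have h1 := (h0.mul M.aspect).add_const γ
  have h2 : Tendsto (fun n : ℕ => (n : ℝ) / p n) atTop (𝓝 γ) := by
    rw [zero_mul, zero_add] at h1
    refine h1.congr' ?_
    filter_upwards [eventually_gt_atTop 0] with n hn
    have : 0 < √(n : ℝ) := Real.sqrt_pos.mpr (by exact_mod_cast hn)
    field_simp; ring
  refine (h2.inv₀ (by linarith)).congr fun n => ?_
  rw [inv_div]

lemma tendsto_const_div (k : ℕ) : Tendsto (fun n : ℕ => (k : ℝ) / n) atTop (𝓝 0) :=
  tendsto_const_nhds.div_atTop tendsto_natCast_atTop_atTop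

lemma tendsto_dim (M : BlockModel k γ p Ω P μ) (hγ : 1 ≤ γ) :
    Tendsto (fun n : ℕ => ((p n - k : ℕ) : ℝ) / n) atTop (𝓝 γ⁻¹) := by
  have h := (M.tendsto_p_div hγ).sub (tendsto_const_div k)
  rw [sub_zero] at h
  refine h.congr' ?_
  filter_upwards [M.pTop.eventually_ge_atTop k] with n hn
  rw [Nat.cast_sub hn, sub_div]

lemma tendsto_dof (k : ℕ) : Tendsto (fun n : ℕ => ((n - k : ℕ) : ℝ) / n) atTop (𝓝 1) := by
  have h := (tendsto_const_nhds (x := (1:ℝ))).sub (tendsto_const_div k)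
  rw [sub_zero] at h
  refine h.congr' ?_
  filter_upwards [eventually_ge_atTop k, eventually_gt_atTop 0] with n hn hn0
  have : (n : ℝ) ≠ 0 := by exact_mod_cast hn0.ne'
  rw [Nat.cast_sub hn, sub_div, div_self this]

lemma tendsto_excess (M : BlockModel k γ p Ω P μ) (hγ : 1 ≤ γ) :
    Tendsto (fun n : ℕ => ((n - p n : ℕ) : ℝ) / n) atTop (𝓝 (1 - γ⁻¹)) := by
  have h := ((tendsto_const_nhds (x := (1:ℝ))).sub (M.tendsto_p_div hγ)).max
    (tendsto_const_nhds (x := (0:ℝ)))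
  rw [max_eq_left (by linarith [inv_le_one_of_one_le₀ hγ])] at h
  refine h.congr' ?_
  filter_upwards [eventually_gt_atTop 0] with n hn0
  have hn : (0:ℝ) < n := by exact_mod_cast hn0
  rcases le_total (p n) n with h | h
  · have h' : (p n : ℝ) ≤ n := by exact_mod_cast h
    rw [Nat.cast_sub h, sub_div, div_self hn.ne', max_eq_left]
    rw [sub_nonneg, div_le_one hn]; exact h'
  · have h' : (n : ℝ) ≤ p n := by exact_mod_cast h
    rw [Nat.sub_eq_zero_of_le h, max_eq_right]
    · simp
    · rw [sub_nonpos, one_le_div hn]; exact h'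

lemma eventually_dim_le (M : BlockModel k γ p Ω P μ) (hγ : 1 ≤ γ) :
    ∀ᶠ n : ℕ in atTop, ((p n - k : ℕ) : ℝ) ≤ 2 * n := by
  have : γ⁻¹ < 2 := by linarith [inv_le_one_of_one_le₀ hγ]
  filter_upwards [(M.tendsto_dim hγ).eventually (gt_mem_nhds this), eventually_gt_atTop 0]
    with n h hn0
  have hn : (0:ℝ) < n := by exact_mod_cast hn0
  rw [div_lt_iff₀ hn] at h
  exact h.le

lemma lam_eq (M : BlockModel k γ p Ω P μ) {n : ℕ} (hn : 0 < n) (ω : Ω) (α : Fin (p n - k)) :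
    M.lam n ω α = ithEigDesc ((M.W n ω)ᵀ * M.W n ω) α / n := by
  have hn : (n : ℝ) ≠ 0 := by exact_mod_cast hn.ne'
  rw [← M.lamEig, mul_div_cancel_left₀ _ hn]

lemma lam_nonneg (M : BlockModel k γ p Ω P μ) {n : ℕ} (hn : 0 < n) (ω : Ω) (α : Fin (p n - k)) :
    0 ≤ M.lam n ω α := by
  rw [M.lam_eq hn]
  exact div_nonneg (ithEigDesc_gram_nonneg _ _) (Nat.cast_nonneg _)

/-- Almost surely the noise eigenvalues stay below any level above the Marchenko–Pastur edge. -/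
lemma edge_ae (M : BlockModel k γ p Ω P μ) (hγ : 1 ≤ γ) {B : ℝ} (hB : bGamma γ < B) :
    ∀ᵐ ω ∂P, ∀ᶠ n in atTop, ∀ α, M.lam n ω α ∈ Set.Icc 0 B := by
  classical
  set S : ∀ n : ℕ, Set (Fin (n - k) → Fin (p n - k) → ℝ) := fun n =>
    {W | ∃ y : Fin (p n - k) → ℝ, B * n * ∑ j, y j ^ 2 < ∑ i, (∑ j, W i j * y j) ^ 2} with hS
  have h := tendsto_zero_of_exp_tail (P := P)
    (X := fun n ω => if (M.W n ω) ∈ S n then (1:ℝ) else 0) (by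
      intro ε hε
      obtain ⟨c, hc, A, hA⟩ := edge_bound hγ hB (fun n => n - k) (fun n => p n - k)
        (fun n => Nat.sub_le n k) (M.tendsto_dim hγ)
      refine ⟨c, hc, A, ?_⟩
      filter_upwards [hA] with n hn
      refine le_trans (measure_mono ?_) (((M.Wgauss n).measure_le (S n)).trans hn)
      intro ω hω
      by_contra hcon
      have hcon' : M.W n ω ∉ S n := hcon
      simp only [Set.mem_ofPred_eq, if_neg hcon', abs_zero] at hω
      linarith)
  filter_upwards [h] with ω hω
  filter_upwards [hω.eventually (gt_mem_nhds one_pos), eventually_gt_atTop 0] with n hn hn0 α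
  refine ⟨M.lam_nonneg hn0 ω α, ?_⟩
  have hnot : M.W n ω ∉ S n := by
    intro hmem
    rw [if_pos hmem] at hn; exact lt_irrefl _ hn
  have hn' : (0:ℝ) < n := by exact_mod_cast hn0
  rw [M.lam_eq hn0, div_le_iff₀ hn']
  exact ithEigDesc_gram_le _ hnot α

lemma stieltjes_ae (M : BlockModel k γ p Ω P μ) (hγ : 1 ≤ γ) :
    ∀ᵐ ω ∂P, ∀ t : ℚ, 0 < t →
      Tendsto (fun n : ℕ => (∑ α, (M.lam n ω α + (t : ℝ))⁻¹) / (n : ℝ)) atTop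
        (𝓝 (γ⁻¹ * ∫ x, (x + (t : ℝ))⁻¹ ∂(mpMeasure γ))) := by
  have hγ0 : 0 < γ := by linarith
  rw [ae_all_iff]
  intro t
  by_cases ht : 0 < t
  swap
  · exact Eventually.of_forall fun ω h => absurd h ht
  have ht' : (0:ℝ) < t := by exact_mod_cast ht
  have h := tendsto_zero_of_exp_tail (P := P)
    (X := fun n ω => mpErr n t (fun i j => M.W n ω i j)) (by
      intro ε hε
      obtain ⟨c, hc, n₀, h⟩ := mp_tail (t := t) (ε := ε) (C := 2) ht' hε two_pos
      refine ⟨c, hc, 2, ?_⟩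
      filter_upwards [M.eventually_dim_le hγ, eventually_ge_atTop n₀, eventually_gt_atTop k]
        with n h1 h2 h3
      exact ((M.Wgauss n).measure_le {V | ε ≤ |mpErr n t V|}).trans
        (h n (n - k) (p n - k) h2 (by omega) (Nat.sub_le _ _) h1))
  filter_upwards [h] with ω hω _
  set s : ℕ → ℝ := fun n => (∑ α, (M.lam n ω α + (t : ℝ))⁻¹) / (n : ℝ) with hs
  have hs0 : ∀ n, 0 ≤ s n := by
    intro n
    rcases Nat.eq_zero_or_pos n with rfl | hn
    · simp [hs]
    · refine div_nonneg (Finset.sum_nonneg fun α _ => ?_) (Nat.cast_nonneg _)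
      have := M.lam_nonneg hn ω α
      positivity
  have hm : ∫ x, (x + (t : ℝ))⁻¹ ∂(mpMeasure γ) = mpStieltjes γ (-t) := by
    simp only [mpStieltjes, sub_neg_eq_add]
  rw [hm]
  refine tendsto_of_mp_map ht' (mul_nonneg (by positivity) (mpStieltjes_neg_nonneg ht')) hs0 ?_
  rw [mp_root hγ ht']
  -- `s / (1 + s)` lies in `[0, 1]`, so replacing its weight `(n - k) / n` by one is harmless
  have hw : Tendsto (fun n : ℕ => (1 - ((n - k : ℕ) : ℝ) / n) * (s n / (1 + s n))) atTop (𝓝 0) := by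
    have h1 := (tendsto_dof k).const_sub 1
    rw [sub_self] at h1
    refine bdd_le_mul_tendsto_zero' 1 ?_ h1 |>.congr fun n => mul_comm _ _
    refine Eventually.of_forall fun n => ?_
    have := hs0 n
    rw [abs_of_nonneg (by positivity), div_le_one (by positivity)]
    linarith
  have h2 := ((M.tendsto_dim hγ).sub hω).add hw
  rw [sub_zero, add_zero] at h2
  refine h2.congr' ?_
  filter_upwards [eventually_gt_atTop 0] with n hn
  have htr : (regCov n (t : ℝ) (fun i j => M.W n ω i j))⁻¹.trace / n = s n := by
    rw [trace_regCov_inv n ht']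
    simp only [hs, M.lam_eq hn]
    rfl
  rw [mpErr, htr]
  ring

/-- Almost sure convergence of linear spectral statistics to the Marchenko–Pastur law. -/
lemma spectral_ae (M : BlockModel k γ p Ω P μ) (hγ : 1 ≤ γ) {B : ℝ} (hB : bGamma γ < B) :
    ∀ᵐ ω ∂P, ∀ f : ℝ → ℝ, ContinuousOn f (Set.Icc 0 B) →
      Tendsto (fun n : ℕ => (∑ α, f (M.lam n ω α)) / (n : ℝ)) atTop
        (𝓝 (γ⁻¹ * ∫ x, f x ∂(mpMeasure γ))) := by
  have := isFiniteMeasure_mpMeasure hγ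
  have hB0 : 0 ≤ B := (sq_nonneg (1 + 1 / √γ)).trans hB.le
  filter_upwards [M.edge_ae hγ hB, M.stieltjes_ae hγ] with ω h1 h2 f hf
  exact tendsto_of_stieltjes hB0 (fun n => p n - k) (fun n => M.lam n ω) (M.eventually_dim_le hγ) h1
    (mpMeasure γ) (mpMeasure_compl hB.le) h2 hf

end BlockModel

/-! ### Quadratic forms with weights independent of the Gaussian vectors -/

/-- A strong law for weighted sums of iid centred sub-exponential variables, with bounded weights
that are functions of an independent random element. -/
lemma weighted_ae {Ω Y : Type*} {Z : ℕ → Type*} [MeasurableSpace Ω] {P : Measure Ω}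
    [IsProbabilityMeasure P] [MeasurableSpace Y] [∀ n, MeasurableSpace (Z n)]
    {ρ : Measure Y} [IsProbabilityMeasure ρ] {φ : Y → ℝ} (hφ : SubExp ρ φ)
    {q : ℕ → ℕ} {C K : ℝ} (hC : 0 < C) (hK : 0 < K) (hq : ∀ᶠ n in atTop, (q n : ℝ) ≤ C * n)
    {X : ∀ n, Ω → Fin (q n) → Y} {W : ∀ n, Ω → Z n}
    (hX : ∀ n, AEMeasurable (X n) P) (hlaw : ∀ n, P.map (X n) = Measure.pi fun _ => ρ)
    (hW : ∀ n, AEMeasurable (W n) P) (hind : ∀ n, IndepFun (X n) (W n) P)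
    {L : ∀ n, Z n → Fin (q n) → ℝ} (hLm : ∀ n α, Measurable fun w => L n w α)
    (hL : ∀ n w α, |L n w α| ≤ K) :
    ∀ᵐ ω ∂P, Tendsto (fun n : ℕ => (∑ α, L n (W n ω) α * φ (X n ω α)) / (n : ℝ)) atTop (𝓝 0) := by
  refine tendsto_zero_of_exp_tail fun ε hε => ?_
  obtain ⟨c, hc, htail⟩ := hφ.tail hK hC hε
  refine ⟨c, hc, 2, ?_⟩
  filter_upwards [hq, eventually_gt_atTop 0] with n hqn hn0
  have hn : (1:ℝ) ≤ n := by exact_mod_cast hn0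
  have := Measure.isProbabilityMeasure_map (hW n)
  have hjoint := (hind n).map_prod_eq_prod_map_map (hX n) (hW n)
  set S : Set ((Fin (q n) → Y) × Z n) := {x | ε * n ≤ |∑ α, L n x.2 α * φ (x.1 α)|} with hS
  have hSm : MeasurableSet S := by
    refine measurableSet_le measurable_const (Measurable.abs ?_)
    refine Finset.measurable_fun_sum _ fun α _ => ?_
    exact ((hLm n α).comp measurable_snd).mul
      (hφ.meas.comp ((measurable_pi_apply α).comp measurable_fst))
  calc P {ω | ε ≤ |(∑ α, L n (W n ω) α * φ (X n ω α)) / (n : ℝ)|}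
      = P ((fun ω => (X n ω, W n ω)) ⁻¹' S) := by
        congr 1
        ext ω
        simp only [Set.mem_ofPred_eq, Set.mem_preimage, hS]
        rw [abs_div, abs_of_pos (by linarith : (0:ℝ) < n), le_div_iff₀ (by linarith)]
    _ ≤ P.map (fun ω => (X n ω, W n ω)) S :=
        Measure.le_map_apply ((hX n).prodMk (hW n)) S
    _ ≤ ENNReal.ofReal (2 * Real.exp (-(c * n))) := by
        rw [hjoint, hlaw]
        exact prod_le_of_sections _ _ hSm fun w => htail n (q n) (L n w) hqn (hL n w)
    _ ≤ _ := by
        refine ENNReal.ofReal_le_ofReal ?_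
        have := Real.exp_pos (-(c * n))
        nlinarith

lemma map_comp_of_measurePreserving {Ω Y Z : Type*} [MeasurableSpace Ω] [MeasurableSpace Y]
    [MeasurableSpace Z] {P : Measure Ω} {ν : Measure Y} {ν' : Measure Z} {f : Y → Z}
    (hf : MeasurePreserving f ν ν') {X : Ω → Y} (hX : AEMeasurable X P) (h : P.map X = ν) :
    P.map (fun ω => f (X ω)) = ν' := by
  rw [← hf.map_eq, ← h, AEMeasurable.map_map_of_aemeasurable hf.measurable.aemeasurable hX]
  rfl

lemma map_pair_eq {Ω : Type*} [MeasurableSpace Ω] {P : Measure Ω} [IsProbabilityMeasure P]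
    {q : ℕ} {u v : Ω → Fin q → ℝ} (hu : AEMeasurable u P) (hv : AEMeasurable v P)
    (hul : P.map u = gv (Fin q)) (hvl : P.map v = gv (Fin q)) (h : IndepFun u v P) :
    P.map (fun ω α => (u ω α, v ω α))
      = Measure.pi fun _ : Fin q => (gaussianReal 0 1).prod (gaussianReal 0 1) := by
  have h1 := (measurePreserving_arrowProdEquivProdArrow ℝ ℝ (Fin q)
    (fun _ => gaussianReal 0 1) (fun _ => gaussianReal 0 1)).symm
  refine map_comp_of_measurePreserving h1 (X := fun ω => (u ω, v ω)) (hu.prodMk hv) ?_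
  rw [h.map_prod_eq_prod_map_map hu hv, hul, hvl]

lemma indepFun_assoc {Ω X Y Z : Type*} [MeasurableSpace Ω] [MeasurableSpace X] [MeasurableSpace Y]
    [MeasurableSpace Z] {P : Measure Ω} [IsProbabilityMeasure P] {f : Ω → X} {g : Ω → Y}
    {h : Ω → Z} (hf : AEMeasurable f P) (hg : AEMeasurable g P) (hh : AEMeasurable h P)
    (h1 : IndepFun f (fun ω => (g ω, h ω)) P) (h2 : IndepFun g h P) :
    IndepFun (fun ω => (f ω, g ω)) h P := by
  have h3 : IndepFun f g P := h1.comp measurable_id measurable_fst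
  have := Measure.isProbabilityMeasure_map hf
  have := Measure.isProbabilityMeasure_map hg
  have := Measure.isProbabilityMeasure_map hh
  rw [indepFun_iff_map_prod_eq_prod_map_map (hf.prodMk hg) hh, h3.map_prod_eq_prod_map_map hf hg]
  have e := h1.map_prod_eq_prod_map_map hf (hg.prodMk hh)
  rw [h2.map_prod_eq_prod_map_map hg hh] at e
  have ms := (measurePreserving_prodAssoc (P.map f) (P.map g) (P.map h)).symm
  rw [← ms.map_eq, ← e,
    AEMeasurable.map_map_of_aemeasurable ms.measurable.aemeasurable (hf.prodMk (hg.prodMk hh))]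
  rfl

/-- The weighted sample covariance of the rows of Gaussian matrices, with weights determined by an
independent random element. -/
lemma weighted_rows_ae {Ω ι : Type*} {Z : ℕ → Type*} [MeasurableSpace Ω] {P : Measure Ω}
    [IsProbabilityMeasure P] [Fintype ι] [DecidableEq ι] [∀ n, MeasurableSpace (Z n)]
    {q : ℕ → ℕ} {C K : ℝ} (hC : 0 < C) (hK : 0 < K) (hq : ∀ᶠ n in atTop, (q n : ℝ) ≤ C * n)
    {R : ∀ n, Ω → ι → Fin (q n) → ℝ} {W : ∀ n, Ω → Z n}
    (hR : ∀ n, AEMeasurable (R n) P) (hlaw : ∀ n, P.map (R n) = gm ι (Fin (q n)))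
    (hW : ∀ n, AEMeasurable (W n) P) (hind : ∀ n, IndepFun (R n) (W n) P)
    {L : ∀ n, Z n → Fin (q n) → ℝ} (hLm : ∀ n α, Measurable fun w => L n w α)
    (hL : ∀ n w α, |L n w α| ≤ K) :
    ∀ᵐ ω ∂P, ∀ a b, Tendsto (fun n : ℕ => (∑ α, L n (W n ω) α *
      (R n ω a α * R n ω b α - if a = b then 1 else 0)) / (n : ℝ)) atTop (𝓝 0) := by
  have hrow : ∀ n a, AEMeasurable (fun ω => R n ω a) P := fun n a =>
    (measurable_pi_apply a).comp_aemeasurable (hR n)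
  have hrowl : ∀ n a, P.map (fun ω => R n ω a) = gv (Fin (q n)) := by
    intro n a
    have h1 := measurePreserving_eval (fun _ : ι => gv (Fin (q n))) a
    have h2 : Measure.pi (fun _ : ι => gv (Fin (q n))) = P.map (R n) := (hlaw n).symm
    rw [← h1.map_eq, h2,
      AEMeasurable.map_map_of_aemeasurable h1.measurable.aemeasurable (hR n)]
    rfl
  rw [ae_all_iff]
  intro a
  rw [ae_all_iff]
  intro b
  rcases eq_or_ne a b with rfl | hab
  · have := weighted_ae (P := P) subExp_sq hC hK hq (fun n => hrow n a) (fun n => hrowl n a) hW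
      (fun n => (hind n).comp (measurable_pi_apply a) measurable_id) hLm hL
    filter_upwards [this] with ω hω
    simpa [sq] using hω
  · have hii : ∀ n, IndepFun (fun ω => R n ω a) (fun ω => R n ω b) P := by
      intro n
      have h1 : iIndepFun (fun (i : ι) (x : ι → Fin (q n) → ℝ) => x i) (gm ι (Fin (q n))) :=
        iIndepFun_pi (X := fun _ x => x) fun _ => aemeasurable_id
      have h2 := (h1.indepFun hab).map_prod_eq_prod_map_map (measurable_pi_apply a).aemeasurable
        (measurable_pi_apply b).aemeasurable
      rw [← hlaw, AEMeasurable.map_map_of_aemeasurable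
          (by fun_prop) (hR n),
        AEMeasurable.map_map_of_aemeasurable (measurable_pi_apply a).aemeasurable (hR n),
        AEMeasurable.map_map_of_aemeasurable (measurable_pi_apply b).aemeasurable (hR n)] at h2
      exact (indepFun_iff_map_prod_eq_prod_map_map (hrow n a) (hrow n b)).mpr h2
    have hpm : ∀ n, Measurable fun (x : ι → Fin (q n) → ℝ) α => (x a α, x b α) := by
      intro n; fun_prop
    have := weighted_ae (P := P) subExp_mul hC hK hq
      (X := fun n ω α => (R n ω a α, R n ω b α))
      (fun n => (hpm n).comp_aemeasurable (hR n))
      (fun n => map_pair_eq (hrow n a) (hrow n b) (hrowl n a) (hrowl n b) (hii n)) hW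
      (fun n => (hind n).comp (hpm n) measurable_id) hLm hL
    filter_upwards [this] with ω hω
    simpa [hab] using hω

namespace BlockModel

variable {k : ℕ} {γ : ℝ} {p : ℕ → ℕ} {Ω : Type*} [MeasurableSpace Ω] {P : Measure Ω}
  {μ : Fin k → ℝ}

/-- The weights `f (λ_α)`, truncated outside `[0, B]`, as functions of the noise matrix. -/
def weight (B : ℝ) (f : ℝ → ℝ) (k : ℕ) (p : ℕ → ℕ) (n : ℕ)
    (w : Matrix (Fin (n - k)) (Fin (p n - k)) ℝ) (α : Fin (p n - k)) : ℝ :=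
  (Set.Icc 0 B).indicator f (ithEigDesc (wᵀ * w) α / n)

lemma measurable_weight {B : ℝ} {f : ℝ → ℝ} (hf : Measurable f) (n : ℕ) (α : Fin (p n - k)) :
    Measurable fun w => weight B f k p n w α :=
  (hf.indicator measurableSet_Icc).comp
    ((measurable_ithEigDesc (ι := Fin (n - k)) α).div_const (n : ℝ))

lemma exists_weight_bound {B : ℝ} {f : ℝ → ℝ} (hf : ContinuousOn f (Set.Icc 0 B)) :
    ∃ K > 0, ∀ n w α, |weight B f k p n w α| ≤ K := by
  obtain ⟨K, hK⟩ := isCompact_Icc.exists_bound_of_continuousOn hf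
  refine ⟨|K| + 1, by positivity, fun n w α => ?_⟩
  unfold weight
  by_cases h : ithEigDesc (wᵀ * w) α / n ∈ Set.Icc 0 B
  · rw [Set.indicator_of_mem h]
    exact (hK _ h).trans ((le_abs_self K).trans (by linarith))
  · rw [Set.indicator_of_notMem h, abs_zero]; positivity

lemma weight_eq (M : BlockModel k γ p Ω P μ) {B : ℝ} (f : ℝ → ℝ) {n : ℕ} (hn : 0 < n) {ω : Ω}
    (h : ∀ α, M.lam n ω α ∈ Set.Icc 0 B) (α : Fin (p n - k)) :
    weight B f k p n (M.W n ω) α = f (M.lam n ω α) := by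
  unfold weight
  rw [← M.lam_eq hn, Set.indicator_of_mem (h α)]

lemma E12_forms_ae [IsProbabilityMeasure P] (M : BlockModel k γ p Ω P μ) (hγ : 1 ≤ γ) {B : ℝ}
    (hB : bGamma γ < B) {f : ℝ → ℝ} (hf : Measurable f) (hfc : ContinuousOn f (Set.Icc 0 B)) :
    ∀ᵐ ω ∂P, ∀ a b, Tendsto (fun n : ℕ => (∑ α, f (M.lam n ω α) *
      (M.E12 n ω a α * M.E12 n ω b α - if a = b then 1 else 0)) / (n : ℝ)) atTop (𝓝 0) := by
  obtain ⟨K, hK, hKb⟩ := exists_weight_bound (k := k) (p := p) hfc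
  have h := weighted_rows_ae (P := P) two_pos hK (M.eventually_dim_le hγ) (R := M.E12) (W := M.W)
    (fun n => (M.E12gauss n).aemeasurable_matrix) (fun n => (M.E12gauss n).map_matrix)
    (fun n => (M.Wgauss n).aemeasurable_matrix)
    (fun n => (M.indep3 n).comp measurable_id (measurable_snd.comp measurable_snd))
    (L := weight B f k p) (fun n α => measurable_weight hf n α) hKb
  filter_upwards [h, M.edge_ae hγ hB] with ω h1 h2 a b
  refine (h1 a b).congr' ?_
  filter_upwards [h2, eventually_gt_atTop 0] with n h3 hn
  simp only [M.weight_eq f hn h3]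

lemma E21_forms_ae [IsProbabilityMeasure P] (M : BlockModel k γ p Ω P μ) (hγ : 1 ≤ γ) {B : ℝ}
    (hB : bGamma γ < B) {f : ℝ → ℝ} (hf : Measurable f) (hfc : ContinuousOn f (Set.Icc 0 B)) :
    ∀ᵐ ω ∂P, ∀ a b, Tendsto (fun n : ℕ => (∑ α, f (M.lam n ω α) *
      (M.E21 n ω α a * M.E21 n ω α b - if a = b then 1 else 0)) / (n : ℝ)) atTop (𝓝 0) := by
  obtain ⟨K, hK, hKb⟩ := exists_weight_bound (k := k) (p := p) hfc
  have h := weighted_rows_ae (P := P) two_pos hK (M.eventually_dim_le hγ)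
    (R := fun n ω a α => M.E21 n ω α a) (W := M.W)
    (fun n => (gm_transpose _ _).measurable.comp_aemeasurable (M.E21gauss n).aemeasurable_matrix)
    (fun n => map_comp_of_measurePreserving (gm_transpose (Fin (p n - k)) (Fin k))
      (M.E21gauss n).aemeasurable_matrix (M.E21gauss n).map_matrix)
    (fun n => (M.Wgauss n).aemeasurable_matrix)
    (fun n => (M.indep4 n).comp (gm_transpose _ _).measurable measurable_snd)
    (L := weight B f k p) (fun n α => measurable_weight hf n α) hKb
  filter_upwards [h, M.edge_ae hγ hB] with ω h1 h2 a b
  refine (h1 a b).congr' ?_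
  filter_upwards [h2, eventually_gt_atTop 0] with n h3 hn
  simp only [M.weight_eq f hn h3]

lemma mixed_forms_ae [IsProbabilityMeasure P] (M : BlockModel k γ p Ω P μ) (hγ : 1 ≤ γ) {B : ℝ}
    (hB : bGamma γ < B) {f : ℝ → ℝ} (hf : Measurable f) (hfc : ContinuousOn f (Set.Icc 0 B)) :
    ∀ᵐ ω ∂P, ∀ a b, Tendsto (fun n : ℕ => (∑ α, f (M.lam n ω α) *
      (M.E12 n ω a α * M.E21 n ω α b)) / (n : ℝ)) atTop (𝓝 0) := by
  obtain ⟨K, hK, hKb⟩ := exists_weight_bound (k := k) (p := p) hfc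
  rw [ae_all_iff]
  intro a
  rw [ae_all_iff]
  intro b
  have mr : ∀ n, Measurable fun (x : Matrix (Fin k) (Fin (p n - k)) ℝ) => x a := fun n =>
    measurable_pi_apply a
  have mc : ∀ n, Measurable fun (x : Matrix (Fin (p n - k)) (Fin k) ℝ) α => x α b := fun n =>
    (measurable_pi_apply b).comp (gm_transpose (Fin (p n - k)) (Fin k)).measurable
  have au : ∀ n, AEMeasurable (fun ω => M.E12 n ω a) P := fun n =>
    (mr n).comp_aemeasurable (M.E12gauss n).aemeasurable_matrix
  have av : ∀ n, AEMeasurable (fun ω α => M.E21 n ω α b) P := fun n =>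
    (mc n).comp_aemeasurable (M.E21gauss n).aemeasurable_matrix
  have aW : ∀ n, AEMeasurable (M.W n) P := fun n => (M.Wgauss n).aemeasurable_matrix
  have lu : ∀ n, P.map (fun ω => M.E12 n ω a) = gv (Fin (p n - k)) := by
    intro n
    have h1 := measurePreserving_eval (fun _ : Fin k => gv (Fin (p n - k))) a
    exact map_comp_of_measurePreserving h1 (M.E12gauss n).aemeasurable_matrix
      (M.E12gauss n).map_matrix
  have lv : ∀ n, P.map (fun ω α => M.E21 n ω α b) = gv (Fin (p n - k)) := by
    intro n
    have h1 := (measurePreserving_eval (fun _ : Fin k => gv (Fin (p n - k))) b).comp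
      (gm_transpose (Fin (p n - k)) (Fin k))
    exact map_comp_of_measurePreserving h1 (M.E21gauss n).aemeasurable_matrix
      (M.E21gauss n).map_matrix
  have i1 : ∀ n, IndepFun (fun ω => M.E12 n ω a)
      (fun ω => ((fun α => M.E21 n ω α b), M.W n ω)) P := fun n =>
    (M.indep3 n).comp (mr n) (((mc n).comp measurable_fst).prodMk
      (measurable_snd.comp measurable_snd))
  have i2 : ∀ n, IndepFun (fun ω α => M.E21 n ω α b) (M.W n) P := fun n =>
    (M.indep4 n).comp (mc n) measurable_snd
  have i3 : ∀ n, IndepFun (fun ω => M.E12 n ω a) (fun ω α => M.E21 n ω α b) P := fun n =>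
    (i1 n).comp measurable_id measurable_fst
  have mp : ∀ n, Measurable fun (x : (Fin (p n - k) → ℝ) × (Fin (p n - k) → ℝ)) α =>
      (x.1 α, x.2 α) := by
    intro n; fun_prop
  have h := weighted_ae (P := P) subExp_mul two_pos hK (M.eventually_dim_le hγ)
    (X := fun n ω α => (M.E12 n ω a α, M.E21 n ω α b)) (W := M.W)
    (fun n => (mp n).comp_aemeasurable ((au n).prodMk (av n)))
    (fun n => map_pair_eq (au n) (av n) (lu n) (lv n) (i3 n)) aW
    (fun n => (indepFun_assoc (au n) (av n) (aW n) (i1 n) (i2 n)).comp (mp n) measurable_id)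
    (L := weight B f k p) (fun n α => measurable_weight hf n α) hKb
  filter_upwards [h, M.edge_ae hγ hB] with ω h1 h2
  refine h1.congr' ?_
  filter_upwards [h2, eventually_gt_atTop 0] with n h3 hn
  simp only [M.weight_eq f hn h3]

lemma E31_forms_ae [IsProbabilityMeasure P] (M : BlockModel k γ p Ω P μ) :
    ∀ᵐ ω ∂P, ∀ a b, Tendsto (fun n : ℕ => (∑ α,
      (M.E31 n ω α a * M.E31 n ω α b - if a = b then 1 else 0)) / (n : ℝ)) atTop (𝓝 0) := by
  have h := weighted_rows_ae (P := P) (Z := fun _ => Unit) one_pos one_pos (q := fun n => n - p n)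
    (Eventually.of_forall fun n => by
      rw [one_mul]; exact_mod_cast Nat.sub_le n (p n))
    (R := fun n ω a α => M.E31 n ω α a) (W := fun _ _ => ())
    (fun n => (gm_transpose _ _).measurable.comp_aemeasurable (M.E31gauss n).aemeasurable_matrix)
    (fun n => map_comp_of_measurePreserving (gm_transpose (Fin (n - p n)) (Fin k))
      (M.E31gauss n).aemeasurable_matrix (M.E31gauss n).map_matrix)
    (fun n => aemeasurable_const) (fun n => indepFun_const_right _ _)
    (L := fun _ _ _ => 1) (fun n α => measurable_const) (fun _ _ _ => by simp)
  simpa using h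

/-- The corner block is negligible at scale `√n`. -/
lemma E11_ae [IsProbabilityMeasure P] (M : BlockModel k γ p Ω P μ) :
    ∀ᵐ ω ∂P, ∀ a b, Tendsto (fun n : ℕ => M.E11 n ω a b / √(n : ℝ)) atTop (𝓝 0) := by
  have h : ∀ b : Fin k, _ := fun b =>
    weighted_rows_ae (P := P) (Z := fun _ => Unit) one_pos one_pos (q := fun _ => k)
    (by
      filter_upwards [eventually_ge_atTop k] with n hn
      rw [one_mul]; exact_mod_cast hn)
    (R := M.E11) (W := fun _ _ => ())
    (fun n => (M.E11gauss n).aemeasurable_matrix) (fun n => (M.E11gauss n).map_matrix)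
    (fun n => aemeasurable_const) (fun n => indepFun_const_right _ _)
    (L := fun _ _ α => if α = b then 1 else 0) (fun n α => measurable_const)
    (fun _ _ α => by split_ifs <;> simp)
  rw [← ae_all_iff] at h
  filter_upwards [h] with ω hω a b
  have h1 := hω b a a
  simp only [ite_mul, one_mul, zero_mul, Finset.sum_ite_eq', Finset.mem_univ, if_true] at h1
  have h2 : Tendsto (fun n : ℕ => (M.E11 n ω a b / √(n : ℝ)) ^ 2) atTop (𝓝 0) := by
    have h3 := h1.add (tendsto_const_div 1)
    rw [add_zero] at h3
    refine h3.congr fun n => ?_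
    rw [div_pow, Real.sq_sqrt (Nat.cast_nonneg n), ← add_div]
    push_cast
    ring_nf
  have h4 := (Real.continuous_sqrt.tendsto 0).comp h2
  rw [Real.sqrt_zero] at h4
  rw [tendsto_zero_iff_abs_tendsto_zero]
  refine h4.congr fun n => ?_
  simp [Real.sqrt_sq_eq_abs]

end BlockModel

/-! ### Algebra of the Schur complement -/

/-- Woodbury's identity turns the Schur complement of `Λ + FᵀF` into an expression that involves
only the resolvent `R = Λ⁻¹` through three `k × k` quadratic forms. -/
lemma schur_identity {ι κ : Type*} [Fintype ι] [DecidableEq ι] [Fintype κ] [DecidableEq κ]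
    (A C : Matrix ι ι ℝ) (F : Matrix ι κ ℝ) (G : Matrix κ ι ℝ) (Λ R L : Matrix κ κ ℝ)
    (hR : Λ * R = 1) (hRt : Rᵀ = R) (hLt : Lᵀ = L) (hu : IsUnit (1 + F * R * Fᵀ).det) :
    Aᵀ * A + C - (Aᵀ * F + Gᵀ * L) * (Λ + Fᵀ * F)⁻¹ * (Fᵀ * A + L * G)
      = (A - F * R * L * G)ᵀ * (1 + F * R * Fᵀ)⁻¹ * (A - F * R * L * G)
        + (C - Gᵀ * (L * R * L) * G) := by
  set Q := F * R * Fᵀ with hQ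
  set K := (1 + Q)⁻¹ with hK
  have hK1 : Q * K = 1 - K := by
    have h := mul_nonsing_inv _ hu
    rw [add_mul, one_mul] at h
    exact eq_sub_of_add_eq' h
  have hK2 : K * Q = 1 - K := by
    have h := nonsing_inv_mul _ hu
    rw [mul_add, mul_one] at h
    exact eq_sub_of_add_eq' h
  have hinv : (Λ + Fᵀ * F)⁻¹ = R - R * Fᵀ * K * (F * R) := by
    refine inv_eq_right_inv ?_
    have e1 : Fᵀ * F * (R * Fᵀ * K * (F * R)) = Fᵀ * (Q * K) * (F * R) := by
      rw [hQ]; simp only [Matrix.mul_assoc]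
    have e2 : Λ * (R * Fᵀ * K * (F * R)) = Fᵀ * K * (F * R) := by
      simp only [← Matrix.mul_assoc, hR, Matrix.one_mul]
    rw [add_mul, mul_sub, mul_sub, e1, e2, hR, hK1]
    simp only [Matrix.mul_sub, Matrix.sub_mul, Matrix.mul_one, Matrix.mul_assoc]
    abel
  have e1 : F * (Λ + Fᵀ * F)⁻¹ = K * (F * R) := by
    have : F * (R * Fᵀ * K * (F * R)) = Q * K * (F * R) := by
      rw [hQ]; simp only [Matrix.mul_assoc]
    rw [hinv, Matrix.mul_sub, this, hK1, Matrix.sub_mul, Matrix.one_mul]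
    abel
  have e2 : (Λ + Fᵀ * F)⁻¹ * Fᵀ = R * Fᵀ * K := by
    have : R * Fᵀ * K * (F * R) * Fᵀ = R * Fᵀ * (K * Q) := by
      rw [hQ]; simp only [Matrix.mul_assoc]
    rw [hinv, Matrix.sub_mul, this, hK2, Matrix.mul_sub, Matrix.mul_one]
    abel
  have e3 : F * (Λ + Fᵀ * F)⁻¹ * Fᵀ = 1 - K := by
    rw [e1, Matrix.mul_assoc K, ← hQ, hK2]
  have t : (F * R * L * G)ᵀ = Gᵀ * L * R * Fᵀ := by
    simp only [transpose_mul, hRt, hLt, Matrix.mul_assoc]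
  have p1 : (Aᵀ * F + Gᵀ * L) * (Λ + Fᵀ * F)⁻¹ * (Fᵀ * A + L * G)
      = Aᵀ * (1 - K) * A + Aᵀ * K * (F * R * L * G) + (Gᵀ * L * R * Fᵀ) * K * A
        + Gᵀ * L * (R - R * Fᵀ * K * (F * R)) * L * G := by
    rw [← hinv, ← e3]
    have a1 : Aᵀ * F * (Λ + Fᵀ * F)⁻¹ * (L * G) = Aᵀ * K * (F * R * L * G) := by
      rw [Matrix.mul_assoc Aᵀ, e1]; simp only [Matrix.mul_assoc]
    have a2 : Gᵀ * L * (Λ + Fᵀ * F)⁻¹ * (Fᵀ * A) = (Gᵀ * L * R * Fᵀ) * K * A := by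
      rw [← Matrix.mul_assoc _ Fᵀ, Matrix.mul_assoc (Gᵀ * L), e2]; simp only [Matrix.mul_assoc]
    rw [Matrix.add_mul, Matrix.add_mul, Matrix.mul_add, Matrix.mul_add, a1, a2]
    simp only [Matrix.mul_assoc]
    abel
  rw [p1, transpose_sub, t]
  simp only [Matrix.mul_sub, Matrix.sub_mul, Matrix.mul_one, Matrix.mul_assoc]
  abel

lemma tendsto_matrix_inv {ι : Type*} [Fintype ι] [DecidableEq ι] {Q : ℕ → Matrix ι ι ℝ}
    {Q' : Matrix ι ι ℝ} (h : Tendsto Q atTop (𝓝 Q')) (hd : Q'.det ≠ 0) :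
    Tendsto (fun n => (Q n)⁻¹) atTop (𝓝 Q'⁻¹) ∧ ∀ᶠ n in atTop, IsUnit (Q n).det := by
  have h1 : Tendsto (fun n => (Q n).det) atTop (𝓝 Q'.det) :=
    ((continuous_id.matrix_det).tendsto Q').comp h
  have h2 : Tendsto (fun n => (Q n).adjugate) atTop (𝓝 Q'.adjugate) :=
    ((continuous_id.matrix_adjugate).tendsto Q').comp h
  refine ⟨?_, ?_⟩
  · simp only [inv_def, Ring.inverse_eq_inv']
    exact (h1.inv₀ hd).smul h2
  · filter_upwards [h1.eventually_ne hd] with n hn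
    exact hn.isUnit

namespace BlockModel

variable {k : ℕ} {γ : ℝ} {p : ℕ → ℕ} {Ω : Type*} [MeasurableSpace Ω] {P : Measure Ω}
  {μ : Fin k → ℝ}

/-- `A_n = D_n + n^{-1/2} E₁₁`. -/
def Amat (M : BlockModel k γ p Ω P μ) (n : ℕ) (ω : Ω) : Matrix (Fin k) (Fin k) ℝ :=
  Matrix.diagonal (M.d n ω) + (1 / √(n : ℝ)) • M.E11 n ω

/-- `(1/n) (E₂₁ᵀ E₂₁ + E₃₁ᵀ E₃₁)`. -/
def Cmat (M : BlockModel k γ p Ω P μ) (n : ℕ) (ω : Ω) : Matrix (Fin k) (Fin k) ℝ :=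
  Matrix.of fun a b => (∑ α, M.E21 n ω α a * M.E21 n ω α b) / (n : ℝ)
    + (∑ α, M.E31 n ω α a * M.E31 n ω α b) / (n : ℝ)

/-- `(1/n) E₁₂ (Λ − z)⁻¹ E₁₂ᵀ`, entrywise. -/
def Q1 (M : BlockModel k γ p Ω P μ) (n : ℕ) (ω : Ω) (z : ℝ) : Matrix (Fin k) (Fin k) ℝ :=
  Matrix.of fun a b =>
    (∑ α, 1 * (M.lam n ω α - z)⁻¹ * (M.E12 n ω a α * M.E12 n ω b α)) / (n : ℝ)

/-- `(1/n) E₁₂ (Λ − z)⁻¹ Λ^{1/2} E₂₁`, entrywise. -/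
def Q3 (M : BlockModel k γ p Ω P μ) (n : ℕ) (ω : Ω) (z : ℝ) : Matrix (Fin k) (Fin k) ℝ :=
  Matrix.of fun a b =>
    (∑ α, √(M.lam n ω α) * (M.lam n ω α - z)⁻¹ * (M.E12 n ω a α * M.E21 n ω α b)) / (n : ℝ)

/-- `(1/n) E₂₁ᵀ Λ (Λ − z)⁻¹ E₂₁`, entrywise. -/
def Q4 (M : BlockModel k γ p Ω P μ) (n : ℕ) (ω : Ω) (z : ℝ) : Matrix (Fin k) (Fin k) ℝ :=
  Matrix.of fun a b =>
    (∑ α, M.lam n ω α * (M.lam n ω α - z)⁻¹ * (M.E21 n ω α a * M.E21 n ω α b)) / (n : ℝ)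

lemma T_eq (M : BlockModel k γ p Ω P μ) {n : ℕ} (hn : 0 < n) (ω : Ω) (z : ℝ)
    (hlam : ∀ α, 0 ≤ M.lam n ω α) (hz : ∀ α, M.lam n ω α ≠ z)
    (hu : IsUnit (1 + M.Q1 n ω z).det) :
    M.T n ω z = (M.Amat n ω - M.Q3 n ω z)ᵀ * (1 + M.Q1 n ω z)⁻¹ * (M.Amat n ω - M.Q3 n ω z)
      + (M.Cmat n ω - z • 1 - M.Q4 n ω z) := by
  have hn' : (0:ℝ) < n := by exact_mod_cast hn
  have hs : (1 / √(n : ℝ)) * (1 / √(n : ℝ)) = 1 / (n : ℝ) := by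
    rw [div_mul_div_comm, Real.mul_self_sqrt hn'.le, one_mul]
  set s : ℝ := 1 / √(n : ℝ) with hsdef
  set F : Matrix (Fin k) (Fin (p n - k)) ℝ := s • M.E12 n ω with hF
  set G : Matrix (Fin (p n - k)) (Fin k) ℝ := s • M.E21 n ω with hG
  set L : Matrix (Fin (p n - k)) (Fin (p n - k)) ℝ :=
    Matrix.diagonal (fun α => √(M.lam n ω α)) with hL
  set R : Matrix (Fin (p n - k)) (Fin (p n - k)) ℝ :=
    Matrix.diagonal (fun α => (M.lam n ω α - z)⁻¹) with hR
  have e1 : M.Q1 n ω z = F * R * Fᵀ := by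
    ext a b
    rw [Q1, of_apply, Matrix.mul_apply, Finset.sum_div]
    simp only [hF, hR, mul_diagonal, transpose_apply, Matrix.smul_apply,
      smul_eq_mul]
    refine Finset.sum_congr rfl fun α _ => ?_
    rw [div_eq_mul_one_div, ← hs]; ring
  have e3 : M.Q3 n ω z = F * R * L * G := by
    ext a b
    rw [Q3, of_apply, Matrix.mul_apply, Finset.sum_div]
    simp only [hF, hR, hG, hL, mul_diagonal, Matrix.smul_apply,
      smul_eq_mul]
    refine Finset.sum_congr rfl fun α _ => ?_
    rw [div_eq_mul_one_div, ← hs]; ring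
  have e4 : M.Q4 n ω z = Gᵀ * (L * R * L) * G := by
    ext a b
    rw [Q4, of_apply, Matrix.mul_apply, Finset.sum_div]
    simp only [hR, hG, hL, diagonal_mul_diagonal, mul_diagonal, Matrix.smul_apply,
      transpose_apply, smul_eq_mul]
    refine Finset.sum_congr rfl fun α _ => ?_
    have := Real.mul_self_sqrt (hlam α)
    rw [div_eq_mul_one_div, ← hs]
    linear_combination (-(M.lam n ω α - z)⁻¹ * (M.E21 n ω α a * M.E21 n ω α b) * (s * s)) * this
  have eC : M.Cmat n ω = (1 / (n:ℝ)) • ((M.E21 n ω)ᵀ * M.E21 n ω + (M.E31 n ω)ᵀ * M.E31 n ω) := by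
    ext a b
    simp only [Cmat, of_apply, Matrix.smul_apply, Matrix.add_apply, mul_apply, transpose_apply, smul_eq_mul]
    ring
  have e11 : M.S11 n ω = (M.Amat n ω)ᵀ * M.Amat n ω + M.Cmat n ω := by
    rw [eC]
    simp only [S11, Amat, ← hsdef, ← hs, transpose_add, transpose_smul, diagonal_transpose,
      Matrix.add_mul, Matrix.mul_add, Matrix.smul_mul, Matrix.mul_smul, smul_add, smul_smul,
      diagonal_mul_diagonal, sq]
    abel
  have e12 : M.S12 n ω = (M.Amat n ω)ᵀ * F + Gᵀ * L := by
    simp only [S12, Amat, hF, hG, hL, ← hsdef, ← hs, transpose_add, transpose_smul,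
      diagonal_transpose, Matrix.add_mul, Matrix.smul_mul, Matrix.mul_smul, smul_add,
      smul_smul]
    abel
  have e21 : M.S21 n ω = Fᵀ * M.Amat n ω + L * G := by
    simp only [S21, Amat, hF, hG, hL, ← hsdef, ← hs, transpose_smul,
      Matrix.mul_add, Matrix.smul_mul, Matrix.mul_smul, smul_add,
      smul_smul]
    abel
  have e22 : M.S22 n ω - z • 1 = Matrix.diagonal (fun α => M.lam n ω α - z) + Fᵀ * F := by
    have : Matrix.diagonal (fun α => M.lam n ω α - z) = Matrix.diagonal (M.lam n ω) - z • 1 := by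
      rw [smul_one_eq_diagonal, diagonal_sub]
    rw [this]
    simp only [S22, hF, ← hs, transpose_smul, Matrix.smul_mul, Matrix.mul_smul, smul_smul]
    abel
  rw [T, e11, e12, e21, e22, e1, e3, e4]
  rw [e1] at hu
  have key := schur_identity (M.Amat n ω) (M.Cmat n ω - z • 1) F G
    (Matrix.diagonal (fun α => M.lam n ω α - z)) R L
    (by
      rw [hR, diagonal_mul_diagonal, ← diagonal_one]
      congr 1
      funext α
      exact mul_inv_cancel₀ (sub_ne_zero.mpr (hz α)))
    (diagonal_transpose _) (diagonal_transpose _) hu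
  rw [← key]
  abel

end BlockModel

/-! ### Limits of the quadratic forms at the random spectral parameter -/

/-- A resolvent bilinear form has the same limit at `z_n` as at `μ̄ = lim z_n`, since the spectrum
stays in `[0, B]` with `B < μ̄`. -/
lemma tendsto_form_perturb {q : ℕ → ℕ} {lam u v : ∀ n, Fin (q n) → ℝ} {B μb l C K : ℝ}
    {z : ℕ → ℝ} {h : ℝ → ℝ} (hB : B < μb) (hz : Tendsto z atTop (𝓝 μb))
    (hlam : ∀ᶠ n in atTop, ∀ α, lam n α ∈ Set.Icc 0 B) (hh : ∀ x ∈ Set.Icc 0 B, |h x| ≤ K)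
    (hK : 0 ≤ K)
    (hu : ∀ᶠ n : ℕ in atTop, (∑ α, u n α * u n α) / (n : ℝ) ≤ C)
    (hv : ∀ᶠ n : ℕ in atTop, (∑ α, v n α * v n α) / (n : ℝ) ≤ C)
    (hl : Tendsto (fun n : ℕ => (∑ α, h (lam n α) * (lam n α - μb)⁻¹ * (u n α * v n α)) / (n : ℝ))
      atTop (𝓝 l)) :
    Tendsto (fun n : ℕ => (∑ α, h (lam n α) * (lam n α - z n)⁻¹ * (u n α * v n α)) / (n : ℝ))
      atTop (𝓝 l) := by
  set δ := μb - B with hδ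
  have hδ0 : 0 < δ := by linarith
  have hz0 : Tendsto (fun n => |z n - μb|) atTop (𝓝 0) := by
    have := (hz.sub_const μb).abs
    simpa using this
  have hdiff : Tendsto (fun n : ℕ =>
      (∑ α, h (lam n α) * (lam n α - z n)⁻¹ * (u n α * v n α)) / (n : ℝ)
      - (∑ α, h (lam n α) * (lam n α - μb)⁻¹ * (u n α * v n α)) / (n : ℝ)) atTop (𝓝 0) := by
    have hb : Tendsto (fun n => (K * (2 / δ ^ 2) * C) * |z n - μb|) atTop (𝓝 0) := by
      simpa using hz0.const_mul (K * (2 / δ ^ 2) * C)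
    refine squeeze_zero_norm' ?_ hb
    filter_upwards [hlam, hu, hv, hz0.eventually (gt_mem_nhds (half_pos hδ0)),
      eventually_gt_atTop 0] with n h1 h2 h3 h4 hn
    have hn' : (0:ℝ) < n := by exact_mod_cast hn
    have hterm : ∀ α, |h (lam n α) * (lam n α - z n)⁻¹ * (u n α * v n α)
        - h (lam n α) * (lam n α - μb)⁻¹ * (u n α * v n α)|
        ≤ K * (2 / δ ^ 2) * |z n - μb| * ((u n α * u n α + v n α * v n α) / 2) := by
      intro α
      obtain ⟨ha, hb⟩ := h1 α
      have h5 := (abs_lt.mp h4).1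
      have p1 : 0 < z n - lam n α := by linarith
      have p2 : 0 < μb - lam n α := by linarith
      have e : h (lam n α) * (lam n α - z n)⁻¹ * (u n α * v n α)
          - h (lam n α) * (lam n α - μb)⁻¹ * (u n α * v n α)
          = h (lam n α) * (((z n - lam n α) * (μb - lam n α))⁻¹ * (z n - μb)) * (u n α * v n α) := by
        have q1 : lam n α - z n ≠ 0 := by linarith
        have q2 : lam n α - μb ≠ 0 := by linarith
        have q3 := p1.ne'
        have q4 := p2.ne'
        rw [← neg_sub (z n), ← neg_sub μb]
        rw [← neg_sub (z n)] at q1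
        rw [← neg_sub μb] at q2
        field_simp
        ring
      rw [e, abs_mul, abs_mul, abs_mul]
      have f1 : |((z n - lam n α) * (μb - lam n α))⁻¹| ≤ 2 / δ ^ 2 := by
        rw [abs_of_pos (by positivity)]
        rw [inv_le_comm₀ (by positivity) (by positivity), inv_div]
        nlinarith
      have f2 : |u n α * v n α| ≤ (u n α * u n α + v n α * v n α) / 2 := by
        rw [abs_le]
        constructor <;> nlinarith [sq_nonneg (u n α - v n α), sq_nonneg (u n α + v n α)]
      have f3 := hh _ (h1 α)
      calc _ ≤ K * (2 / δ ^ 2 * |z n - μb|) * ((u n α * u n α + v n α * v n α) / 2) := by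
            gcongr
        _ = _ := by ring
    rw [← sub_div, ← Finset.sum_sub_distrib, Real.norm_eq_abs, abs_div, abs_of_pos hn',
      div_le_iff₀ hn']
    rw [div_le_iff₀ hn'] at h2 h3
    calc _ ≤ ∑ α, K * (2 / δ ^ 2) * |z n - μb| * ((u n α * u n α + v n α * v n α) / 2) :=
          (Finset.abs_sum_le_sum_abs _ _).trans (Finset.sum_le_sum fun α _ => hterm α)
      _ = K * (2 / δ ^ 2) * |z n - μb| * ((∑ α, u n α * u n α + ∑ α, v n α * v n α) / 2) := by
          rw [← Finset.mul_sum, ← Finset.sum_div, Finset.sum_add_distrib]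
      _ ≤ K * (2 / δ ^ 2) * |z n - μb| * (C * n) := by
          gcongr
          linarith
      _ = _ := by ring
  simpa using hdiff.add hl

/-- Centred forms with convergent total weight converge to that weight on the diagonal. -/
lemma tendsto_form_of_centred {ι : Type*} [DecidableEq ι] {q : ℕ → ℕ} {w r s : ∀ n, Fin (q n) → ℝ}
    {a b : ι} {l : ℝ}
    (h0 : Tendsto (fun n : ℕ => (∑ α, w n α * (r n α * s n α - if a = b then 1 else 0)) / (n : ℝ))
      atTop (𝓝 0))
    (hw : Tendsto (fun n : ℕ => (∑ α, w n α) / (n : ℝ)) atTop (𝓝 l)) :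
    Tendsto (fun n : ℕ => (∑ α, w n α * (r n α * s n α)) / (n : ℝ)) atTop
      (𝓝 (if a = b then l else 0)) := by
  by_cases hab : a = b
  · simp only [hab, if_true] at h0 ⊢
    have := h0.add hw
    rw [zero_add] at this
    refine this.congr fun n => ?_
    rw [← add_div, ← Finset.sum_add_distrib]
    congr 1
    exact Finset.sum_congr rfl fun α _ => by ring
  · simpa [hab] using h0

namespace BlockModel

variable {k : ℕ} {γ : ℝ} {p : ℕ → ℕ} {Ω : Type*} [MeasurableSpace Ω] {P : Measure Ω}
  {μ : Fin k → ℝ}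

/-- The almost sure limit of `T_n(z_n)` when `z_n → μ̄`, stated before the Marchenko–Pastur equation
is used to simplify the constant term. -/
lemma T_tendsto_ae [IsProbabilityMeasure P] (M : BlockModel k γ p Ω P μ) (hγ : 1 ≤ γ)
    (hμ : ∀ i, 0 < μ i) {μb : ℝ} (hb : bGamma γ < μb)
    (hα : 1 + γ⁻¹ * mpStieltjes γ μb ≠ 0) (z : ℕ → Ω → ℝ)
    (hz : ∀ᵐ ω ∂P, Tendsto (fun n => z n ω) atTop (𝓝 μb)) :
    ∀ᵐ ω ∂P, Tendsto (fun n => M.T n ω (z n ω)) atTop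
      (𝓝 (Matrix.diagonal fun j => μ j / (1 + γ⁻¹ * mpStieltjes γ μb)
        + (1 - μb - γ⁻¹ * (1 + μb * mpStieltjes γ μb)))) := by
  set m := mpStieltjes γ μb with hm
  obtain ⟨B, hB1, hB2⟩ := exists_between hb
  have hne : ∀ x ∈ Set.Icc 0 B, x - μb ≠ 0 := fun x hx => by
    have := hx.2
    exact (by linarith : x - μb < 0).ne
  have cinv : ContinuousOn (fun x : ℝ => (x - μb)⁻¹) (Set.Icc 0 B) :=
    ContinuousOn.inv₀ (by fun_prop) hne
  have f1 := M.E12_forms_ae hγ hB1 (f := fun x => (1:ℝ) * (x - μb)⁻¹) (by fun_prop)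
    (continuousOn_const.mul cinv)
  have f2 := M.mixed_forms_ae hγ hB1 (f := fun x => √x * (x - μb)⁻¹) (by fun_prop)
    (Real.continuous_sqrt.continuousOn.mul cinv)
  have f3 := M.E21_forms_ae hγ hB1 (f := fun x => x * (x - μb)⁻¹) (by fun_prop)
    (continuousOn_id.mul cinv)
  have f4 := M.E12_forms_ae hγ hB1 (f := fun _ => (1:ℝ)) (by fun_prop) continuousOn_const
  have f5 := M.E21_forms_ae hγ hB1 (f := fun _ => (1:ℝ)) (by fun_prop) continuousOn_const
  filter_upwards [f1, f2, f3, f4, f5, M.E31_forms_ae, M.E11_ae, M.dconv, M.edge_ae hγ hB1,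
    M.spectral_ae hγ hB1, hz] with ω h1 h2 h3 h4 h5 h6 h7 h8 h9 h10 hzω
  have hdim := M.tendsto_dim hγ
  have s1 : Tendsto (fun n : ℕ => (∑ α, 1 * (M.lam n ω α - μb)⁻¹) / (n:ℝ)) atTop
      (𝓝 (γ⁻¹ * m)) := by
    simpa [hm, mpStieltjes] using h10 _ cinv
  have s2 : Tendsto (fun n : ℕ => (∑ α, M.lam n ω α * (M.lam n ω α - μb)⁻¹) / (n:ℝ)) atTop
      (𝓝 (γ⁻¹ * (1 + μb * m))) := by
    have h := hdim.add (s1.const_mul μb)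
    have e : γ⁻¹ + μb * (γ⁻¹ * m) = γ⁻¹ * (1 + μb * m) := by ring
    rw [e] at h
    refine h.congr' ?_
    filter_upwards [h9] with n hn
    rw [← mul_div_assoc, ← add_div, Finset.mul_sum]
    congr 1
    have : ((p n - k : ℕ) : ℝ) = ∑ α : Fin (p n - k), (1:ℝ) := by simp
    rw [this, ← Finset.sum_add_distrib]
    refine Finset.sum_congr rfl fun α _ => ?_
    have := hne _ (hn α)
    field_simp
    ring
  have s3 : Tendsto (fun n : ℕ => (∑ α : Fin (p n - k), (1:ℝ)) / (n:ℝ)) atTop (𝓝 γ⁻¹) := by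
    simpa using hdim
  have s4 : Tendsto (fun n : ℕ => (∑ α : Fin (n - p n), (1:ℝ)) / (n:ℝ)) atTop (𝓝 (1 - γ⁻¹)) := by
    simpa using M.tendsto_excess hγ
  have b12 : ∀ a b, Tendsto (fun n : ℕ => (∑ α, M.E12 n ω a α * M.E12 n ω b α) / (n:ℝ)) atTop
      (𝓝 (if a = b then γ⁻¹ else 0)) := fun a b => by
    simpa using tendsto_form_of_centred (w := fun _ _ => 1) (h4 a b) s3
  have b21 : ∀ a b, Tendsto (fun n : ℕ => (∑ α, M.E21 n ω α a * M.E21 n ω α b) / (n:ℝ)) atTop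
      (𝓝 (if a = b then γ⁻¹ else 0)) := fun a b => by
    simpa using tendsto_form_of_centred (w := fun _ _ => 1) (r := fun n α => M.E21 n ω α a)
      (s := fun n α => M.E21 n ω α b) (h5 a b) s3
  have b31 : ∀ a b, Tendsto (fun n : ℕ => (∑ α, M.E31 n ω α a * M.E31 n ω α b) / (n:ℝ)) atTop
      (𝓝 (if a = b then 1 - γ⁻¹ else 0)) := fun a b => by
    have := tendsto_form_of_centred (w := fun _ _ => 1) (r := fun n α => M.E31 n ω α a)
      (s := fun n α => M.E31 n ω α b) (a := a) (b := b) (by simpa using h6 a b) s4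
    simpa using this
  have u12 : ∀ a, ∀ᶠ n : ℕ in atTop, (∑ α, M.E12 n ω a α * M.E12 n ω a α) / (n:ℝ) ≤ γ⁻¹ + 1 :=
    fun a => (b12 a a).eventually_le_const (by simp)
  have u21 : ∀ b, ∀ᶠ n : ℕ in atTop, (∑ α, M.E21 n ω α b * M.E21 n ω α b) / (n:ℝ) ≤ γ⁻¹ + 1 :=
    fun b => (b21 b b).eventually_le_const (by simp)
  have q1 : Tendsto (fun n => M.Q1 n ω (z n ω)) atTop (𝓝 ((γ⁻¹ * m) • 1)) := by
    refine tendsto_pi_nhds.mpr fun a => tendsto_pi_nhds.mpr fun b => ?_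
    have := tendsto_form_perturb (h := fun _ => (1:ℝ)) (K := 1) hB2 hzω h9 (by simp) zero_le_one
      (u12 a) (u12 b) (tendsto_form_of_centred (h1 a b) s1)
    simpa [Q1, Matrix.one_apply] using this
  have q3 : Tendsto (fun n => M.Q3 n ω (z n ω)) atTop (𝓝 0) := by
    refine tendsto_pi_nhds.mpr fun a => tendsto_pi_nhds.mpr fun b => ?_
    exact tendsto_form_perturb (h := fun x => √x) (K := √B)
      (u := fun n α => M.E12 n ω a α) (v := fun n α => M.E21 n ω α b) hB2 hzω h9
      (fun x hx => by rw [abs_of_nonneg (Real.sqrt_nonneg x)]; exact Real.sqrt_le_sqrt hx.2)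
      (Real.sqrt_nonneg B) (u12 a) (u21 b) (h2 a b)
  have hB0 : 0 ≤ B := le_trans (sq_nonneg _) hB1.le
  have q4 : Tendsto (fun n => M.Q4 n ω (z n ω)) atTop (𝓝 ((γ⁻¹ * (1 + μb * m)) • 1)) := by
    refine tendsto_pi_nhds.mpr fun a => tendsto_pi_nhds.mpr fun b => ?_
    have := tendsto_form_perturb (h := fun x => x) (K := B)
      (u := fun n α => M.E21 n ω α a) (v := fun n α => M.E21 n ω α b) hB2 hzω h9
      (fun x hx => by rw [abs_of_nonneg hx.1]; exact hx.2) hB0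
      (u21 a) (u21 b) (tendsto_form_of_centred (h3 a b) s2)
    simpa [Q4, Matrix.one_apply] using this
  have c1 : Tendsto (fun n => M.Cmat n ω) atTop (𝓝 1) := by
    refine tendsto_pi_nhds.mpr fun a => tendsto_pi_nhds.mpr fun b => ?_
    have := (b21 a b).add (b31 a b)
    have e : ((if a = b then γ⁻¹ else 0) + if a = b then 1 - γ⁻¹ else 0)
        = (1 : Matrix (Fin k) (Fin k) ℝ) a b := by
      rw [Matrix.one_apply]; split_ifs <;> ring
    rw [e] at this
    exact this
  have a1 : Tendsto (fun n => M.Amat n ω) atTop (𝓝 (Matrix.diagonal fun i => √(μ i))) := by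
    have h11 : Tendsto (fun n : ℕ => (1 / √(n:ℝ)) • M.E11 n ω) atTop (𝓝 0) := by
      refine tendsto_pi_nhds.mpr fun a => tendsto_pi_nhds.mpr fun b => ?_
      refine (h7 a b).congr fun n => ?_
      rw [Matrix.smul_apply, smul_eq_mul]
      ring
    have hd : Tendsto (fun n : ℕ => Matrix.diagonal (M.d n ω)) atTop
        (𝓝 (Matrix.diagonal fun i => √(μ i))) :=
      ((continuous_id.matrix_diagonal).tendsto _).comp (tendsto_pi_nhds.mpr h8)
    simpa [Amat] using hd.add h11
  have k1 : Tendsto (fun n => 1 + M.Q1 n ω (z n ω)) atTop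
      (𝓝 (Matrix.diagonal fun _ => 1 + γ⁻¹ * m)) := by
    have := q1.const_add 1
    have e : (1 : Matrix (Fin k) (Fin k) ℝ) + (γ⁻¹ * m) • 1
        = Matrix.diagonal fun _ => 1 + γ⁻¹ * m := by
      rw [smul_one_eq_diagonal, ← diagonal_one, diagonal_add]
    rwa [e] at this
  obtain ⟨k2, k3⟩ := tendsto_matrix_inv k1 (by
    rw [det_diagonal]; exact Finset.prod_ne_zero_iff.mpr fun _ _ => hα)
  have x1 := a1.sub q3
  have x2 := (((continuous_id.matrix_transpose).tendsto _).comp x1)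
  have hlim := ((x2.mul k2).mul x1).add ((c1.sub (hzω.smul_const
    (1 : Matrix (Fin k) (Fin k) ℝ))).sub q4)
  have elim : (id (Matrix.diagonal (fun i => √(μ i)) - 0))ᵀ
        * (Matrix.diagonal fun _ => 1 + γ⁻¹ * m)⁻¹ * (Matrix.diagonal (fun i => √(μ i)) - 0)
      + (1 - μb • (1 : Matrix (Fin k) (Fin k) ℝ) - (γ⁻¹ * (1 + μb * m)) • 1)
      = Matrix.diagonal fun j => μ j / (1 + γ⁻¹ * m) + (1 - μb - γ⁻¹ * (1 + μb * m)) := by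
    have ei : (Matrix.diagonal fun _ : Fin k => 1 + γ⁻¹ * m)⁻¹
        = Matrix.diagonal fun _ => (1 + γ⁻¹ * m)⁻¹ := by
      refine inv_eq_right_inv ?_
      rw [diagonal_mul_diagonal, mul_inv_cancel₀ hα, diagonal_one]
    rw [ei, sub_zero, id, diagonal_transpose, diagonal_mul_diagonal, diagonal_mul_diagonal,
      smul_one_eq_diagonal, smul_one_eq_diagonal, ← diagonal_one, diagonal_sub, diagonal_sub,
      diagonal_add]
    congr 1
    funext j
    have := Real.mul_self_sqrt (hμ j).le
    rw [div_eq_mul_inv]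
    linear_combination (1 + γ⁻¹ * m)⁻¹ * this
  rw [elim] at hlim
  refine hlim.congr' ?_
  filter_upwards [k3, h9, hzω.eventually (lt_mem_nhds hB2), eventually_gt_atTop 0]
    with n g1 g2 g3 g4
  exact (M.T_eq g4 ω (z n ω) (fun α => (g2 α).1) (fun α => ((g2 α).2.trans_lt g3).ne) g1).symm

end BlockModel

/-! ### Identification of the limiting kernel -/

/-- If `T_n → diag τ` with `τ_j ≠ 0` for `j ≠ i`, unit vectors in the kernels of `T_n`, signed so
that the entry of largest modulus is positive, converge to `e_i`. -/
lemma kernel_tendsto {k : ℕ} {T : ℕ → Matrix (Fin k) (Fin k) ℝ} {τ : Fin k → ℝ} {i : Fin k}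
    (hT : Tendsto T atTop (𝓝 (Matrix.diagonal τ))) (hτ : ∀ j, j ≠ i → τ j ≠ 0)
    {x : ℕ → Fin k → ℝ} (hsol : ∀ n, T n *ᵥ x n = 0) (hnorm : ∀ n, ∑ j, x n j ^ 2 = 1)
    (hid : ∀ n, ∃ i₀, ∀ j, |x n j| ≤ x n i₀) (j : Fin k) :
    Tendsto (fun n => x n j) atTop (𝓝 ((Pi.single i 1 : Fin k → ℝ) j)) := by
  have hx1 : ∀ n j, |x n j| ≤ 1 := fun n j => by
    have : x n j ^ 2 ≤ 1 := by
      rw [← hnorm n]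
      exact Finset.single_le_sum (f := fun j => x n j ^ 2) (fun l _ => sq_nonneg _)
        (Finset.mem_univ j)
    exact (sq_le_one_iff_abs_le_one _).mp this
  have hTe : ∀ a b, Tendsto (fun n => T n a b) atTop (𝓝 (Matrix.diagonal τ a b)) := fun a b =>
    tendsto_pi_nhds.mp (tendsto_pi_nhds.mp hT a) b
  have hτx : ∀ j, Tendsto (fun n => τ j * x n j) atTop (𝓝 0) := by
    intro j
    have hb : Tendsto (fun n => ∑ l, |Matrix.diagonal τ j l - T n j l|) atTop (𝓝 0) := by
      have : Tendsto (fun n => ∑ l, |Matrix.diagonal τ j l - T n j l|) atTop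
          (𝓝 (∑ l : Fin k, |Matrix.diagonal τ j l - Matrix.diagonal τ j l|)) :=
        tendsto_finsetSum _ fun l _ => ((hTe j l).const_sub _).abs
      simpa using this
    refine squeeze_zero_norm (fun n => ?_) hb
    have e : τ j * x n j = ∑ l, (Matrix.diagonal τ j l - T n j l) * x n l := by
      have h0 := congrFun (hsol n) j
      simp only [mulVec, dotProduct, Pi.zero_apply] at h0
      have h1 := Matrix.mulVec_diagonal τ (x n) j
      simp only [mulVec, dotProduct] at h1
      simp only [sub_mul, Finset.sum_sub_distrib, h0, h1, sub_zero]
    rw [e, Real.norm_eq_abs]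
    refine (Finset.abs_sum_le_sum_abs _ _).trans (Finset.sum_le_sum fun l _ => ?_)
    rw [abs_mul]
    exact mul_le_of_le_one_right (abs_nonneg _) (hx1 n l)
  have hoff : ∀ j, j ≠ i → Tendsto (fun n => x n j) atTop (𝓝 0) := by
    intro j hj
    have := (hτx j).const_mul (τ j)⁻¹
    rw [mul_zero] at this
    refine this.congr fun n => ?_
    rw [inv_mul_cancel_left₀ (hτ j hj)]
  rcases ne_or_eq j i with hj | rfl
  · rw [Pi.single_eq_of_ne hj]
    exact hoff j hj
  rw [Pi.single_eq_same]
  have hsum : Tendsto (fun n => ∑ l ∈ Finset.univ.erase j, x n l ^ 2) atTop (𝓝 0) := by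
    have : Tendsto (fun n => ∑ l ∈ Finset.univ.erase j, x n l ^ 2) atTop
        (𝓝 (∑ l ∈ Finset.univ.erase j, (0:ℝ) ^ 2)) :=
      tendsto_finsetSum _ fun l hl => (hoff l (Finset.ne_of_mem_erase hl)).pow 2
    simpa using this
  have hsq : ∀ n, x n j ^ 2 = 1 - ∑ l ∈ Finset.univ.erase j, x n l ^ 2 := fun n => by
    rw [← hnorm n, ← Finset.add_sum_erase _ _ (Finset.mem_univ j)]; ring
  have habs : Tendsto (fun n => |x n j|) atTop (𝓝 1) := by
    have h1 : Tendsto (fun n => x n j ^ 2) atTop (𝓝 1) := by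
      simp only [hsq]
      simpa using hsum.const_sub 1
    have h2 := (Real.continuous_sqrt.tendsto 1).comp h1
    rw [Real.sqrt_one] at h2
    exact h2.congr fun n => Real.sqrt_sq_eq_abs _
  refine habs.congr' ?_
  filter_upwards [hsum.eventually (gt_mem_nhds (by norm_num : (0:ℝ) < 1 / 2))] with n hn
  obtain ⟨i₀, hi₀⟩ := hid n
  have hnn : 0 ≤ x n i₀ := (abs_nonneg _).trans (hi₀ i₀)
  -- the largest entry must be the `j`-th one, which carries more than half of the squared norm
  have : i₀ = j := by
    by_contra hne
    have h1 : x n i₀ ^ 2 ≤ ∑ l ∈ Finset.univ.erase j, x n l ^ 2 :=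
      Finset.single_le_sum (f := fun l => x n l ^ 2) (fun l _ => sq_nonneg _)
        (Finset.mem_erase.mpr ⟨hne, Finset.mem_univ _⟩)
    have h2 : x n j ^ 2 ≤ x n i₀ ^ 2 := by
      rw [← sq_abs (x n j)]
      exact pow_le_pow_left₀ (abs_nonneg _) (hi₀ j) 2
    have := hsq n
    linarith
  subst this
  exact abs_of_nonneg hnn

/-- Fix `i` with `μ_i > γ^{-1/2}` and `μ_i ≠ μ_j` for `j ≠ i`. If
`(z_{n,i}, x_{n,i})` solve the secular equation `T_n(z_{n,i}) x_{n,i} = 0` with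
`‖x_{n,i}‖₂ = 1` and the sign-identifiability condition `max_j x_j = max_j |x_j|`, and
`z_{n,i} → μ̄_i` almost surely, then `x_{n,i} → e_i` almost surely. -/
theorem secular_solution_vector_converges
    {k : ℕ} (hk : 1 ≤ k) {γ : ℝ} (hγ : 1 ≤ γ)
    {p : ℕ → ℕ} {Ω : Type*} [MeasurableSpace Ω] {P : Measure Ω} [IsProbabilityMeasure P]
    {μ : Fin k → ℝ} (M : BlockModel k γ p Ω P μ)
    (hd : ∀ n ω, StrictAnti (M.d n ω))
    (hμanti : StrictAnti μ) (hμpos : ∀ i, 0 < μ i)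
    (i : Fin k) (hi : 1 / Real.sqrt γ < μ i)
    (hdistinct : ∀ j, j ≠ i → μ j ≠ μ i)
    (μbar : ℝ) (hμbar₁ : bGamma γ < μbar)
    (hμbar₂ : mpStieltjes γ μbar = -(μ i + γ⁻¹)⁻¹)
    (z : ℕ → Ω → ℝ) (x : ℕ → Ω → Fin k → ℝ)
    (hsol : ∀ n ω, M.T n ω (z n ω) *ᵥ x n ω = 0)
    (hnorm : ∀ n ω, ∑ j, x n ω j ^ 2 = 1)
    (hid : ∀ n ω, ∃ i₀, ∀ j, |x n ω j| ≤ x n ω i₀)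
    (hz : ∀ᵐ ω ∂P, Tendsto (fun n => z n ω) atTop (𝓝 μbar)) :
    ∀ᵐ ω ∂P, ∀ j, Tendsto (fun n => x n ω j) atTop (𝓝 ((Pi.single i 1 : Fin k → ℝ) j)) := by
  have hγ0 : 0 < γ := by linarith
  have hi0 := hμpos i
  have hg : 0 < γ⁻¹ := inv_pos.mpr hγ0
  have hα : 1 + γ⁻¹ * mpStieltjes γ μbar = μ i / (μ i + γ⁻¹) := by
    rw [hμbar₂]
    field_simp
    ring
  have hmp := mp_equation hγ (Or.inr hμbar₁)
  have hT := M.T_tendsto_ae hγ hμpos hμbar₁ (by rw [hα]; positivity) z hz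
  filter_upwards [hT] with ω hω j
  refine kernel_tendsto hω (i := i) (fun l hl => ?_) (fun n => hsol n ω) (fun n => hnorm n ω)
    (fun n => hid n ω) j
  -- the Marchenko–Pastur equation turns the constant term into `1 / m(μ̄) = -(μ_i + γ⁻¹)`
  have hconst : 1 - μbar - γ⁻¹ * (1 + μbar * mpStieltjes γ μbar) = -(μ i + γ⁻¹) := by
    have hm : mpStieltjes γ μbar * (μ i + γ⁻¹) = -1 := by
      rw [hμbar₂, neg_mul, inv_mul_cancel₀ (by positivity)]
    have hm0 : mpStieltjes γ μbar ≠ 0 := by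
      intro h
      rw [h] at hm
      norm_num at hm
    refine mul_left_cancel₀ hm0 ?_
    linear_combination hm - hmp
  rw [hα, hconst]
  intro h
  refine hdistinct l hl ?_
  field_simp at h
  have hp : (0:ℝ) < μ i * γ + 1 := by positivity
  have : (μ l - μ i) * (μ i * γ + 1) = 0 := by
    linarith
  rcases mul_eq_zero.mp this with h' | h'
  · linarith
  · linarith
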